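/- arXiv:1101.0013 — 2 statements merged into one kernel-verified Lean document; each statement's English description precedes it below -/
import Mathlib

section
/- Let n ≥ 2, 0 < σ < 1, and let B_r ⊂ ℝⁿ denote the open ball of radius r centered at the origin. Let u : ℝⁿ → ℝ be continuous, nonnegative on all of ℝⁿ, and integrable, and let ℱu denote its Fourier transform. Assume that the function ξ ↦ |ξ|^{2σ} ℱu(ξ) is integrable on ℝⁿ, and that there are bounded measurable functions a, b on B₁ such that for every x ∈ B₁ one has ∫_{ℝⁿ} |ξ|^{2σ} ℱu(ξ) e^{2πı⟨x,ξ⟩} dξ = a(x)u(x) + b(x) (i.e. (−Δ)^σ u = a u + b in B₁). Then there exists a constant C > 0 depending only on n, σ and the L^∞(B₁)-norm of a such that sup_{B_{1/2}} u ≤ C ( inf_{B_{1/2}} u + ‖b‖_{L^∞(B₁)} ). -/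
open MeasureTheory Metric Set Real
open scoped FourierTransform

/-!
By Fourier inversion, `(-Δ)^σ u` is, up to a constant factor, the absolutely convergent integral of
the second differences of `u` against `‖y‖ ^ (-(n + 2σ))`: integrating this kernel against
`1 - cos (2π⟪y, ξ⟫)` gives a multiple of `‖ξ‖ ^ (2σ)`, by rotation invariance and scaling.
The Harnack inequality then passes through the weighted integral
`N = ∫ u(z) (1 + ‖z‖) ^ (-(n + 2σ)) dz`.

* Touch `u` from below by a paraboloid of opening comparable to `u(y)`. At the contact point the
  second differences are bounded above, so the equation forces the averages of `u` around it to be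
  small, and `N` is at most a multiple of `u(y) + B`.
* Maximize `(1 - ‖z‖) ^ n u(z)` to find a ball of radius `r` on which `u` is at most `2 ^ n` times
  its value at the centre, and touch `u` from above by a paraboloid there. At the scale `θ r`, for a
  small constant `θ`, the part of the kernel away from the contact point bounds `u` there by a
  multiple of `r ^ (-n) (N + B)`, and the weight `(1 - ‖z‖) ^ n` absorbs `r ^ (-n)`.
-/

open Filter Topology
open Module (finrank)
open scoped RealInnerProductSpace

section SecondDifference

variable {V F : Type*} [AddGroup V] [AddCommGroup F] [Module ℝ F]

/-- The average of `u` over the two points `x + y` and `x - y`. -/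
noncomputable def symmAverage (u : V → F) (x y : V) : F :=
  (2⁻¹ : ℝ) • (u (x + y) + u (x - y))

/-- The symmetric second difference of `u` at `x` in the direction `y`, normalized so that it
has the sign of `-Δ`. -/
noncomputable def symmSecondDiff (u : V → F) (x y : V) : F :=
  u x - symmAverage u x y

lemma symmAverage_nonneg {u : V → ℝ} (hu : ∀ z, 0 ≤ u z) (x y : V) : 0 ≤ symmAverage u x y :=
  smul_nonneg (by norm_num) (add_nonneg (hu _) (hu _))

lemma symmSecondDiff_le_symmSecondDiff {u v : V → ℝ} {x y : V}
    (hadd : u x - v x ≤ u (x + y) - v (x + y)) (hsub : u x - v x ≤ u (x - y) - v (x - y)) :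
    symmSecondDiff u x y ≤ symmSecondDiff v x y := by
  simp only [symmSecondDiff, symmAverage, smul_eq_mul]
  linarith

lemma symmSecondDiff_ofReal (u : V → ℝ) (x y : V) :
    symmSecondDiff (fun z => (u z : ℂ)) x y = ((symmSecondDiff u x y : ℝ) : ℂ) := by
  simp [symmSecondDiff, symmAverage, mul_add]

end SecondDifference

section LevyOperator

variable {E F : Type*} [NormedAddCommGroup E] [MeasurableSpace E]
  [NormedAddCommGroup F] [NormedSpace ℝ F]

/-- The nonlocal operator `u ↦ ∫ k(y) (u(x) - (u(x + y) + u(x - y)) / 2) dμ(y)`. The second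
difference tames the singularity of `k` at the origin, so that no principal value is needed. -/
noncomputable def levyOperator (μ : Measure E) (k : E → ℝ) (u : E → F) (x : E) : F :=
  ∫ y, k y • symmSecondDiff u x y ∂μ

lemma levyOperator_ofReal (μ : Measure E) (k : E → ℝ) (u : E → ℝ) (x : E) :
    levyOperator μ k (fun z => (u z : ℂ)) x = ((levyOperator μ k u x : ℝ) : ℂ) := by
  simp only [levyOperator, symmSecondDiff_ofReal, Complex.real_smul, smul_eq_mul,
    ← Complex.ofReal_mul, integral_complex_ofReal]

variable [InnerProductSpace ℝ E]

/-- The Fourier symbol of `levyOperator μ k`, in the convention of `Real.fourierChar`. -/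
noncomputable def levySymbol (μ : Measure E) (k : E → ℝ) (ξ : E) : ℝ :=
  ∫ y, k y * (1 - cos (2 * π * ⟪y, ξ⟫)) ∂μ

lemma levySymbol_nonneg (μ : Measure E) {k : E → ℝ} (hk : ∀ y, 0 ≤ k y) (ξ : E) :
    0 ≤ levySymbol μ k ξ :=
  integral_nonneg fun y => mul_nonneg (hk y) (sub_nonneg.2 (cos_le_one _))

lemma levySymbol_radial_eq_of_norm_eq [BorelSpace E] [FiniteDimensional ℝ E] (f : ℝ → ℝ)
    {ξ η : E} (h : ‖ξ‖ = ‖η‖) :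
    levySymbol volume (fun y : E => f ‖y‖) ξ = levySymbol volume (fun y : E => f ‖y‖) η := by
  set T := (ℝ ∙ (ξ - η))ᗮ.reflection
  have hT : T ξ = η := Submodule.reflection_sub h
  rw [eq_comm, levySymbol, levySymbol,
    ← T.measurePreserving.integral_comp T.toHomeomorph.measurableEmbedding, ← hT]
  simp only [T.norm_map, T.inner_map_map]

end LevyOperator

section FourierInversion

variable {E F : Type*} [NormedAddCommGroup E] [InnerProductSpace ℝ E]
  [NormedAddCommGroup F] [NormedSpace ℂ F]

lemma symmSecondDiff_fourierChar_smul (ξ x y : E) (w : F) :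
    symmSecondDiff (fun z => 𝐞 ⟪ξ, z⟫ • w) x y
      = (1 - cos (2 * π * ⟪y, ξ⟫)) • 𝐞 ⟪ξ, x⟫ • w := by
  have hcos : ((cos (2 * π * ⟪y, ξ⟫) : ℝ) : ℂ) = ((𝐞 ⟪ξ, y⟫ : ℂ) + (𝐞 (-⟪ξ, y⟫) : ℂ)) / 2 := by
    rw [real_inner_comm, Complex.ofReal_cos, Complex.cos, fourierChar_apply, fourierChar_apply]
    push_cast
    ring_nf
  simp only [symmSecondDiff, symmAverage, inner_add_right, inner_sub_right, sub_eq_add_neg ⟪ξ, x⟫,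
    AddChar.map_add_eq_mul, Circle.smul_def, Circle.coe_mul, ← Complex.coe_smul (E := F),
    Complex.ofReal_sub, hcos]
  push_cast
  module

variable [FiniteDimensional ℝ E] [MeasurableSpace E] [BorelSpace E]

lemma symmSecondDiff_fourierInv {v : E → F} (hv : Integrable v) (x y : E) :
    symmSecondDiff (𝓕⁻ v) x y = ∫ ξ, (1 - cos (2 * π * ⟪y, ξ⟫)) • 𝐞 ⟪ξ, x⟫ • v ξ := by
  have hint (z : E) : Integrable fun ξ => 𝐞 ⟪ξ, z⟫ • v ξ := by
    simpa using (fourierIntegral_convergent_iff (-z)).2 hv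
  simp only [← symmSecondDiff_fourierChar_smul]
  simp only [symmSecondDiff, symmAverage, fourierInv_eq]
  rw [integral_sub (hint x) (((hint (x + y)).fun_add (hint (x - y))).fun_smul _), integral_smul,
    integral_add (hint (x + y)) (hint (x - y))]

variable {μ : Measure E} [SFinite μ] {k : E → ℝ}

lemma integrable_prod_levySymbol_smul (hk : AEStronglyMeasurable k μ) (hk0 : ∀ y, 0 ≤ k y)
    (hki : ∀ ξ, Integrable (fun y => k y * (1 - cos (2 * π * ⟪y, ξ⟫))) μ) {v : E → F}
    (hv : AEStronglyMeasurable v) (hsv : Integrable fun ξ => levySymbol μ k ξ • v ξ) (x : E) :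
    Integrable (fun p : E × E =>
      (k p.1 * (1 - cos (2 * π * ⟪p.1, p.2⟫))) • 𝐞 ⟪p.2, x⟫ • v p.2) (μ.prod volume) := by
  have hcos : Continuous fun p : E × E => 1 - cos (2 * π * ⟪p.1, p.2⟫) := by fun_prop
  have hchar : Continuous fun p : E × E => 𝐞 ⟪p.2, x⟫ := continuous_fourierChar.comp (by fun_prop)
  have hmeas : AEStronglyMeasurable (fun p : E × E =>
      (k p.1 * (1 - cos (2 * π * ⟪p.1, p.2⟫))) • 𝐞 ⟪p.2, x⟫ • v p.2) (μ.prod volume) :=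
    (hk.comp_fst.mul hcos.aestronglyMeasurable).smul
      (hchar.aestronglyMeasurable.smul hv.comp_snd)
  refine (integrable_prod_iff' hmeas).2
    ⟨Eventually.of_forall fun ξ => (hki ξ).smul_const (𝐞 ⟪ξ, x⟫ • v ξ), ?_⟩
  refine hsv.norm.congr (Eventually.of_forall fun ξ => ?_)
  have hnonneg (y : E) : 0 ≤ k y * (1 - cos (2 * π * ⟪y, ξ⟫)) :=
    mul_nonneg (hk0 y) (sub_nonneg.2 (cos_le_one _))
  simp only [norm_smul, Circle.norm_smul, norm_of_nonneg (levySymbol_nonneg μ hk0 ξ)]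
  simp only [norm_of_nonneg (hnonneg _), integral_mul_const, levySymbol]

lemma integrable_and_levyOperator_fourierInv [CompleteSpace F] (hk : AEStronglyMeasurable k μ)
    (hk0 : ∀ y, 0 ≤ k y)
    (hki : ∀ ξ, Integrable (fun y => k y * (1 - cos (2 * π * ⟪y, ξ⟫))) μ) {v : E → F}
    (hv : Integrable v) (hsv : Integrable fun ξ => levySymbol μ k ξ • v ξ) (x : E) :
    Integrable (fun y => k y • symmSecondDiff (𝓕⁻ v) x y) μ ∧
      levyOperator μ k (𝓕⁻ v) x = 𝓕⁻ (fun ξ => levySymbol μ k ξ • v ξ) x := by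
  have hprod := integrable_prod_levySymbol_smul hk hk0 hki hv.aestronglyMeasurable hsv x
  have hinner (y : E) : k y • symmSecondDiff (𝓕⁻ v) x y
      = ∫ ξ, (k y * (1 - cos (2 * π * ⟪y, ξ⟫))) • 𝐞 ⟪ξ, x⟫ • v ξ := by
    simp only [symmSecondDiff_fourierInv hv, mul_smul, integral_smul]
  simp only [levyOperator, hinner]
  refine ⟨hprod.integral_prod_left, ?_⟩
  rw [integral_integral_swap hprod, fourierInv_eq]
  refine integral_congr_ae (Eventually.of_forall fun ξ => ?_)
  simp only [integral_smul_const, levySymbol, smul_comm (𝐞 _)]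

lemma integrable_fourier_of_integrable_rpow_smul {f : E → F} (hf : Integrable f) {s : ℝ}
    (hs : 0 ≤ s) (h : Integrable fun ξ : E => ‖ξ‖ ^ s • 𝓕 f ξ) : Integrable (𝓕 f) := by
  have hcont : Continuous (𝓕 f) :=
    VectorFourier.fourierIntegral_continuous continuous_fourierChar continuous_inner hf
  have hball : IntegrableOn (𝓕 f) (closedBall 0 1) :=
    hcont.continuousOn.integrableOn_compact (isCompact_closedBall 0 1)
  have hcompl : IntegrableOn (𝓕 f) (closedBall 0 1)ᶜ := by
    refine Integrable.mono h.integrableOn hcont.aestronglyMeasurable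
      (ae_restrict_of_forall_mem measurableSet_closedBall.compl fun ξ hξ => ?_)
    have hξ' : 1 < ‖ξ‖ := by simpa using hξ
    rw [norm_smul, norm_of_nonneg (by positivity)]
    exact le_mul_of_one_le_left (norm_nonneg _) (one_le_rpow hξ'.le hs)
  simpa using hball.union hcompl

end FourierInversion

section FractionalKernel

variable {E : Type*} [NormedAddCommGroup E] [NormedSpace ℝ E] {σ : ℝ}

/-- The kernel `‖y‖ ^ (-(n + 2σ))` of the fractional Laplacian `(-Δ)^σ`, without the normalizing
constant. -/
noncomputable def fracKernel (σ : ℝ) (y : E) : ℝ :=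
  ‖y‖ ^ (-(finrank ℝ E + 2 * σ))

/-- The part of `fracKernel σ` in the unit ball, multiplied by `‖y‖ ^ 2` to make it integrable. -/
noncomputable def nearKernel (σ : ℝ) : E → ℝ :=
  (ball 0 1).indicator fun y => ‖y‖ ^ 2 * fracKernel σ y

/-- The part of `fracKernel σ` outside the unit ball. -/
noncomputable def farKernel (σ : ℝ) : E → ℝ :=
  (ball 0 1)ᶜ.indicator (fracKernel σ)

/-- The weight `(1 + ‖y‖) ^ (-(n + 2σ))`, which has the decay of `fracKernel σ` but no
singularity; it measures the tails of functions to which `(-Δ)^σ` is applied. -/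
noncomputable def fracWeight (σ : ℝ) (y : E) : ℝ :=
  (1 + ‖y‖) ^ (-(finrank ℝ E + 2 * σ))

lemma fracKernel_nonneg (σ : ℝ) (y : E) : 0 ≤ fracKernel σ y :=
  rpow_nonneg (norm_nonneg y) _

lemma nearKernel_nonneg (σ : ℝ) (y : E) : 0 ≤ nearKernel σ y :=
  indicator_nonneg (fun y _ => mul_nonneg (by positivity) (fracKernel_nonneg σ y)) y

lemma farKernel_nonneg (σ : ℝ) (y : E) : 0 ≤ farKernel σ y :=
  indicator_nonneg (fun y _ => fracKernel_nonneg σ y) y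

lemma fracWeight_pos (σ : ℝ) (y : E) : 0 < fracWeight σ y :=
  rpow_pos_of_pos (by positivity) _

lemma fracWeight_le_one (hσ : 0 ≤ σ) (y : E) : fracWeight σ y ≤ 1 :=
  rpow_le_one_of_one_le_of_nonpos (by linarith [norm_nonneg y]) (neg_nonpos.2 (by positivity))

lemma continuous_fracWeight (σ : ℝ) : Continuous (fracWeight σ : E → ℝ) :=
  (continuous_const.add continuous_norm).rpow_const
    fun y => Or.inl (add_pos_of_pos_of_nonneg one_pos (norm_nonneg y)).ne'

lemma fracWeight_neg (σ : ℝ) (y : E) : fracWeight σ (-y) = fracWeight σ y := by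
  simp only [fracWeight, norm_neg]

lemma fracWeight_le_fracKernel (hσ : 0 ≤ σ) {y : E} (hy : y ≠ 0) :
    fracWeight σ y ≤ fracKernel σ y :=
  rpow_le_rpow_of_nonpos (norm_pos_iff.2 hy) (by linarith) (neg_nonpos.2 (by positivity))

lemma rpow_neg_le_mul_rpow_neg {a b c p : ℝ} (ha : 0 < a) (hb : 0 ≤ b) (hc : 0 < c) (hp : 0 ≤ p)
    (h : a ≤ c * b) : b ^ (-p) ≤ c ^ p * a ^ (-p) :=
  calc b ^ (-p) = c ^ p * (c * b) ^ (-p) := by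
        rw [mul_rpow hc.le hb, ← mul_assoc, ← rpow_add hc, add_neg_cancel, rpow_zero, one_mul]
    _ ≤ c ^ p * a ^ (-p) := by
        gcongr ?_ * ?_
        exact rpow_le_rpow_of_nonpos ha h (neg_nonpos.2 hp)

lemma fracWeight_le_two_rpow_mul (hσ : 0 ≤ σ) {x y : E} (h : ‖x - y‖ ≤ 1) :
    fracWeight σ x ≤ 2 ^ (finrank ℝ E + 2 * σ) * fracWeight σ y :=
  rpow_neg_le_mul_rpow_neg (by positivity) (by positivity) two_pos (by positivity)
    (by linarith [norm_le_norm_add_norm_sub' y x, norm_sub_rev x y, norm_nonneg x])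

lemma farKernel_le_two_rpow_mul_fracWeight_smul (hσ : 0 ≤ σ) {ρ : ℝ} (hρ0 : 0 ≤ ρ) (hρ1 : ρ ≤ 1)
    (y : E) : farKernel σ y ≤ 2 ^ (finrank ℝ E + 2 * σ) * fracWeight σ (ρ • y) := by
  refine indicator_apply_le' (fun hy => ?_)
    fun _ => mul_nonneg (by positivity) (fracWeight_pos σ _).le
  have hy' : 1 ≤ ‖y‖ := by simpa using hy
  refine rpow_neg_le_mul_rpow_neg (by positivity) (by positivity) two_pos (by positivity) ?_
  rw [norm_smul, norm_of_nonneg hρ0]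
  linarith [mul_le_mul_of_nonneg_right hρ1 (norm_nonneg y)]

lemma fracKernel_mul_le_near_add_far {c C t : ℝ} {y : E} (hnear : ‖y‖ < 1 → t ≤ c * ‖y‖ ^ 2)
    (hfar : 1 ≤ ‖y‖ → t ≤ C) : fracKernel σ y * t ≤ c * nearKernel σ y + C * farKernel σ y := by
  have hk := fracKernel_nonneg σ y
  by_cases hy : y ∈ ball 0 1
  · simp only [nearKernel, farKernel, indicator_of_mem hy,
      indicator_of_notMem (notMem_compl_iff.2 hy)]
    linarith [mul_le_mul_of_nonneg_left (hnear (by simpa using hy)) hk]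
  · simp only [nearKernel, farKernel, indicator_of_notMem hy, indicator_of_mem (mem_compl hy)]
    linarith [mul_le_mul_of_nonneg_left (hfar (by simpa using hy)) hk]

lemma rpow_mul_fracKernel_smul (σ : ℝ) {R : ℝ} (hR : 0 < R) (y : E) :
    R ^ (finrank ℝ E + 2 * σ) * fracKernel σ (R • y) = fracKernel σ y := by
  rw [fracKernel, fracKernel, norm_smul, norm_of_nonneg hR.le, mul_rpow hR.le (norm_nonneg y),
    ← mul_assoc, ← rpow_add hR, add_neg_cancel, rpow_zero, one_mul]

variable [MeasurableSpace E] [BorelSpace E]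

lemma measurable_fracKernel (σ : ℝ) : Measurable (fracKernel σ : E → ℝ) :=
  measurable_norm.pow_const _

variable [FiniteDimensional ℝ E] {μ : Measure E} [μ.IsAddHaarMeasure]

lemma rpow_mul_integral_comp_smul {R : ℝ} (hR : 0 < R) (s : ℝ) (f : E → ℝ) :
    R ^ (finrank ℝ E + s) * ∫ y, f (R • y) ∂μ = R ^ s * ∫ y, f y ∂μ := by
  rw [Measure.integral_comp_smul_of_nonneg μ f R (hR := hR.le), smul_eq_mul, rpow_add hR,
    rpow_natCast]
  field_simp

lemma integrable_fracWeight (hσ : 0 < σ) : Integrable (fracWeight σ : E → ℝ) μ :=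
  integrable_one_add_norm (by linarith)

lemma integrable_farKernel (hσ : 0 < σ) : Integrable (farKernel σ : E → ℝ) μ := by
  refine ((integrable_fracWeight hσ).const_mul (2 ^ (finrank ℝ E + 2 * σ))).mono'
    ((measurable_fracKernel σ).indicator measurableSet_ball.compl).aestronglyMeasurable
    (Eventually.of_forall fun y => ?_)
  rw [norm_of_nonneg (farKernel_nonneg σ y)]
  simpa using farKernel_le_two_rpow_mul_fracWeight_smul hσ.le zero_le_one le_rfl y

variable [Nontrivial E]

lemma integrable_nearKernel (hσ : σ < 1) : Integrable (nearKernel σ : E → ℝ) μ := by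
  rw [nearKernel, integrable_indicator_iff measurableSet_ball]
  refine integrableOn_ball_of_norm_le_rpow (C := 1) (α := finrank ℝ E + 2 * σ - 2)
    Module.finrank_pos (by linarith) (Eventually.of_forall fun y => ?_)
    ((measurable_norm.pow_const 2).mul (measurable_fracKernel σ)).aestronglyMeasurable
  rw [norm_of_nonneg (mul_nonneg (by positivity) (fracKernel_nonneg σ y)), one_mul]
  rcases eq_or_ne y 0 with rfl | hy
  · simpa using rpow_nonneg le_rfl _
  · rw [fracKernel, ← rpow_natCast, ← rpow_add (norm_pos_iff.2 hy)]
    apply le_of_eq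
    push_cast
    ring_nf

lemma integral_farKernel_pos (hσ : 0 < σ) : 0 < ∫ y : E, farKernel σ y ∂μ := by
  rw [integral_pos_iff_support_of_nonneg (farKernel_nonneg σ) (integrable_farKernel hσ)]
  obtain ⟨x, hx⟩ := exists_norm_eq E zero_le_two
  have hne : ((closedBall (0 : E) 1)ᶜ).Nonempty := ⟨x, by simp [hx]⟩
  refine (isClosed_closedBall.isOpen_compl.measure_pos μ hne).trans_le
    (measure_mono fun y hy => ?_)
  have hy' : 1 < ‖y‖ := by simpa using hy
  have hmem : y ∈ (ball (0 : E) 1)ᶜ := by simpa using hy'.le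
  rw [Function.mem_support, farKernel, indicator_of_mem hmem]
  exact (rpow_pos_of_pos (one_pos.trans hy') _).ne'

end FractionalKernel

section FractionalSymbol

variable {E : Type*} [NormedAddCommGroup E] [InnerProductSpace ℝ E] {σ : ℝ}

lemma one_sub_cos_two_pi_mul_inner_le (y ξ : E) :
    1 - cos (2 * π * ⟪y, ξ⟫) ≤ 2 * π ^ 2 * ‖ξ‖ ^ 2 * ‖y‖ ^ 2 := by
  have hinner : ⟪y, ξ⟫ ^ 2 ≤ (‖y‖ * ‖ξ‖) ^ 2 := sq_le_sq.2 <| by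
    rw [abs_of_nonneg (by positivity : 0 ≤ ‖y‖ * ‖ξ‖)]
    exact abs_real_inner_le_norm y ξ
  calc 1 - cos (2 * π * ⟪y, ξ⟫) ≤ (2 * π * ⟪y, ξ⟫) ^ 2 / 2 := by
        linarith [one_sub_sq_div_two_le_cos (x := 2 * π * ⟪y, ξ⟫)]
    _ = 2 * π ^ 2 * ⟪y, ξ⟫ ^ 2 := by ring
    _ ≤ 2 * π ^ 2 * (‖y‖ * ‖ξ‖) ^ 2 := by gcongr
    _ = 2 * π ^ 2 * ‖ξ‖ ^ 2 * ‖y‖ ^ 2 := by ring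

variable [FiniteDimensional ℝ E] [MeasurableSpace E] [BorelSpace E]

lemma integrable_fracKernel_mul_one_sub_cos [Nontrivial E] {μ : Measure E} [μ.IsAddHaarMeasure]
    (hσ0 : 0 < σ) (hσ1 : σ < 1) (ξ : E) :
    Integrable (fun y => fracKernel σ y * (1 - cos (2 * π * ⟪y, ξ⟫))) μ := by
  have hdom : Integrable (fun y : E =>
      2 * π ^ 2 * ‖ξ‖ ^ 2 * nearKernel σ y + 2 * farKernel σ y) μ :=
    ((integrable_nearKernel hσ1).const_mul _).add ((integrable_farKernel hσ0).const_mul _)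
  have hmeas : Measurable fun y : E => 1 - cos (2 * π * ⟪y, ξ⟫) := by fun_prop
  refine hdom.mono' ((measurable_fracKernel σ).mul hmeas).aestronglyMeasurable
    (Eventually.of_forall fun y => ?_)
  rw [norm_of_nonneg (mul_nonneg (fracKernel_nonneg σ y) (sub_nonneg.2 (cos_le_one _)))]
  exact fracKernel_mul_le_near_add_far (fun _ => one_sub_cos_two_pi_mul_inner_le y ξ)
    fun _ => by linarith [neg_one_le_cos (2 * π * ⟪y, ξ⟫)]

lemma levySymbol_fracKernel_smul {μ : Measure E} [μ.IsAddHaarMeasure] {R : ℝ} (hR : 0 < R)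
    (ξ : E) :
    levySymbol μ (fracKernel σ) (R • ξ) = R ^ (2 * σ) * levySymbol μ (fracKernel σ) ξ := by
  rw [levySymbol, levySymbol, ← rpow_mul_integral_comp_smul hR, ← integral_const_mul]
  simp only [← mul_assoc, rpow_mul_fracKernel_smul σ hR, real_inner_smul_left,
    real_inner_smul_right]

lemma levySymbol_fracKernel_eq (hσ : 0 < σ) {e : E} (he : ‖e‖ = 1) (ξ : E) :
    levySymbol volume (fracKernel σ) ξ
      = levySymbol volume (fracKernel σ) e * ‖ξ‖ ^ (2 * σ) := by
  rcases eq_or_ne ξ 0 with rfl | hξ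
  · simp [levySymbol, zero_rpow (by positivity : 2 * σ ≠ 0)]
  · have hnorm : ‖ξ‖ = ‖‖ξ‖ • e‖ := by simp [norm_smul, he]
    rw [mul_comm, ← levySymbol_fracKernel_smul (norm_pos_iff.2 hξ)]
    exact levySymbol_radial_eq_of_norm_eq (fun r => r ^ (-(finrank ℝ E + 2 * σ))) hnorm

variable {F : Type*} [NormedAddCommGroup F] [NormedSpace ℂ F] [CompleteSpace F]

lemma integrable_and_levyOperator_fracKernel (hσ0 : 0 < σ) (hσ1 : σ < 1) {e : E} (he : ‖e‖ = 1)
    {u : E → F} (hu : Continuous u) (hui : Integrable u)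
    (hF : Integrable fun ξ => ‖ξ‖ ^ (2 * σ) • 𝓕 u ξ) (x : E) :
    Integrable (fun y => fracKernel σ y • symmSecondDiff u x y) ∧
      levyOperator volume (fracKernel σ) u x
        = levySymbol volume (fracKernel σ) e • 𝓕⁻ (fun ξ => ‖ξ‖ ^ (2 * σ) • 𝓕 u ξ) x := by
  have : Nontrivial E := nontrivial_of_ne e 0 (norm_pos_iff.1 (by simp [he]))
  have hv : Integrable (𝓕 u) :=
    integrable_fourier_of_integrable_rpow_smul hui (by positivity) hF
  have hsymbol (ξ : E) : levySymbol volume (fracKernel σ) ξ • 𝓕 u ξ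
      = levySymbol volume (fracKernel σ) e • ‖ξ‖ ^ (2 * σ) • 𝓕 u ξ := by
    rw [levySymbol_fracKernel_eq hσ0 he, mul_smul]
  have hsv : Integrable fun ξ => levySymbol volume (fracKernel σ) ξ • 𝓕 u ξ := by
    simp only [hsymbol]
    exact hF.fun_smul _
  have h := integrable_and_levyOperator_fourierInv
    (measurable_fracKernel σ).aestronglyMeasurable (fracKernel_nonneg σ)
    (integrable_fracKernel_mul_one_sub_cos hσ0 hσ1) hv hsv x
  rw [hu.fourierInv_fourier_eq hui hv] at h
  refine ⟨h.1, h.2.trans ?_⟩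
  simp only [hsymbol, fourierInv_eq, smul_comm (𝐞 _) (levySymbol _ _ _), integral_smul]

end FractionalSymbol

section SymmAverageIntegral

variable {V F : Type*} [AddGroup V] [MeasurableSpace V] [MeasurableAdd V] [MeasurableNeg V]
  {μ : Measure V} [μ.IsAddLeftInvariant] [μ.IsNegInvariant] [NormedAddCommGroup F] [NormedSpace ℝ F]

lemma integrable_symmAverage {f : V → F} (hf : Integrable f μ) (x : V) :
    Integrable (symmAverage f x) μ :=
  ((hf.comp_add_left x).add (hf.comp_sub_left x)).smul _

lemma integral_symmAverage {f : V → F} (hf : Integrable f μ) (x : V) :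
    ∫ y, symmAverage f x y ∂μ = ∫ y, f y ∂μ := by
  simp only [symmAverage]
  rw [integral_smul, integral_add (hf.comp_add_left x) (hf.comp_sub_left x),
    integral_add_left_eq_self f x, integral_sub_left_eq_self f μ x, ← two_smul ℝ, smul_smul,
    inv_mul_cancel₀ two_ne_zero, one_smul]

end SymmAverageIntegral

section WeightedIntegral

variable {E : Type*} [NormedAddCommGroup E] [NormedSpace ℝ E] {σ : ℝ} {u : E → ℝ} {x : E}

lemma symmAverage_mul_fracWeight (σ : ℝ) (u : E → ℝ) (x y : E) :
    symmAverage u x y * fracWeight σ y = symmAverage (fun z => u z * fracWeight σ (z - x)) x y := by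
  have hneg : fracWeight σ (x - y - x) = fracWeight σ y := by
    rw [← fracWeight_neg]
    congr 1
    abel
  simp only [symmAverage, smul_eq_mul, add_sub_cancel_left, hneg]
  ring

variable [MeasurableSpace E] [BorelSpace E] {μ : Measure E}

lemma integrable_mul_fracWeight (hσ : 0 ≤ σ) (hu : Integrable u μ) :
    Integrable (fun y => u y * fracWeight σ y) μ := by
  refine hu.mul_bdd (c := 1) (continuous_fracWeight σ).aestronglyMeasurable
    (Eventually.of_forall fun y => ?_)
  rw [norm_of_nonneg (fracWeight_pos σ y).le]
  exact fracWeight_le_one hσ y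

lemma integrable_mul_fracWeight_sub (hσ : 0 ≤ σ) (hu : Integrable (fun y => u y * fracWeight σ y) μ)
    (hx : ‖x‖ ≤ 1) : Integrable (fun y => u y * fracWeight σ (y - x)) μ := by
  have hcont : Continuous fun y : E => fracWeight σ (y - x) / fracWeight σ y :=
    ((continuous_fracWeight σ).comp (by fun_prop)).div (continuous_fracWeight σ)
      fun y => (fracWeight_pos σ y).ne'
  refine (hu.mul_bdd (c := 2 ^ (finrank ℝ E + 2 * σ)) hcont.aestronglyMeasurable
    (Eventually.of_forall fun y => ?_)).congr (Eventually.of_forall fun y => ?_)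
  · rw [norm_of_nonneg (div_pos (fracWeight_pos σ _) (fracWeight_pos σ y)).le,
      div_le_iff₀ (fracWeight_pos σ y)]
    exact fracWeight_le_two_rpow_mul hσ (by simpa using hx)
  · simp only [mul_assoc, mul_div_cancel₀ _ (fracWeight_pos σ y).ne']

variable [FiniteDimensional ℝ E] [μ.IsAddHaarMeasure]

lemma integrable_symmAverage_mul_fracWeight (hσ : 0 ≤ σ)
    (hu : Integrable (fun y => u y * fracWeight σ y) μ) (hx : ‖x‖ ≤ 1) :
    Integrable (fun y => symmAverage u x y * fracWeight σ y) μ := by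
  simp only [symmAverage_mul_fracWeight]
  exact integrable_symmAverage (integrable_mul_fracWeight_sub hσ hu hx) x

lemma integral_symmAverage_mul_fracWeight (hσ : 0 ≤ σ)
    (hu : Integrable (fun y => u y * fracWeight σ y) μ) (hx : ‖x‖ ≤ 1) :
    ∫ y, symmAverage u x y * fracWeight σ y ∂μ = ∫ y, u y * fracWeight σ (y - x) ∂μ := by
  simp only [symmAverage_mul_fracWeight]
  exact integral_symmAverage (integrable_mul_fracWeight_sub hσ hu hx) x

lemma integral_mul_fracWeight_le_integral_symmAverage (hσ : 0 ≤ σ)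
    (hu : Integrable (fun y => u y * fracWeight σ y) μ) (hu0 : ∀ y, 0 ≤ u y) (hx : ‖x‖ ≤ 1) :
    ∫ y, u y * fracWeight σ y ∂μ
      ≤ 2 ^ (finrank ℝ E + 2 * σ) * ∫ y, symmAverage u x y * fracWeight σ y ∂μ := by
  rw [integral_symmAverage_mul_fracWeight hσ hu hx, ← integral_const_mul]
  refine integral_mono hu ((integrable_mul_fracWeight_sub hσ hu hx).const_mul _) fun y => ?_
  rw [mul_left_comm]
  exact mul_le_mul_of_nonneg_left
    (fracWeight_le_two_rpow_mul hσ (by rwa [sub_sub_cancel])) (hu0 y)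

lemma integral_symmAverage_mul_fracWeight_le (hσ : 0 ≤ σ)
    (hu : Integrable (fun y => u y * fracWeight σ y) μ) (hu0 : ∀ y, 0 ≤ u y) (hx : ‖x‖ ≤ 1) :
    ∫ y, symmAverage u x y * fracWeight σ y ∂μ
      ≤ 2 ^ (finrank ℝ E + 2 * σ) * ∫ y, u y * fracWeight σ y ∂μ := by
  rw [integral_symmAverage_mul_fracWeight hσ hu hx, ← integral_const_mul]
  refine integral_mono (integrable_mul_fracWeight_sub hσ hu hx) (hu.const_mul _) fun y => ?_
  rw [mul_left_comm]
  exact mul_le_mul_of_nonneg_left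
    (fracWeight_le_two_rpow_mul hσ (by rwa [sub_sub_cancel_left, norm_neg])) (hu0 y)

end WeightedIntegral

section TouchingEstimates

variable {E : Type*} [NormedAddCommGroup E] [NormedSpace ℝ E] {σ s : ℝ} {u : E → ℝ} {x : E}

lemma symmAverage_mul_fracWeight_le (hσ : 0 ≤ σ) (hu0 : ∀ z, 0 ≤ u z) (hs : 0 ≤ s) {y : E}
    (hy : y ≠ 0) (h : symmSecondDiff u x y ≤ s * ‖y‖ ^ 2) :
    symmAverage u x y * fracWeight σ y
      ≤ s * nearKernel σ y + u x * (fracWeight σ y + farKernel σ y)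
        - fracKernel σ y * symmSecondDiff u x y := by
  set D := symmSecondDiff u x y with hD
  have havg : symmAverage u x y = u x - D := by rw [hD, symmSecondDiff, sub_sub_cancel]
  have hDu : D ≤ u x := by linarith [symmAverage_nonneg hu0 x y]
  have hpos : (fracKernel σ y - fracWeight σ y) * D ≤ fracKernel σ y * max D 0 :=
    calc (fracKernel σ y - fracWeight σ y) * D ≤ (fracKernel σ y - fracWeight σ y) * max D 0 :=
          mul_le_mul_of_nonneg_left (le_max_left _ _)
            (sub_nonneg.2 (fracWeight_le_fracKernel hσ hy))
      _ ≤ fracKernel σ y * max D 0 :=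
          mul_le_mul_of_nonneg_right (sub_le_self _ (fracWeight_pos σ y).le) (le_max_right _ _)
  have hmax : fracKernel σ y * max D 0 ≤ s * nearKernel σ y + u x * farKernel σ y :=
    fracKernel_mul_le_near_add_far (fun _ => max_le h (by positivity))
      fun _ => max_le hDu (hu0 x)
  rw [havg]
  linarith

lemma mul_farKernel_sub_mul_nearKernel_le (hσ : 0 ≤ σ) (hu0 : ∀ z, 0 ≤ u z) {ρ : ℝ} (hρ0 : 0 < ρ)
    (hρ1 : ρ ≤ 1) (h : ∀ z, ‖z‖ ≤ ρ → -(s * ‖z‖ ^ 2) ≤ symmSecondDiff u x z) (y : E) :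
    u x * farKernel σ y - s * ρ ^ 2 * nearKernel σ y
      ≤ ρ ^ (finrank ℝ E + 2 * σ) * (fracKernel σ (ρ • y) * symmSecondDiff u x (ρ • y))
        + 2 ^ (finrank ℝ E + 2 * σ) * (symmAverage u x (ρ • y) * fracWeight σ (ρ • y)) := by
  have hnorm : ‖ρ • y‖ = ρ * ‖y‖ := by rw [norm_smul, norm_of_nonneg hρ0.le]
  have hfar : farKernel σ y * symmAverage u x (ρ • y)
      ≤ 2 ^ (finrank ℝ E + 2 * σ) * fracWeight σ (ρ • y) * symmAverage u x (ρ • y) :=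
    mul_le_mul_of_nonneg_right (farKernel_le_two_rpow_mul_fracWeight_smul hσ hρ0.le hρ1 y)
      (symmAverage_nonneg hu0 x _)
  have hsplit : fracKernel σ y * -symmSecondDiff u x (ρ • y)
      ≤ s * ρ ^ 2 * nearKernel σ y + (symmAverage u x (ρ • y) - u x) * farKernel σ y := by
    refine fracKernel_mul_le_near_add_far (fun hy => ?_) fun _ => by rw [symmSecondDiff, neg_sub]
    have := h (ρ • y) (by rw [hnorm]; exact mul_le_of_le_one_right hρ0.le hy.le)
    rw [hnorm] at this
    linarith
  rw [← mul_assoc, rpow_mul_fracKernel_smul σ hρ0]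
  linarith

variable [MeasurableSpace E] [BorelSpace E] [FiniteDimensional ℝ E] [Nontrivial E]
  {μ : Measure E} [μ.IsAddHaarMeasure]

lemma integral_mul_fracWeight_le_of_symmSecondDiff_le (hσ0 : 0 < σ) (hσ1 : σ < 1)
    (hu : Integrable (fun y => u y * fracWeight σ y) μ) (hu0 : ∀ y, 0 ≤ u y) (hx : ‖x‖ ≤ 1)
    (hD : Integrable (fun y => fracKernel σ y • symmSecondDiff u x y) μ) (hs : 0 ≤ s)
    (h : ∀ y, symmSecondDiff u x y ≤ s * ‖y‖ ^ 2) :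
    ∫ y, u y * fracWeight σ y ∂μ ≤ 2 ^ (finrank ℝ E + 2 * σ) *
      (s * ∫ y : E, nearKernel σ y ∂μ
        + u x * ((∫ y : E, fracWeight σ y ∂μ) + ∫ y : E, farKernel σ y ∂μ)
        - levyOperator μ (fracKernel σ) u x) := by
  have hw := integrable_fracWeight (μ := μ) hσ0
  have hfar := integrable_farKernel (μ := μ) hσ0
  have hnear := (integrable_nearKernel (μ := μ) hσ1).const_mul s
  have hsum := hnear.fun_add ((hw.fun_add hfar).const_mul (u x))
  refine (integral_mul_fracWeight_le_integral_symmAverage hσ0.le hu hu0 hx).trans ?_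
  gcongr
  rw [levyOperator, ← integral_add hw hfar, ← integral_const_mul, ← integral_const_mul,
    ← integral_add hnear ((hw.fun_add hfar).const_mul (u x)), ← integral_sub hsum hD]
  refine integral_mono_ae (integrable_symmAverage_mul_fracWeight hσ0.le hu hx) (hsum.sub hD) ?_
  filter_upwards [compl_mem_ae_iff.2 (measure_singleton (0 : E))] with y hy
  exact symmAverage_mul_fracWeight_le hσ0.le hu0 hs hy (h y)

lemma mul_integral_farKernel_le_of_le_symmSecondDiff (hσ0 : 0 < σ) (hσ1 : σ < 1)
    (hu : Integrable (fun y => u y * fracWeight σ y) μ) (hu0 : ∀ y, 0 ≤ u y) (hx : ‖x‖ ≤ 1)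
    (hD : Integrable (fun y => fracKernel σ y • symmSecondDiff u x y) μ) {ρ : ℝ} (hρ0 : 0 < ρ)
    (hρ1 : ρ ≤ 1) (h : ∀ y, ‖y‖ ≤ ρ → -(s * ‖y‖ ^ 2) ≤ symmSecondDiff u x y) :
    u x * ∫ y : E, farKernel σ y ∂μ ≤ s * ρ ^ 2 * ∫ y : E, nearKernel σ y ∂μ
      + ρ ^ (2 * σ) * levyOperator μ (fracKernel σ) u x
      + 4 ^ (finrank ℝ E + 2 * σ) / ρ ^ finrank ℝ E * ∫ y, u y * fracWeight σ y ∂μ := by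
  have havg := integrable_symmAverage_mul_fracWeight hσ0.le hu hx
  have hfar := (integrable_farKernel (μ := μ) hσ0).const_mul (u x)
  have hnear := (integrable_nearKernel (μ := μ) hσ1).const_mul (s * ρ ^ 2)
  have hD' := (hD.comp_smul hρ0.ne').const_mul (ρ ^ (finrank ℝ E + 2 * σ))
  have havg' := (havg.comp_smul hρ0.ne').const_mul (2 ^ (finrank ℝ E + 2 * σ))
  have hmono := integral_mono (hfar.sub hnear) (hD'.add havg')
    (mul_farKernel_sub_mul_nearKernel_le hσ0.le hu0 hρ0 hρ1 h)
  simp only [Pi.sub_apply, Pi.add_apply] at hmono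
  rw [integral_sub hfar hnear, integral_add hD' havg', integral_const_mul, integral_const_mul,
    integral_const_mul, integral_const_mul,
    rpow_mul_integral_comp_smul hρ0 _ fun y => fracKernel σ y • symmSecondDiff u x y,
    Measure.integral_comp_smul_of_nonneg μ (fun y => symmAverage u x y * fracWeight σ y) ρ
      (hR := hρ0.le), smul_eq_mul] at hmono
  have htail : 2 ^ (finrank ℝ E + 2 * σ) *
      ((ρ ^ finrank ℝ E)⁻¹ * ∫ y, symmAverage u x y * fracWeight σ y ∂μ)
      ≤ 4 ^ (finrank ℝ E + 2 * σ) / ρ ^ finrank ℝ E * ∫ y, u y * fracWeight σ y ∂μ :=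
    calc _ ≤ 2 ^ (finrank ℝ E + 2 * σ) * ((ρ ^ finrank ℝ E)⁻¹ *
          (2 ^ (finrank ℝ E + 2 * σ) * ∫ y, u y * fracWeight σ y ∂μ)) := by
          gcongr
          exact integral_symmAverage_mul_fracWeight_le hσ0.le hu hu0 hx
      _ = _ := by
          rw [show (4 : ℝ) = 2 * 2 by norm_num, mul_rpow two_pos.le two_pos.le]
          ring
  rw [levyOperator]
  linarith

end TouchingEstimates

section TouchingPoints

variable {E : Type*} [NormedAddCommGroup E] {u : E → ℝ}

lemma exists_doubling_ball [ProperSpace E] {R : ℝ} (hu : ContinuousOn u (closedBall 0 R))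
    (hu0 : ∀ z, 0 ≤ u z) {n : ℕ} (hn : n ≠ 0) {x₁ : E} (hx₁ : ‖x₁‖ < R) (hpos : 0 < u x₁) :
    ∃ (x₀ : E) (r : ℝ), 0 < r ∧ ‖x₀‖ + 2 * r = R ∧
      (R - ‖x₁‖) ^ n * u x₁ ≤ (2 * r) ^ n * u x₀ ∧
      ∀ z ∈ closedBall x₀ r, u z ≤ 2 ^ n * u x₀ := by
  have hmem₁ : x₁ ∈ closedBall (0 : E) R := by simpa using hx₁.le
  obtain ⟨x₀, hx₀, hmax⟩ := (isCompact_closedBall (0 : E) R).exists_isMaxOn ⟨x₁, hmem₁⟩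
    (f := fun z => (R - ‖z‖) ^ n * u z) (by fun_prop)
  have hx₀R : ‖x₀‖ ≤ R := by simpa using hx₀
  have hle : (R - ‖x₁‖) ^ n * u x₁ ≤ (R - ‖x₀‖) ^ n * u x₀ := hmax hmem₁
  have hprod : 0 < (R - ‖x₀‖) ^ n * u x₀ :=
    (mul_pos (pow_pos (sub_pos.2 hx₁) n) hpos).trans_le hle
  have hr : 0 < R - ‖x₀‖ := by
    refine (sub_nonneg.2 hx₀R).lt_of_ne fun h => hprod.ne' ?_
    rw [← h, zero_pow hn, zero_mul]
  refine ⟨x₀, (R - ‖x₀‖) / 2, half_pos hr, by ring, by rwa [mul_div_cancel₀ _ two_ne_zero],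
    fun z hz => ?_⟩
  have hzR : (R - ‖x₀‖) / 2 ≤ R - ‖z‖ := by
    rw [mem_closedBall, dist_eq_norm] at hz
    linarith [norm_le_insert' z x₀]
  have hmem : z ∈ closedBall (0 : E) R := by
    rw [mem_closedBall_zero_iff]
    linarith
  refine le_of_mul_le_mul_left ?_ (pow_pos (half_pos hr) n)
  calc ((R - ‖x₀‖) / 2) ^ n * u z ≤ (R - ‖z‖) ^ n * u z := by
        gcongr
        exact hu0 z
    _ ≤ (R - ‖x₀‖) ^ n * u x₀ := hmax hmem
    _ = ((R - ‖x₀‖) / 2) ^ n * (2 ^ n * u x₀) := by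
        rw [← mul_assoc, ← mul_pow, div_mul_cancel₀ _ two_ne_zero]

variable [InnerProductSpace ℝ E]

lemma symmSecondDiff_mul_norm_sub_sq (s : ℝ) (c x y : E) :
    symmSecondDiff (fun z => s * ‖z - c‖ ^ 2) x y = -(s * ‖y‖ ^ 2) := by
  have h := parallelogram_law_with_norm ℝ (x - c) y
  rw [symmSecondDiff, symmAverage, add_sub_right_comm, sub_right_comm, smul_eq_mul]
  linear_combination (-s / 2) * h

variable [ProperSpace E]

lemma exists_touching_from_below {R s : ℝ} (hu : ContinuousOn u (closedBall 0 R))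
    (hu0 : ∀ z, 0 ≤ u z) (hs : 0 ≤ s) {y : E} (hy : ‖y‖ ≤ R)
    (huy : u y ≤ s * (R ^ 2 - ‖y‖ ^ 2)) :
    ∃ x ∈ closedBall (0 : E) R, u x ≤ u y + s * ‖y‖ ^ 2 ∧
      ∀ z, symmSecondDiff u x z ≤ s * ‖z‖ ^ 2 := by
  have hmem : y ∈ closedBall (0 : E) R := by simpa using hy
  obtain ⟨x, hx, hmin⟩ := (isCompact_closedBall (0 : E) R).exists_isMinOn ⟨y, hmem⟩
    (f := fun z => u z + s * ‖z‖ ^ 2) (by fun_prop)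
  have hxy : u x + s * ‖x‖ ^ 2 ≤ u y + s * ‖y‖ ^ 2 := hmin hmem
  have hglobal (z : E) : u x + s * ‖x‖ ^ 2 ≤ u z + s * ‖z‖ ^ 2 := by
    by_cases hz : z ∈ closedBall (0 : E) R
    · exact hmin hz
    · have hRz : R < ‖z‖ := by simpa using hz
      have hsq : R ^ 2 ≤ ‖z‖ ^ 2 := pow_le_pow_left₀ ((norm_nonneg y).trans hy) hRz.le 2
      linarith [mul_le_mul_of_nonneg_left hsq hs, hu0 z]
  refine ⟨x, hx, le_trans (le_add_of_nonneg_right (by positivity)) hxy, fun z => ?_⟩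
  have hparab := symmSecondDiff_mul_norm_sub_sq (-s) 0 x z
  rw [neg_mul, neg_neg] at hparab
  rw [← hparab]
  refine symmSecondDiff_le_symmSecondDiff ?_ ?_ <;>
    simp only [sub_zero, neg_mul, sub_neg_eq_add] <;> exact hglobal _

lemma exists_touching_from_above {x₀ : E} {r s M : ℝ} (hr : 0 ≤ r)
    (hu : ContinuousOn u (closedBall x₀ r)) (hs : 0 < s) (hM : ∀ z ∈ closedBall x₀ r, u z ≤ M)
    (hMs : M - u x₀ ≤ s * (r / 2) ^ 2) :
    ∃ x ∈ closedBall x₀ (r / 2), u x₀ ≤ u x ∧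
      ∀ y, ‖y‖ ≤ r / 2 → -(s * ‖y‖ ^ 2) ≤ symmSecondDiff u x y := by
  have hmem : x₀ ∈ closedBall x₀ r := mem_closedBall_self hr
  obtain ⟨x, hx, hmax⟩ := (isCompact_closedBall x₀ r).exists_isMaxOn ⟨x₀, hmem⟩
    (f := fun z => u z - s * ‖z - x₀‖ ^ 2) (by fun_prop)
  have hle : u x₀ ≤ u x - s * ‖x - x₀‖ ^ 2 := by simpa using hmax hmem
  have hclose : ‖x - x₀‖ ≤ r / 2 := by
    have : s * ‖x - x₀‖ ^ 2 ≤ s * (r / 2) ^ 2 := by linarith [hM x hx]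
    exact (sq_le_sq₀ (norm_nonneg _) (by positivity)).1 (le_of_mul_le_mul_left this hs)
  refine ⟨x, by rwa [mem_closedBall, dist_eq_norm],
    hle.trans (sub_le_self _ (by positivity)), fun y hy => ?_⟩
  have hadd : x + y ∈ closedBall x₀ r := by
    rw [mem_closedBall, dist_eq_norm, add_sub_right_comm]
    linarith [norm_add_le (x - x₀) y]
  have hsub : x - y ∈ closedBall x₀ r := by
    rw [mem_closedBall, dist_eq_norm, sub_right_comm]
    linarith [norm_sub_le (x - x₀) y]
  rw [← symmSecondDiff_mul_norm_sub_sq s x₀ x y]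
  have hmax_add : u (x + y) - s * ‖x + y - x₀‖ ^ 2 ≤ u x - s * ‖x - x₀‖ ^ 2 := hmax hadd
  have hmax_sub : u (x - y) - s * ‖x - y - x₀‖ ^ 2 ≤ u x - s * ‖x - x₀‖ ^ 2 := hmax hsub
  exact symmSecondDiff_le_symmSecondDiff (by linarith) (by linarith)

/-- The maximum of `u - s ‖· - x₀‖ ^ 2` over a doubling ball is attained well inside it once `s` is
large compared with `u x₀ / r ^ 2`. -/
lemma exists_touching_from_above_of_norm_lt {R : ℝ} (hu : ContinuousOn u (closedBall 0 R))
    (hu0 : ∀ z, 0 ≤ u z) {n : ℕ} (hn : n ≠ 0) {x₁ : E} (hx₁ : ‖x₁‖ < R) (hpos : 0 < u x₁) :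
    ∃ (x : E) (r : ℝ), 0 < r ∧ 2 * r ≤ R ∧ ‖x‖ < R ∧
      (R - ‖x₁‖) ^ n * u x₁ ≤ (2 * r) ^ n * u x ∧
      ∀ y, ‖y‖ ≤ r / 2 → -(2 ^ (n + 2) * u x / r ^ 2 * ‖y‖ ^ 2) ≤ symmSecondDiff u x y := by
  obtain ⟨x₀, r, hr, hxr, hweight, hdouble⟩ := exists_doubling_ball hu hu0 hn hx₁ hpos
  have hu₀ : 0 < u x₀ := by
    have := (mul_pos (pow_pos (sub_pos.2 hx₁) n) hpos).trans_le hweight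
    exact pos_of_mul_pos_right this (by positivity)
  have hsub : closedBall x₀ r ⊆ closedBall 0 R := fun z hz => by
    rw [mem_closedBall, dist_eq_norm] at hz
    rw [mem_closedBall_zero_iff]
    linarith [norm_le_insert' z x₀]
  have hopening : 2 ^ n * u x₀ - u x₀ ≤ 2 ^ (n + 2) * u x₀ / r ^ 2 * (r / 2) ^ 2 := by
    have : 2 ^ (n + 2) * u x₀ / r ^ 2 * (r / 2) ^ 2 = 2 ^ n * u x₀ := by
      rw [pow_add]
      field_simp
    linarith
  obtain ⟨x, hx, hux, hD⟩ := exists_touching_from_above hr.le (hu.mono hsub)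
    (by positivity : 0 < 2 ^ (n + 2) * u x₀ / r ^ 2) hdouble hopening
  rw [mem_closedBall, dist_eq_norm] at hx
  refine ⟨x, r, hr, by linarith [norm_nonneg x₀], by linarith [norm_le_insert' x x₀],
    hweight.trans (by gcongr), fun y hy => le_trans (neg_le_neg ?_) (hD y hy)⟩
  gcongr

end TouchingPoints

section Harnack

variable {E : Type*} [NormedAddCommGroup E] [MeasurableSpace E]

/-- `u` satisfies `L u ≤ A u + B` in the unit ball, where `L` is the unnormalized fractional
Laplacian of order `2σ`, given pointwise by an absolutely convergent integral. -/
def IsFracSubsolution [NormedSpace ℝ E] (μ : Measure E) (σ A B : ℝ) (u : E → ℝ) : Prop :=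
  ∀ x ∈ ball (0 : E) 1, Integrable (fun y => fracKernel σ y • symmSecondDiff u x y) μ ∧
    levyOperator μ (fracKernel σ) u x ≤ A * u x + B

/-- `u` satisfies `-(A u + B) ≤ L u` in the unit ball, with `L` as in `IsFracSubsolution`. -/
def IsFracSupersolution [NormedSpace ℝ E] (μ : Measure E) (σ A B : ℝ) (u : E → ℝ) : Prop :=
  ∀ x ∈ ball (0 : E) 1, Integrable (fun y => fracKernel σ y • symmSecondDiff u x y) μ ∧
    -(A * u x + B) ≤ levyOperator μ (fracKernel σ) u x

variable [InnerProductSpace ℝ E] [FiniteDimensional ℝ E] [BorelSpace E] [Nontrivial E]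
  {σ A : ℝ} (μ : Measure E) [μ.IsAddHaarMeasure]

lemma exists_forall_integral_mul_fracWeight_le (hσ0 : 0 < σ) (hσ1 : σ < 1) (hA : 0 ≤ A) :
    ∃ C > 0, ∀ (u : E → ℝ) (B : ℝ), Continuous u → (∀ x, 0 ≤ u x) →
      Integrable (fun y => u y * fracWeight σ y) μ → 0 ≤ B → IsFracSupersolution μ σ A B u →
      ∀ y ∈ ball (0 : E) (1 / 2), ∫ z, u z * fracWeight σ z ∂μ ≤ C * (u y + B) := by
  set near := ∫ y : E, nearKernel σ y ∂μ
  set far := (∫ y : E, fracWeight σ y ∂μ) + ∫ y : E, farKernel σ y ∂μ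
  have hnear0 : 0 ≤ near := integral_nonneg (nearKernel_nonneg σ)
  have hfar0 : 0 ≤ far := add_nonneg (integral_nonneg fun y => (fracWeight_pos σ y).le)
    (integral_nonneg (farKernel_nonneg σ))
  refine ⟨2 ^ (finrank ℝ E + 2 * σ) * (4 * near + 2 * far + 2 * A + 1), by positivity,
    fun u B hu hu0 hui hB hL y hy => ?_⟩
  have hy' : ‖y‖ < 1 / 2 := by simpa using hy
  have huy := hu0 y
  have hysq : ‖y‖ ^ 2 ≤ 1 / 4 := by nlinarith [norm_nonneg y]
  obtain ⟨x, hx, hux, hD⟩ := exists_touching_from_below (R := 3 / 4) (s := 4 * u y)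
    (y := y) hu.continuousOn hu0 (by positivity) (by linarith) (by nlinarith)
  rw [mem_closedBall_zero_iff] at hx
  have hux' : u x ≤ 2 * u y := by nlinarith
  obtain ⟨hint, hbound⟩ := hL x (by rw [mem_ball_zero_iff]; linarith)
  refine (integral_mul_fracWeight_le_of_symmSecondDiff_le hσ0 hσ1 hui hu0 (by linarith) hint
    (by positivity) hD).trans ?_
  rw [mul_assoc _ _ (u y + B)]
  gcongr
  calc 4 * u y * near + u x * far - levyOperator μ (fracKernel σ) u x
      ≤ 4 * u y * near + u x * far + (A * u x + B) := by linarith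
    _ ≤ 4 * u y * near + 2 * u y * far + (A * (2 * u y) + B) := by gcongr
    _ ≤ (4 * near + 2 * far + 2 * A + 1) * (u y + B) := by
        have : 0 ≤ (4 * near + 2 * far + 2 * A) * B := by positivity
        linarith

lemma eventually_mul_rpow_le_nhdsGT_zero (a : ℝ) {s κ : ℝ} (hs : 0 < s) (hκ : 0 < κ) :
    ∀ᶠ θ in 𝓝[>] (0 : ℝ), a * θ ^ s ≤ κ := by
  have hcont : Continuous fun θ : ℝ => a * θ ^ s :=
    continuous_const.mul (continuous_rpow_const hs.le)
  have hlim : Tendsto (fun θ : ℝ => a * θ ^ s) (𝓝[>] 0) (𝓝 0) := by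
    simpa [zero_rpow hs.ne'] using (hcont.tendsto 0).mono_left nhdsWithin_le_nhds
  exact hlim.eventually_le_const hκ

/-- At the scale `θ r`, the paraboloid and the zeroth-order term `A u x` each absorb at most a
quarter of `u x` times the mass of `farKernel`. -/
lemma pow_mul_le_of_touching_from_above (hσ0 : 0 < σ) (hσ1 : σ < 1) (hA : 0 ≤ A) {u : E → ℝ}
    (hu0 : ∀ x, 0 ≤ u x) (hui : Integrable (fun y => u y * fracWeight σ y) μ) {B : ℝ} (hB : 0 ≤ B)
    (hL : IsFracSubsolution μ σ A B u) {x : E} (hx : ‖x‖ < 1) {a r θ : ℝ} (hr0 : 0 < r)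
    (hr1 : r ≤ 1) (hD : ∀ y, ‖y‖ ≤ r / 2 → -(a * u x / r ^ 2 * ‖y‖ ^ 2) ≤ symmSecondDiff u x y)
    (hθ0 : 0 < θ) (hθ1 : θ ≤ 1 / 2)
    (hθnear : a * (∫ y : E, nearKernel σ y ∂μ) * θ ^ 2 ≤ (∫ y : E, farKernel σ y ∂μ) / 4)
    (hθA : A * θ ^ (2 * σ) ≤ (∫ y : E, farKernel σ y ∂μ) / 4) :
    r ^ finrank ℝ E * u x ≤ 2 / (∫ y : E, farKernel σ y ∂μ) *
      (4 ^ (finrank ℝ E + 2 * σ) / θ ^ finrank ℝ E) *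
      ((∫ y, u y * fracWeight σ y ∂μ) + B) := by
  have hκ := integral_farKernel_pos (μ := μ) hσ0
  set κ := ∫ y : E, farKernel σ y ∂μ
  set N := ∫ y, u y * fracWeight σ y ∂μ
  have hρ0 : 0 < θ * r := by positivity
  have hρθ : θ * r ≤ θ := mul_le_of_le_one_right hθ0.le hr1
  have hρr : θ * r ≤ r / 2 := by nlinarith
  have hρ1 : θ * r ≤ 1 := by linarith
  obtain ⟨hint, hbound⟩ := hL x (by simpa using hx)
  have hux := hu0 x
  have hmain := mul_integral_farKernel_le_of_le_symmSecondDiff hσ0 hσ1 hui hu0 hx.le hint hρ0 hρ1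
    fun y hy => hD y (hy.trans hρr)
  have hparab : a * u x / r ^ 2 * (θ * r) ^ 2 * ∫ y : E, nearKernel σ y ∂μ ≤ u x * (κ / 4) :=
    calc _ = u x * (a * (∫ y : E, nearKernel σ y ∂μ) * θ ^ 2) := by field_simp
      _ ≤ u x * (κ / 4) := by gcongr
  have hzeroth : (θ * r) ^ (2 * σ) * levyOperator μ (fracKernel σ) u x ≤ u x * (κ / 4) + B :=
    calc _ ≤ (θ * r) ^ (2 * σ) * (A * u x + B) := by gcongr
      _ = u x * (A * (θ * r) ^ (2 * σ)) + (θ * r) ^ (2 * σ) * B := by ring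
      _ ≤ u x * (A * θ ^ (2 * σ)) + 1 * B := by
          gcongr
          exact rpow_le_one hρ0.le hρ1 (by positivity)
      _ ≤ u x * (κ / 4) + B := by rw [one_mul]; gcongr
  have hfactor : 1 ≤ 4 ^ (finrank ℝ E + 2 * σ) / (θ * r) ^ finrank ℝ E := by
    rw [one_le_div (by positivity)]
    exact (pow_le_one₀ hρ0.le hρ1).trans (one_le_rpow (by norm_num) (by positivity))
  have hhalf : u x * (κ / 2) ≤ 4 ^ (finrank ℝ E + 2 * σ) / (θ * r) ^ finrank ℝ E * (N + B) := by
    linarith [mul_le_mul_of_nonneg_right hfactor hB]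
  calc r ^ finrank ℝ E * u x = 2 / κ * r ^ finrank ℝ E * (u x * (κ / 2)) := by field_simp
    _ ≤ 2 / κ * r ^ finrank ℝ E *
        (4 ^ (finrank ℝ E + 2 * σ) / (θ * r) ^ finrank ℝ E * (N + B)) := by gcongr
    _ = 2 / κ * (4 ^ (finrank ℝ E + 2 * σ) / θ ^ finrank ℝ E) * (N + B) := by
        rw [mul_pow]
        field_simp

lemma exists_forall_le_mul_integral_mul_fracWeight (hσ0 : 0 < σ) (hσ1 : σ < 1) (hA : 0 ≤ A) :
    ∃ C > 0, ∀ (u : E → ℝ) (B : ℝ), Continuous u → (∀ x, 0 ≤ u x) →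
      Integrable (fun y => u y * fracWeight σ y) μ → 0 ≤ B → IsFracSubsolution μ σ A B u →
      ∀ x ∈ ball (0 : E) (1 / 2), u x ≤ C * ((∫ z, u z * fracWeight σ z ∂μ) + B) := by
  set n := finrank ℝ E
  have hκ := integral_farKernel_pos (μ := μ) hσ0
  obtain ⟨θ, ⟨⟨hθnear, hθA⟩, hθ⟩⟩ := ((eventually_mul_rpow_le_nhdsGT_zero
    (2 ^ (n + 2) * ∫ y : E, nearKernel σ y ∂μ) two_pos (div_pos hκ four_pos)).and
    (eventually_mul_rpow_le_nhdsGT_zero A (mul_pos two_pos hσ0) (div_pos hκ four_pos))).and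
    (Ioc_mem_nhdsGT (one_half_pos (α := ℝ))) |>.exists
  rw [rpow_two] at hθnear
  have hθ0 : 0 < θ := hθ.1
  set K := 2 / (∫ y : E, farKernel σ y ∂μ) * (4 ^ (n + 2 * σ) / θ ^ n)
  have hK : 0 < K := by positivity
  refine ⟨4 ^ n * K, mul_pos (by positivity) hK, fun u B hu hu0 hui hB hL x₁ hx₁ => ?_⟩
  have hN : 0 ≤ ∫ z, u z * fracWeight σ z ∂μ :=
    integral_nonneg fun z => mul_nonneg (hu0 z) (fracWeight_pos σ z).le
  rcases (hu0 x₁).eq_or_lt with hzero | hpos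
  · rw [← hzero]
    positivity
  rw [mem_ball_zero_iff] at hx₁
  obtain ⟨x, r, hr0, hr1, hx, hweight, hD⟩ := exists_touching_from_above_of_norm_lt (R := 1)
    hu.continuousOn hu0 (Module.finrank_pos (R := ℝ) (M := E)).ne' (by linarith) hpos
  calc u x₁ = 2 ^ n * ((1 / 2) ^ n * u x₁) := by
        rw [← mul_assoc, ← mul_pow]
        norm_num
    _ ≤ 2 ^ n * ((1 - ‖x₁‖) ^ n * u x₁) := by
        gcongr
        linarith
    _ ≤ 2 ^ n * ((2 * r) ^ n * u x) := by gcongr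
    _ = 4 ^ n * (r ^ n * u x) := by
        rw [← mul_assoc, ← mul_assoc, ← mul_pow, ← mul_pow]
        ring_nf
    _ ≤ 4 ^ n * (K * ((∫ z, u z * fracWeight σ z ∂μ) + B)) := by
        gcongr 4 ^ n * ?_
        exact pow_mul_le_of_touching_from_above μ hσ0 hσ1 hA hu0 hui hB hL hx hr0
          (by linarith) hD hθ0 hθ.2 hθnear hθA
    _ = 4 ^ n * K * ((∫ z, u z * fracWeight σ z ∂μ) + B) := by ring

lemma exists_forall_le_mul_add_of_isFracSubsolution_of_isFracSupersolution (hσ0 : 0 < σ)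
    (hσ1 : σ < 1) (hA : 0 ≤ A) :
    ∃ C > 0, ∀ (u : E → ℝ) (B : ℝ), Continuous u → (∀ x, 0 ≤ u x) →
      Integrable (fun y => u y * fracWeight σ y) μ → 0 ≤ B →
      IsFracSubsolution μ σ A B u → IsFracSupersolution μ σ A B u →
      ∀ x ∈ ball (0 : E) (1 / 2), ∀ y ∈ ball (0 : E) (1 / 2), u x ≤ C * (u y + B) := by
  obtain ⟨C₁, hC₁, hlower⟩ := exists_forall_integral_mul_fracWeight_le μ hσ0 hσ1 hA
  obtain ⟨C₂, hC₂, hupper⟩ := exists_forall_le_mul_integral_mul_fracWeight μ hσ0 hσ1 hA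
  refine ⟨C₂ * (C₁ + 1), by positivity, fun u B hu hu0 hui hB hsub hsuper x hx y hy => ?_⟩
  calc u x ≤ C₂ * ((∫ z, u z * fracWeight σ z ∂μ) + B) := hupper u B hu hu0 hui hB hsub x hx
    _ ≤ C₂ * (C₁ * (u y + B) + (u y + B)) := by
        gcongr
        · exact hlower u B hu hu0 hui hB hsuper y hy
        · exact le_add_of_nonneg_left (hu0 y)
    _ = C₂ * (C₁ + 1) * (u y + B) := by ring

end Harnack

section FourierHarnack

variable {E : Type*} [NormedAddCommGroup E] [InnerProductSpace ℝ E] [FiniteDimensional ℝ E]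
  [MeasurableSpace E] [BorelSpace E] {σ : ℝ}

lemma integrable_and_abs_levyOperator_fracKernel (hσ0 : 0 < σ) (hσ1 : σ < 1) {e : E}
    (he : ‖e‖ = 1) {u : E → ℝ} (hu : Continuous u) (hui : Integrable u)
    (hF : Integrable fun ξ : E => ‖ξ‖ ^ (2 * σ) • 𝓕 (fun y => (u y : ℂ)) ξ) (x : E) :
    Integrable (fun y => fracKernel σ y • symmSecondDiff u x y) ∧
      |levyOperator volume (fracKernel σ) u x| = levySymbol volume (fracKernel σ) e *
        ‖𝓕⁻ (fun ξ => ‖ξ‖ ^ (2 * σ) • 𝓕 (fun y => (u y : ℂ)) ξ) x‖ := by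
  obtain ⟨hint, hL⟩ := integrable_and_levyOperator_fracKernel hσ0 hσ1 he
    (u := fun y => (u y : ℂ)) (Complex.continuous_ofReal.comp hu) hui.ofReal hF x
  constructor
  · simpa [symmSecondDiff_ofReal, ← Complex.ofReal_mul] using hint.re
  · rw [← norm_of_nonneg (levySymbol_nonneg volume (fracKernel_nonneg σ) e), ← norm_smul,
      ← hL, levyOperator_ofReal, Complex.norm_real, norm_eq_abs]

theorem fractional_harnack_fourier_general (hσ0 : 0 < σ) (hσ1 : σ < 1) (A : ℝ) :
    ∃ C > 0, ∀ (u : E → ℝ) (B : ℝ), Continuous u → (∀ x, 0 ≤ u x) → Integrable u →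
      Integrable (fun ξ : E => ‖ξ‖ ^ (2 * σ) • 𝓕 (fun y => (u y : ℂ)) ξ) → 0 ≤ B →
      (∀ x ∈ ball (0 : E) 1,
        ‖𝓕⁻ (fun ξ => ‖ξ‖ ^ (2 * σ) • 𝓕 (fun y => (u y : ℂ)) ξ) x‖ ≤ A * u x + B) →
      ∀ x ∈ ball (0 : E) (1 / 2), ∀ y ∈ ball (0 : E) (1 / 2), u x ≤ C * (u y + B) := by
  rcases subsingleton_or_nontrivial E with hE | hE
  · refine ⟨1, one_pos, fun u B _ _ _ _ hB _ x _ y _ => ?_⟩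
    rw [Subsingleton.elim x y, one_mul]
    exact le_add_of_nonneg_right hB
  obtain ⟨e, he⟩ := exists_norm_eq E zero_le_one
  set c := levySymbol volume (fracKernel σ) e
  have hc : 0 ≤ c := levySymbol_nonneg volume (fracKernel_nonneg σ) e
  obtain ⟨C, hC, harnack⟩ := exists_forall_le_mul_add_of_isFracSubsolution_of_isFracSupersolution
    (E := E) volume hσ0 hσ1 (mul_nonneg hc (abs_nonneg A))
  refine ⟨C * (c + 1), by positivity, fun u B hu hu0 hui hF hB hbound x hx y hy => ?_⟩
  have hL (z : E) (hz : z ∈ ball (0 : E) 1) :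
      Integrable (fun y => fracKernel σ y • symmSecondDiff u z y) ∧
        |levyOperator volume (fracKernel σ) u z| ≤ c * |A| * u z + c * B := by
    obtain ⟨hint, habs⟩ := integrable_and_abs_levyOperator_fracKernel hσ0 hσ1 he hu hui hF z
    refine ⟨hint, habs.trans_le ?_⟩
    rw [mul_assoc, ← mul_add]
    exact mul_le_mul_of_nonneg_left
      ((hbound z hz).trans (by gcongr; exacts [hu0 z, le_abs_self A])) hc
  calc u x ≤ C * (u y + c * B) :=
        harnack u (c * B) hu hu0 (integrable_mul_fracWeight hσ0.le hui) (mul_nonneg hc hB)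
          (fun z hz => (hL z hz).imp_right fun h => (abs_le.1 h).2)
          (fun z hz => (hL z hz).imp_right fun h => (abs_le.1 h).1) x hx y hy
    _ ≤ C * ((c + 1) * (u y + B)) := by
        gcongr
        linarith [mul_nonneg hc (hu0 y)]
    _ = C * (c + 1) * (u y + B) := by ring

end FourierHarnack

lemma abs_mul_add_le {a b t A B : ℝ} (ha : |a| ≤ A) (hb : |b| ≤ B) (ht : 0 ≤ t) :
    |a * t + b| ≤ A * t + B :=
  calc |a * t + b| ≤ |a| * t + |b| := by
        simpa [abs_mul, abs_of_nonneg ht] using abs_add_le (a * t) b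
    _ ≤ A * t + B := by gcongr

/-- **Harnack inequality for the fractional Laplacian with lower order terms**
(Theorem 1.1). If `u ≥ 0` on all of `ℝⁿ` solves `(−Δ)^σ u = a u + b` in `B₁`
(realized via the Fourier transform and its inverse), with `a, b` bounded
measurable on `B₁`, then `sup_{B_{1/2}} u ≤ C (inf_{B_{1/2}} u + ‖b‖_{L^∞(B₁)})`,
where `C` depends only on `n`, `σ` and `‖a‖_{L^∞(B₁)}`. -/
theorem fractional_harnack_fourier
    (n : ℕ) (hn : 2 ≤ n) (σ : ℝ) (hσ0 : 0 < σ) (hσ1 : σ < 1) (Ma : ℝ) :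
    ∃ C > 0, ∀ (u a b : EuclideanSpace ℝ (Fin n) → ℝ) (Mb : ℝ),
      Continuous u → (∀ x, 0 ≤ u x) → Integrable u →
      Integrable (fun ξ : EuclideanSpace ℝ (Fin n) =>
        ‖ξ‖ ^ (2 * σ) • 𝓕 (fun y => (u y : ℂ)) ξ) →
      Measurable a → Measurable b →
      (∀ x ∈ ball (0 : EuclideanSpace ℝ (Fin n)) 1, |a x| ≤ Ma) →
      (∀ x ∈ ball (0 : EuclideanSpace ℝ (Fin n)) 1, |b x| ≤ Mb) →
      (∀ x ∈ ball (0 : EuclideanSpace ℝ (Fin n)) 1,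
        𝓕⁻ (fun ξ => ‖ξ‖ ^ (2 * σ) • 𝓕 (fun y => (u y : ℂ)) ξ) x
          = ((a x * u x + b x : ℝ) : ℂ)) →
      ∀ x ∈ ball (0 : EuclideanSpace ℝ (Fin n)) (1/2),
        ∀ y ∈ ball (0 : EuclideanSpace ℝ (Fin n)) (1/2),
          u x ≤ C * (u y + Mb) := by
  obtain ⟨C, hC, harnack⟩ :=
    fractional_harnack_fourier_general (E := EuclideanSpace ℝ (Fin n)) hσ0 hσ1 Ma
  refine ⟨C, hC, fun u a b Mb hu hu0 hui hF _ _ ha hb heq =>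
    harnack u Mb hu hu0 hui hF ?_ fun x hx => ?_⟩
  · exact (abs_nonneg _).trans (hb 0 (mem_ball_self one_pos))
  · rw [heq x hx, Complex.norm_real]
    exact abs_mul_add_le (ha x hx) (hb x hx) (hu0 x)
end

section
/- Let n ≥ 2 and 0 < σ < 1. Let U : ℝⁿ × ℝ → ℝ be a nonnegative function of class C²(Q₁) ∩ C¹(Q̄₁) with ∫_{Q₁} t^{1−2σ}(U² + |∇U|²) dX < ∞, satisfying div(t^{1−2σ} ∇U(X)) = 0 pointwise in Q₁, and such that for every x ∈ B₁ the limit −lim_{t→0⁺} t^{1−2σ} ∂_t U(x,t) exists and equals a(x)U(x,0) + b(x), where a, b are bounded measurable functions on B₁. Then there exists C > 0 depending only on n, σ and ‖a‖_{L^∞(B₁)} such that sup_{Q̄_{1/2}} U ≤ C ( inf_{Q̄_{1/2}} U + ‖b‖_{L^∞(B₁)} ). -/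
open MeasureTheory Metric Set Real

noncomputable section

/-- Points of `ℝ^{n+1}` written as `X = (x, t)` with `x ∈ ℝⁿ`, `t ∈ ℝ`. -/
abbrev Pt (n : ℕ) := EuclideanSpace ℝ (Fin n) × ℝ

/-- The box `Q_R = B_R × (0, R) ⊂ ℝ^{n+1}`. -/
def Q (n : ℕ) (R : ℝ) : Set (Pt n) :=
  (ball (0 : EuclideanSpace ℝ (Fin n)) R) ×ˢ (Ioo (0 : ℝ) R)

/-- The Laplacian of `U : ℝ^{n+1} → ℝ` at `X`, as the sum of the pure second
directional derivatives along the standard orthonormal basis of `ℝⁿ × ℝ`. -/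
def lap (n : ℕ) (U : Pt n → ℝ) (X : Pt n) : ℝ :=
  (∑ i : Fin n, iteratedFDeriv ℝ 2 U X
      ![((EuclideanSpace.single i (1 : ℝ)), (0 : ℝ)),
        ((EuclideanSpace.single i (1 : ℝ)), (0 : ℝ))]) +
    iteratedFDeriv ℝ 2 U X
      ![((0 : EuclideanSpace ℝ (Fin n)), (1 : ℝ)),
        ((0 : EuclideanSpace ℝ (Fin n)), (1 : ℝ))]

/-!
Every estimate comes from comparison with an explicit barrier. Adding the bound `Mb` of `b` to `U`
turns the boundary condition into `|lim t ^ (1 - 2σ) ∂ₜV| ≤ M * V`, so that positive solutions may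
be compared with barriers up to the bottom `t = 0`. Gaussian barriers spread a lower bound from a
ball to the ball of twice the radius, and barriers over discs spread it down to the bottom or up
from it. Reflecting `V` in a hyperplane and comparing the difference with a barrier which vanishes
on that hyperplane bounds the horizontal oscillation of `V`, uniformly down to the bottom.

Let `P` maximise `(3/4 - ‖X‖) ^ γ * V X`. Then `V ≤ 2 ^ γ * V P` near `P`, at scale
`d = 3/4 - ‖P‖`, so the oscillation bound makes `V` comparable to `V P` on a horizontal disc of
radius proportional to `d`, hence on a ball above it. Chaining doubled balls spreads this lower
bound to the half cylinder with a loss `d ^ γ` if `γ` is large, which the weight of the maximum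
pays for.
-/

section Harnack

open Filter Topology
open scoped InnerProductSpace Laplacian

section SecondDerivative

/-- `g` is differentiable near `x`, with first derivative `p` and second derivative `d` at `x`. -/
def HasSecondDerivAt (g : ℝ → ℝ) (x p d : ℝ) : Prop :=
  ∃ g' : ℝ → ℝ, (∀ᶠ s in 𝓝 x, HasDerivAt g (g' s) s) ∧ g' x = p ∧ HasDerivAt g' d x

namespace HasSecondDerivAt

variable {f g φ : ℝ → ℝ} {x p d p₁ d₁ : ℝ}

lemma hasDerivAt (h : HasSecondDerivAt g x p d) : HasDerivAt g p x := by
  obtain ⟨g', hg, rfl, -⟩ := h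
  exact hg.self_of_nhds

lemma deriv_deriv (h : HasSecondDerivAt g x p d) : deriv (deriv g) x = d := by
  obtain ⟨g', hg, -, hg'⟩ := h
  have : deriv g =ᶠ[𝓝 x] g' := hg.mono fun s hs => hs.deriv
  rw [this.deriv_eq, hg'.deriv]

lemma congr_of_eventuallyEq (h : HasSecondDerivAt g x p d) (hfg : f =ᶠ[𝓝 x] g) :
    HasSecondDerivAt f x p d := by
  obtain ⟨g', hg, hp, hd⟩ := h
  refine ⟨g', ?_, hp, hd⟩
  filter_upwards [hg, hfg.eventuallyEq_nhds] with s hs hs'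
  exact hs.congr_of_eventuallyEq hs'

lemma congr_deriv (h : HasSecondDerivAt g x p d) (hp : p = p₁) (hd : d = d₁) :
    HasSecondDerivAt g x p₁ d₁ := hp ▸ hd ▸ h

lemma const (c x : ℝ) : HasSecondDerivAt (fun _ => c) x 0 0 :=
  ⟨fun _ => 0, .of_forall fun s => hasDerivAt_const s c, rfl, hasDerivAt_const x 0⟩

lemma sub_const (c x : ℝ) : HasSecondDerivAt (fun s => s - c) x 1 0 :=
  ⟨fun _ => 1, .of_forall fun s => (hasDerivAt_id s).sub_const c, rfl, hasDerivAt_const x 1⟩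

lemma exp (x : ℝ) : HasSecondDerivAt Real.exp x (Real.exp x) (Real.exp x) :=
  ⟨Real.exp, .of_forall Real.hasDerivAt_exp, rfl, Real.hasDerivAt_exp x⟩

lemma rpow (hx : 0 < x) (r : ℝ) :
    HasSecondDerivAt (fun s => s ^ r) x (r * x ^ (r - 1)) (r * ((r - 1) * x ^ (r - 2))) := by
  refine ⟨fun s => r * s ^ (r - 1), ?_, rfl, ?_⟩
  · filter_upwards [lt_mem_nhds hx] with s hs
    exact Real.hasDerivAt_rpow_const (.inl hs.ne')
  · have := (Real.hasDerivAt_rpow_const (p := r - 1) (.inl hx.ne')).const_mul r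
    rwa [show r - 1 - 1 = r - 2 by ring] at this

lemma add (hf : HasSecondDerivAt f x p d) (hg : HasSecondDerivAt g x p₁ d₁) :
    HasSecondDerivAt (fun s => f s + g s) x (p + p₁) (d + d₁) := by
  obtain ⟨f', hf, rfl, hf'⟩ := hf
  obtain ⟨g', hg, rfl, hg'⟩ := hg
  refine ⟨fun s => f' s + g' s, ?_, rfl, hf'.add hg'⟩
  filter_upwards [hf, hg] with s hfs hgs using hfs.add hgs

lemma mul (hf : HasSecondDerivAt f x p d) (hg : HasSecondDerivAt g x p₁ d₁) :
    HasSecondDerivAt (fun s => f s * g s) x (p * g x + f x * p₁)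
      (d * g x + 2 * p * p₁ + f x * d₁) := by
  have hfx := hf.hasDerivAt
  have hgx := hg.hasDerivAt
  obtain ⟨f', hf, rfl, hf'⟩ := hf
  obtain ⟨g', hg, rfl, hg'⟩ := hg
  refine ⟨fun s => f' s * g s + f s * g' s, ?_, rfl,
    ((hf'.mul hgx).add (hfx.mul hg')).congr_deriv (by ring)⟩
  filter_upwards [hf, hg] with s hfs hgs using hfs.mul hgs

lemma const_mul (c : ℝ) (hf : HasSecondDerivAt f x p d) :
    HasSecondDerivAt (fun s => c * f s) x (c * p) (c * d) :=
  ((const c x).mul hf).congr_deriv (by ring) (by ring)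

lemma sub_const_sq (c x : ℝ) : HasSecondDerivAt (fun s => (s - c) ^ 2) x (2 * (x - c)) 2 := by
  simp only [pow_two]
  exact ((sub_const c x).mul (sub_const c x)).congr_deriv (by ring) (by ring)

lemma sq (x : ℝ) : HasSecondDerivAt (fun s => s ^ 2) x (2 * x) 2 := by
  simpa only [sub_zero] using sub_const_sq 0 x

lemma sub_const_div (c a x : ℝ) : HasSecondDerivAt (fun s => (s - c) / a) x a⁻¹ 0 := by
  simp only [div_eq_inv_mul]
  exact ((sub_const c x).const_mul a⁻¹).congr_deriv (mul_one _) (mul_zero _)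

lemma comp (hφ : HasSecondDerivAt φ (g x) p₁ d₁) (hg : HasSecondDerivAt g x p d) :
    HasSecondDerivAt (fun s => φ (g s)) x (p₁ * p) (d₁ * p ^ 2 + p₁ * d) := by
  have hcont := hg.hasDerivAt.continuousAt
  obtain ⟨φ', hφ, rfl, hφ'⟩ := hφ
  obtain ⟨g', hg, rfl, hg'⟩ := hg
  refine ⟨fun s => φ' (g s) * g' s, ?_, rfl, ?_⟩
  · filter_upwards [hcont.eventually hφ, hg] with s hφs hgs using hφs.comp s hgs
  · refine ((hφ'.comp x hg.self_of_nhds).mul hg').congr_deriv ?_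
    simp only [Function.comp_apply]
    ring

lemma of_isLocalMax (h : HasSecondDerivAt g x p d) (hmax : IsLocalMax g x) : p = 0 ∧ d ≤ 0 := by
  have hp : p = 0 := hmax.hasDerivAt_eq_zero h.hasDerivAt
  refine ⟨hp, ?_⟩
  by_contra! hd
  have hmin : IsLocalMin g x := isLocalMin_of_deriv_deriv_pos (h.deriv_deriv ▸ hd)
    (h.hasDerivAt.deriv.trans hp) h.hasDerivAt.continuousAt
  have hconst : g =ᶠ[𝓝 x] fun _ => g x := by
    filter_upwards [hmin, hmax] with s hs hs' using le_antisymm hs' hs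
  have hd0 := ((const (g x) x).congr_of_eventuallyEq hconst).deriv_deriv
  exact hd.ne (hd0.symm.trans h.deriv_deriv)

end HasSecondDerivAt

lemma hasSecondDerivAt_line {F : Type*} [NormedAddCommGroup F] [NormedSpace ℝ F]
    {f : F → ℝ} {P v : F} {s : ℝ} (hf : ContDiffAt ℝ 2 f (P + s • v)) :
    HasSecondDerivAt (fun τ : ℝ => f (P + τ • v)) s (fderiv ℝ f (P + s • v) v)
      (iteratedFDeriv ℝ 2 f (P + s • v) ![v, v]) := by
  have hline (τ : ℝ) : HasDerivAt (fun τ : ℝ => P + τ • v) v τ := by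
    simpa using ((hasDerivAt_id τ).smul_const v).const_add P
  have hdiff : ∀ᶠ Y in 𝓝 (P + s • v), DifferentiableAt ℝ f Y :=
    (hf.eventually (by simp)).mono fun Y hY => hY.differentiableAt two_ne_zero
  refine ⟨fun τ => fderiv ℝ f (P + τ • v) v, ?_, rfl, ?_⟩
  · filter_upwards [(hline s).continuousAt.eventually hdiff] with τ hτ
    exact hτ.hasFDerivAt.comp_hasDerivAt τ (hline τ)
  · have hfderiv : DifferentiableAt ℝ (fderiv ℝ f) (P + s • v) :=
      (hf.fderiv_right (m := 1) (by norm_num)).differentiableAt one_ne_zero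
    have hcomp : HasDerivAt (fun τ => fderiv ℝ f (P + τ • v))
        (fderiv ℝ (fderiv ℝ f) (P + s • v) v) s :=
      hfderiv.hasFDerivAt.comp_hasDerivAt s (hline s)
    simpa [iteratedFDeriv_two_apply] using hcomp.clm_apply (hasDerivAt_const s v)

end SecondDerivative

section Laplacian

open Module (finrank)

variable {E : Type*} [NormedAddCommGroup E] [InnerProductSpace ℝ E] [FiniteDimensional ℝ E]

lemma laplacian_eq_sum_of_hasSecondDerivAt {ι : Type*} [Fintype ι] (b : OrthonormalBasis ι ℝ E)
    {f : E → ℝ} {x : E} (hf : ContDiffAt ℝ 2 f x) {p d : ι → ℝ}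
    (h : ∀ i, HasSecondDerivAt (fun s : ℝ => f (x + s • b i)) 0 (p i) (d i)) :
    Δ f x = ∑ i, d i := by
  rw [InnerProductSpace.laplacian_eq_iteratedFDeriv_orthonormalBasis f b]
  refine Finset.sum_congr rfl fun i _ => ?_
  have hi := hasSecondDerivAt_line (P := x) (v := b i) (s := 0) (by simpa using hf)
  simpa only [zero_smul, add_zero] using hi.deriv_deriv.symm.trans (h i).deriv_deriv

lemma laplacian_comp_norm_sub_sq {ψ : ℝ → ℝ} {p q : ℝ} (x y : E)
    (hψ : ContDiffAt ℝ 2 ψ (‖x - y‖ ^ 2)) (h : HasSecondDerivAt ψ (‖x - y‖ ^ 2) p q) :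
    Δ (fun z => ψ (‖z - y‖ ^ 2)) x = 4 * ‖x - y‖ ^ 2 * q + 2 * finrank ℝ E * p := by
  let b := stdOrthonormalBasis ℝ E
  have hslice (i) : HasSecondDerivAt (fun s : ℝ => ‖x + s • b i - y‖ ^ 2) 0
      (2 * ⟪x - y, b i⟫_ℝ) 2 := by
    have hexpand (s : ℝ) : ‖x + s • b i - y‖ ^ 2 =
        (s - (-⟪x - y, b i⟫_ℝ)) ^ 2 + (‖x - y‖ ^ 2 - ⟪x - y, b i⟫_ℝ ^ 2) := by
      rw [add_sub_right_comm, norm_add_sq_real, inner_smul_right, norm_smul, b.norm_eq_one,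
        mul_one, Real.norm_eq_abs, sq_abs]
      ring
    rw [funext hexpand]
    exact ((HasSecondDerivAt.sub_const_sq _ 0).add (.const _ 0)).congr_deriv (by ring) (by ring)
  have hsmooth : ContDiffAt ℝ 2 (fun z => ψ (‖z - y‖ ^ 2)) x :=
    hψ.comp x ((contDiff_id.sub contDiff_const).norm_sq ℝ).contDiffAt
  rw [laplacian_eq_sum_of_hasSecondDerivAt b hsmooth fun i =>
    HasSecondDerivAt.comp (by simpa only [zero_smul, add_zero] using h) (hslice i)]
  have hparseval : ∑ i, ⟪x - y, b i⟫_ℝ ^ 2 = ‖x - y‖ ^ 2 := b.sum_sq_inner_left (x - y)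
  simp only [mul_pow, Finset.sum_add_distrib, ← Finset.mul_sum, hparseval, Finset.sum_const,
    Finset.card_univ, Fintype.card_fin, nsmul_eq_mul]
  ring

lemma laplacian_comp_inner {ψ : ℝ → ℝ} {p q : ℝ} (e x : E) (hψ : ContDiffAt ℝ 2 ψ ⟪e, x⟫_ℝ)
    (h : HasSecondDerivAt ψ ⟪e, x⟫_ℝ p q) : Δ (fun z => ψ ⟪e, z⟫_ℝ) x = q * ‖e‖ ^ 2 := by
  let b := stdOrthonormalBasis ℝ E
  have hslice (i) : HasSecondDerivAt (fun s : ℝ => ⟪e, x + s • b i⟫_ℝ) 0 ⟪e, b i⟫_ℝ 0 := by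
    simp only [inner_add_right, inner_smul_right, mul_comm _ ⟪e, b i⟫_ℝ]
    simpa only [sub_zero, zero_add, mul_one, mul_zero] using
      (HasSecondDerivAt.const ⟪e, x⟫_ℝ 0).add
        ((HasSecondDerivAt.sub_const 0 0).const_mul ⟪e, b i⟫_ℝ)
  have hsmooth : ContDiffAt ℝ 2 (fun z => ψ ⟪e, z⟫_ℝ) x :=
    hψ.comp x (contDiff_const.inner ℝ contDiff_id).contDiffAt
  rw [laplacian_eq_sum_of_hasSecondDerivAt b hsmooth fun i =>
    HasSecondDerivAt.comp (by simpa only [zero_smul, add_zero] using h) (hslice i)]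
  simp only [mul_zero, add_zero, ← Finset.mul_sum, b.sum_sq_inner_left]

lemma laplacian_comp_affineIsometryEquiv (R : E ≃ᵃⁱ[ℝ] E) {f : E → ℝ} {x : E}
    (hf : ContDiffAt ℝ 2 f (R x)) : Δ (fun z => f (R z)) x = Δ f (R x) := by
  let b := stdOrthonormalBasis ℝ E
  have hslice (i) : HasSecondDerivAt (fun s : ℝ => f (R (x + s • b i))) 0
      (fderiv ℝ f (R x) (R.linearIsometryEquiv (b i)))
      (iteratedFDeriv ℝ 2 f (R x) ![R.linearIsometryEquiv (b i), R.linearIsometryEquiv (b i)]) := by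
    have hline (s : ℝ) : R (x + s • b i) = R x + s • R.linearIsometryEquiv (b i) := by
      rw [add_comm x, ← vadd_eq_add, R.map_vadd, map_smul, vadd_eq_add, add_comm]
    simp only [hline]
    simpa only [zero_smul, add_zero] using hasSecondDerivAt_line (P := R x)
      (v := R.linearIsometryEquiv (b i)) (s := 0) (by simpa using hf)
  have hsmooth : ContDiffAt ℝ 2 (fun z => f (R z)) x :=
    hf.comp x R.toAffineIsometry.toContinuousAffineMap.contDiff.contDiffAt
  rw [laplacian_eq_sum_of_hasSecondDerivAt b hsmooth hslice,
    InnerProductSpace.laplacian_eq_iteratedFDeriv_orthonormalBasis f (b.map R.linearIsometryEquiv)]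
  simp only [OrthonormalBasis.map_apply]

lemma laplacian_nonpos_of_isLocalMax {f : E → ℝ} {x : E} (hmax : IsLocalMax f x)
    (hf : ContDiffAt ℝ 2 f x) : Δ f x ≤ 0 := by
  let b := stdOrthonormalBasis ℝ E
  rw [InnerProductSpace.laplacian_eq_iteratedFDeriv_orthonormalBasis f b]
  refine Finset.sum_nonpos fun i _ => ?_
  have hslice := hasSecondDerivAt_line (P := x) (v := b i) (s := 0) (by simpa using hf)
  have hline : Tendsto (fun s : ℝ => x + s • b i) (𝓝 0) (𝓝 x) := by
    have : Continuous fun s : ℝ => x + s • b i := by fun_prop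
    simpa using this.tendsto 0
  have hslice_max : IsLocalMax (fun s : ℝ => f (x + s • b i)) 0 := by
    simpa only [IsLocalMax, IsMaxFilter, zero_smul, add_zero] using hline.eventually hmax
  simpa only [zero_smul, add_zero] using (hslice.of_isLocalMax hslice_max).2

end Laplacian

section Operators

variable {E : Type*} [NormedAddCommGroup E] [InnerProductSpace ℝ E] [FiniteDimensional ℝ E]

/-- The operator `L = Δ + (1 - 2σ) / t ∂ₜ`, which is `t ^ (2σ - 1) div (t ^ (1 - 2σ) ∇ ·)`, takes
the value `ℓ` on `F` at `X = (x, t)`. Only the slices of `F` through `X` in `x` and in `t` need be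
twice differentiable. -/
def HasExtOpAt (σ : ℝ) (F : E × ℝ → ℝ) (X : E × ℝ) (ℓ : ℝ) : Prop :=
  ContDiffAt ℝ 2 (fun x => F (x, X.2)) X.1 ∧ ∃ p q : ℝ,
    HasSecondDerivAt (fun t => F (X.1, t)) X.2 p q ∧
    ℓ = Δ (fun x => F (x, X.2)) X.1 + q + (1 - 2 * σ) / X.2 * p

variable {σ k ℓ : ℝ} {F G : E × ℝ → ℝ} {X : E × ℝ}

namespace HasExtOpAt

lemma congr_val (hF : HasExtOpAt σ F X k) (h : k = ℓ) : HasExtOpAt σ F X ℓ := h ▸ hF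

lemma of_height {ψ : ℝ → ℝ} {p q : ℝ} (h : HasSecondDerivAt ψ X.2 p q) :
    HasExtOpAt σ (fun Y => ψ Y.2) X (q + (1 - 2 * σ) / X.2 * p) :=
  ⟨contDiffAt_const (c := ψ X.2), p, q, h, by simp⟩

lemma of_horizontal {f : E → ℝ} (hf : ContDiffAt ℝ 2 f X.1) :
    HasExtOpAt σ (fun Y => f Y.1) X (Δ f X.1) :=
  ⟨hf, 0, 0, .const (f X.1) X.2, by simp⟩

lemma const (c : ℝ) : HasExtOpAt σ (fun _ => c) X 0 :=
  (of_height (.const c X.2)).congr_val (by ring)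

lemma add (hF : HasExtOpAt σ F X k) (hG : HasExtOpAt σ G X ℓ) :
    HasExtOpAt σ (fun Y => F Y + G Y) X (k + ℓ) := by
  obtain ⟨hFx, p, q, hFt, rfl⟩ := hF
  obtain ⟨hGx, p', q', hGt, rfl⟩ := hG
  refine ⟨hFx.add hGx, p + p', q + q', hFt.add hGt, ?_⟩
  have := hFx.laplacian_add hGx
  simp only [Pi.add_def] at this
  rw [this]
  ring

lemma const_mul (c : ℝ) (hF : HasExtOpAt σ F X k) :
    HasExtOpAt σ (fun Y => c * F Y) X (c * k) := by
  obtain ⟨hFx, p, q, hFt, rfl⟩ := hF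
  refine ⟨contDiffAt_const.mul hFx, c * p, c * q, hFt.const_mul c, ?_⟩
  have := InnerProductSpace.laplacian_smul c hFx
  simp only [Pi.smul_def, smul_eq_mul] at this
  rw [this]
  ring

lemma sub (hF : HasExtOpAt σ F X k) (hG : HasExtOpAt σ G X ℓ) :
    HasExtOpAt σ (fun Y => F Y - G Y) X (k - ℓ) := by
  simpa only [neg_one_mul, ← sub_eq_add_neg] using hF.add (hG.const_mul (-1))

lemma norm_sub_sq (y : E) :
    HasExtOpAt σ (fun Y : E × ℝ => ‖Y.1 - y‖ ^ 2) X (2 * Module.finrank ℝ E) := by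
  refine (of_horizontal (f := fun x => ‖x - y‖ ^ 2)
    ((contDiff_id.sub contDiff_const).norm_sq ℝ).contDiffAt).congr_val ?_
  rw [laplacian_comp_norm_sub_sq (ψ := fun u => u) X.1 y contDiffAt_id
    (by simpa only [sub_zero] using HasSecondDerivAt.sub_const 0 _)]
  ring

lemma height_sq (hX : 0 < X.2) : HasExtOpAt σ (fun Y => Y.2 ^ 2) X (2 * (2 - 2 * σ)) :=
  (of_height (.sq X.2)).congr_val (by field_simp; ring)

lemma height_rpow (hX : 0 < X.2) : HasExtOpAt σ (fun Y => Y.2 ^ (2 * σ)) X 0 := by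
  refine (of_height (.rpow hX (2 * σ))).congr_val ?_
  rw [Real.rpow_sub hX, Real.rpow_sub hX, Real.rpow_one, Real.rpow_two]
  field_simp
  ring

lemma comp_affineIsometryEquiv (R : E ≃ᵃⁱ[ℝ] E) (h : HasExtOpAt σ F (R X.1, X.2) ℓ) :
    HasExtOpAt σ (fun Y => F (R Y.1, Y.2)) X ℓ := by
  obtain ⟨hx, p, q, ht, rfl⟩ := h
  exact ⟨hx.comp X.1 R.toAffineIsometry.toContinuousAffineMap.contDiff.contDiffAt, p, q, ht,
    by rw [laplacian_comp_affineIsometryEquiv R hx]⟩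

lemma nonpos_of_isLocalMax (h : HasExtOpAt σ F X k) (hmax : IsLocalMax F X) : k ≤ 0 := by
  obtain ⟨hx, p, q, ht, rfl⟩ := h
  have hmaxx : IsLocalMax (fun x => F (x, X.2)) X.1 :=
    (Continuous.prodMk_left X.2).continuousAt.tendsto.eventually hmax
  have hmaxt : IsLocalMax (fun t => F (X.1, t)) X.2 :=
    (Continuous.prodMk_right X.1).continuousAt.tendsto.eventually hmax
  obtain ⟨rfl, hq⟩ := ht.of_isLocalMax hmaxt
  linarith [laplacian_nonpos_of_isLocalMax hmaxx hx]

end HasExtOpAt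

end Operators

section Flux

/-- The weighted vertical derivative `t ^ (1 - 2σ) ∂ₜF(x, t)` tends to `ℓ` as `t → 0⁺`. -/
def HasFluxAt {E : Type*} (σ : ℝ) (F : E × ℝ → ℝ) (x : E) (ℓ : ℝ) : Prop :=
  ∃ p : ℝ → ℝ, (∀ᶠ t in 𝓝[>] (0 : ℝ), HasDerivAt (fun s => F (x, s)) (p t) t) ∧
    Tendsto (fun t => t ^ (1 - 2 * σ) * p t) (𝓝[>] 0) (𝓝 ℓ)

lemma tendsto_rpow_nhdsGT_zero {r : ℝ} (hr : 0 < r) :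
    Tendsto (fun t : ℝ => t ^ r) (𝓝[>] 0) (𝓝 0) := by
  have := (continuous_id.rpow_const fun _ => .inr hr.le).tendsto (0 : ℝ)
  simpa only [id, Real.zero_rpow hr.ne'] using this.mono_left nhdsWithin_le_nhds

namespace HasFluxAt

variable {E : Type*} {σ k ℓ : ℝ} {F G : E × ℝ → ℝ} {x : E}

lemma congr_val (hF : HasFluxAt σ F x k) (h : k = ℓ) : HasFluxAt σ F x ℓ := h ▸ hF

lemma add (hF : HasFluxAt σ F x k) (hG : HasFluxAt σ G x ℓ) :
    HasFluxAt σ (fun Y => F Y + G Y) x (k + ℓ) := by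
  obtain ⟨p, hF, hp⟩ := hF
  obtain ⟨q, hG, hq⟩ := hG
  refine ⟨fun t => p t + q t, ?_, by simpa only [mul_add] using hp.add hq⟩
  filter_upwards [hF, hG] with t hFt hGt using hFt.add hGt

lemma const_mul (c : ℝ) (hF : HasFluxAt σ F x k) : HasFluxAt σ (fun Y => c * F Y) x (c * k) := by
  obtain ⟨p, hF, hp⟩ := hF
  refine ⟨fun t => c * p t, ?_, by simpa only [mul_left_comm] using hp.const_mul c⟩
  filter_upwards [hF] with t hFt using hFt.const_mul c

lemma sub (hF : HasFluxAt σ F x k) (hG : HasFluxAt σ G x ℓ) :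
    HasFluxAt σ (fun Y => F Y - G Y) x (k - ℓ) := by
  simpa only [neg_one_mul, ← sub_eq_add_neg] using hF.add (hG.const_mul (-1))

lemma of_horizontal (f : E → ℝ) : HasFluxAt σ (fun Y => f Y.1) x 0 :=
  ⟨fun _ => 0, .of_forall fun t => hasDerivAt_const t (f x), by simp⟩

lemma of_height {ψ p : ℝ → ℝ} (hψ : ∀ t > 0, HasDerivAt ψ (p t) t)
    (hp : Tendsto (fun t => t ^ (1 - 2 * σ) * p t) (𝓝[>] 0) (𝓝 ℓ)) :
    HasFluxAt σ (fun Y => ψ Y.2) x ℓ :=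
  ⟨p, by filter_upwards [self_mem_nhdsWithin] with t ht using hψ t ht, hp⟩

lemma comp_height_sq {ψ : ℝ → ℝ} (hψ : ContDiff ℝ 1 ψ) (hσ1 : σ < 1) :
    HasFluxAt σ (fun Y : E × ℝ => ψ (Y.2 ^ 2)) x 0 := by
  refine .of_height (ψ := fun t => ψ (t ^ 2)) (p := fun t => deriv ψ (t ^ 2) * (2 * t))
    (fun t _ => ?_) ?_
  · exact (hψ.differentiable one_ne_zero _).hasDerivAt.comp t (by simpa using hasDerivAt_pow 2 t)
  have hderiv : Tendsto (fun t : ℝ => deriv ψ (t ^ 2)) (𝓝[>] 0) (𝓝 (deriv ψ (0 ^ 2))) :=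
    ((hψ.continuous_deriv le_rfl).comp (continuous_pow 2)).continuousAt.tendsto.mono_left
      nhdsWithin_le_nhds
  have := ((tendsto_rpow_nhdsGT_zero (show 0 < 2 - 2 * σ by linarith)).const_mul 2).mul hderiv
  rw [mul_zero, zero_mul] at this
  refine this.congr' ?_
  filter_upwards [self_mem_nhdsWithin] with t (ht : 0 < t)
  rw [show 2 - 2 * σ = (1 - 2 * σ) + 1 by ring, Real.rpow_add_one ht.ne']
  ring

lemma height_rpow : HasFluxAt σ (fun Y : E × ℝ => Y.2 ^ (2 * σ)) x (2 * σ) := by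
  refine .of_height (ψ := fun t => t ^ (2 * σ))
    (fun t ht => Real.hasDerivAt_rpow_const (.inl ht.ne')) (tendsto_const_nhds.congr' ?_)
  filter_upwards [self_mem_nhdsWithin] with t (ht : 0 < t)
  have hcancel : t ^ (1 - 2 * σ) * t ^ (2 * σ - 1) = 1 := by
    rw [← Real.rpow_add ht, sub_add_sub_cancel', sub_self, Real.rpow_zero]
  linear_combination (-2 * σ) * hcancel

lemma nonpos_of_eventually_le (h : HasFluxAt σ F x k)
    (hcont : ContinuousWithinAt (fun t : ℝ => F (x, t)) (Ioi 0) 0)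
    (hle : ∀ᶠ t in 𝓝[>] (0 : ℝ), F (x, t) ≤ F (x, 0)) : k ≤ 0 := by
  by_contra! hk
  obtain ⟨p, hF, hp⟩ := h
  have hgood := hF.and ((hp.eventually (lt_mem_nhds hk)).and hle)
  obtain ⟨δ, hδ : 0 < δ, hsub⟩ := mem_nhdsGT_iff_exists_Ioo_subset.1 hgood
  have hIcc : ContinuousOn (fun t : ℝ => F (x, t)) (Icc 0 (δ / 2)) := by
    rintro t ⟨ht0, htδ⟩
    rcases ht0.eq_or_lt with rfl | ht0
    · exact (continuousWithinAt_insert_self.2 hcont).mono (Ioi_insert (a := (0 : ℝ)) ▸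
        Icc_subset_Ici_self)
    · exact (hsub ⟨ht0, by linarith⟩).1.continuousAt.continuousWithinAt
  have hmono : StrictMonoOn (fun t : ℝ => F (x, t)) (Icc 0 (δ / 2)) := by
    refine strictMonoOn_of_deriv_pos (convex_Icc _ _) hIcc fun t ht => ?_
    rw [interior_Icc] at ht
    obtain ⟨hFt, hpt, -⟩ := hsub ⟨ht.1, by linarith [ht.2]⟩
    rw [hFt.deriv]
    exact pos_of_mul_pos_right hpt (Real.rpow_nonneg ht.1.le _)
  have hlt := hmono (left_mem_Icc.2 (by linarith)) (right_mem_Icc.2 (by linarith)) (half_pos hδ)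
  exact hlt.not_ge (hsub ⟨half_pos hδ, half_lt_self hδ⟩).2.2

end HasFluxAt

end Flux

section Comparison

variable {E : Type*} [NormedAddCommGroup E] [InnerProductSpace ℝ E] [FiniteDimensional ℝ E]
  {σ : ℝ} {K : Set (E × ℝ)}

lemma nonpos_of_strict_subsolution {F : E × ℝ → ℝ} (hK : IsCompact K) (hF : ContinuousOn F K)
    (h : ∀ X ∈ K, 0 < F X → (X ∈ interior K ∧ ∃ ℓ > 0, HasExtOpAt σ F X ℓ) ∨
      (X.2 = 0 ∧ (∀ᶠ t in 𝓝[>] (0 : ℝ), (X.1, t) ∈ K) ∧ ∃ ℓ > 0, HasFluxAt σ F X.1 ℓ)) :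
    ∀ X ∈ K, F X ≤ 0 := by
  intro X hX
  by_contra! hpos
  obtain ⟨⟨z, s⟩, hZ, hmax⟩ := hK.exists_isMaxOn ⟨X, hX⟩ hF
  rcases h (z, s) hZ (hpos.trans_le (hmax hX)) with
    ⟨hint, ℓ, hℓ, hop⟩ | ⟨rfl : s = 0, hmem, ℓ, hℓ, hflux⟩
  · exact hℓ.not_ge (hop.nonpos_of_isLocalMax (hmax.isLocalMax (mem_interior_iff_mem_nhds.1 hint)))
  · have hvert : Tendsto (fun t : ℝ => (z, t)) (𝓝[>] 0) (𝓝[K] (z, 0)) :=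
      tendsto_nhdsWithin_iff.2 ⟨((Continuous.prodMk_right z).tendsto 0).mono_left
        nhdsWithin_le_nhds, hmem⟩
    exact hℓ.not_ge (hflux.nonpos_of_eventually_le ((hF _ hZ).tendsto.comp hvert)
      (hmem.mono fun t ht => hmax ht))

/-- A continuous nonnegative function on `K` which solves `L V = 0` in the interior of `K`. -/
structure IsNonnegSolutionOn (σ : ℝ) (V : E × ℝ → ℝ) (K : Set (E × ℝ)) : Prop where
  nonneg : ∀ X ∈ K, 0 ≤ V X
  continuousOn : ContinuousOn V K
  hasExtOpAt : ∀ X ∈ interior K, HasExtOpAt σ V X 0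

namespace IsNonnegSolutionOn

variable {V : E × ℝ → ℝ}

lemma mono (hV : IsNonnegSolutionOn σ V K) {K' : Set (E × ℝ)} (h : K' ⊆ K) :
    IsNonnegSolutionOn σ V K' where
  nonneg X hX := hV.nonneg X (h hX)
  continuousOn := hV.continuousOn.mono h
  hasExtOpAt X hX := hV.hasExtOpAt X (interior_mono h hX)

lemma le_of_barrier (hV : IsNonnegSolutionOn σ V K) (hK : IsCompact K) {b : E × ℝ → ℝ} {q : ℝ}
    (hq : 0 ≤ q) (hb : ContinuousOn b K)
    (h : ∀ X ∈ K, 0 < b X → V X < q * b X →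
      (X ∈ interior K ∧ ∃ ℓ > 0, HasExtOpAt σ b X ℓ) ∨
      (X.2 = 0 ∧ (∀ᶠ t in 𝓝[>] (0 : ℝ), (X.1, t) ∈ K) ∧
        ∃ k ℓ, HasFluxAt σ b X.1 k ∧ HasFluxAt σ V X.1 ℓ ∧ ℓ < q * k)) :
    ∀ X ∈ K, q * b X ≤ V X := by
  have hcomp := nonpos_of_strict_subsolution (σ := σ) (F := fun X => q * b X - V X) hK
    ((continuousOn_const.mul hb).sub hV.continuousOn) fun X hX hpos => ?_
  · exact fun X hX => sub_nonpos.1 (hcomp X hX)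
  have hlt : V X < q * b X := sub_pos.1 hpos
  have hqb : 0 < q * b X := (hV.nonneg X hX).trans_lt hlt
  have hbX : 0 < b X := pos_of_mul_pos_right hqb hq
  rcases h X hX hbX hlt with ⟨hint, ℓ, hℓ, hop⟩ | ⟨h0, hmem, k, ℓ, hk, hℓ, hlt⟩
  · have hq0 : 0 < q := pos_of_mul_pos_left hqb hbX.le
    exact .inl ⟨hint, q * ℓ - 0, by simpa using mul_pos hq0 hℓ,
      (hop.const_mul q).sub (hV.hasExtOpAt X hint)⟩
  · exact .inr ⟨h0, hmem, _, sub_pos.2 hlt, (hk.const_mul q).sub hℓ⟩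

end IsNonnegSolutionOn

/-- A nonnegative solution of `L V = 0` in the cylinder of radius `r` and height `h` over `p`, whose
weighted vertical derivative on the bottom is bounded by `M` times the function. -/
structure IsRobinSolution (σ M : ℝ) (V : E × ℝ → ℝ) (p : E) (r h : ℝ) : Prop extends
    IsNonnegSolutionOn σ V (closedBall p r ×ˢ Icc 0 h) where
  hasFluxAt : ∀ x ∈ ball p r, ∃ ℓ, |ℓ| ≤ M * V (x, 0) ∧ HasFluxAt σ V x ℓ

lemma IsRobinSolution.mono {M : ℝ} {V : E × ℝ → ℝ} {p p' : E} {r r' h h' : ℝ}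
    (hV : IsRobinSolution σ M V p r h) (hr : r' + dist p' p ≤ r) (hh : h' ≤ h) :
    IsRobinSolution σ M V p' r' h' where
  toIsNonnegSolutionOn := hV.toIsNonnegSolutionOn.mono
    (prod_mono (closedBall_subset_closedBall' hr) (Icc_subset_Icc_right hh))
  hasFluxAt x hx := hV.hasFluxAt x (ball_subset_ball' hr hx)

end Comparison

section Barriers

variable {E : Type*} [NormedAddCommGroup E] {σ M : ℝ} {V : E × ℝ → ℝ}

/-- The square of the Euclidean distance between points of `E × ℝ`, which itself carries the
maximum norm. -/
def sqDist (P Y : E × ℝ) : ℝ := ‖Y.1 - P.1‖ ^ 2 + (Y.2 - P.2) ^ 2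

lemma sq_dist_le_sqDist (P Y : E × ℝ) : dist Y P ^ 2 ≤ sqDist P Y := by
  rw [Prod.dist_eq, dist_eq_norm, Real.dist_eq, sqDist, ← sq_abs (Y.2 - P.2)]
  rcases max_choice ‖Y.1 - P.1‖ |Y.2 - P.2| with h | h <;> rw [h] <;> nlinarith

lemma sqDist_le_two_mul_sq_dist (P Y : E × ℝ) : sqDist P Y ≤ 2 * dist Y P ^ 2 := by
  rw [Prod.dist_eq, dist_eq_norm, Real.dist_eq, sqDist, ← sq_abs (Y.2 - P.2), two_mul]
  gcongr
  exacts [le_max_left _ _, le_max_right _ _]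

@[fun_prop]
lemma continuous_sqDist (P : E × ℝ) : Continuous (sqDist P) := by
  unfold sqDist
  fun_prop

/-- The factor lost when positivity spreads from a ball to the ball of twice the radius. -/
def doublingConst (d : ℕ) : ℝ := Real.exp (-8 * (d + 3)) - Real.exp (-9 * (d + 3))

lemma doublingConst_pos (d : ℕ) : 0 < doublingConst d :=
  sub_pos.2 (Real.exp_lt_exp.2 (by nlinarith [d.cast_nonneg (α := ℝ)]))

lemma doublingConst_le_gaussian_sub (d : ℕ) {P X : E × ℝ} {s : ℝ} (hs : 0 < s)
    (hX : X ∈ closedBall P (2 * s)) :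
    doublingConst d ≤
      Real.exp (-((d + 3) / s ^ 2) * sqDist P X) - Real.exp (-9 * (d + 3)) := by
  have hsq : sqDist P X ≤ 8 * s ^ 2 := by
    nlinarith [sqDist_le_two_mul_sq_dist P X, mem_closedBall.1 hX, dist_nonneg (x := X) (y := P)]
  have hscale : -((d + 3) / s ^ 2) * (8 * s ^ 2) = -8 * ((d : ℝ) + 3) := by field_simp
  refine sub_le_sub_right (Real.exp_le_exp.2 ?_) _
  rw [← hscale]
  exact mul_le_mul_of_nonpos_left hsq (neg_nonpos.2 (by positivity))

lemma mem_interior_cylinder {p : E} {r a b : ℝ} {X : E × ℝ} (hx : ‖X.1 - p‖ < r) (ha : a < X.2)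
    (hb : X.2 < b) : X ∈ interior (closedBall p r ×ˢ Icc a b) := by
  rw [interior_prod_eq, interior_Icc]
  exact ⟨ball_subset_interior_closedBall (mem_ball_iff_norm.2 hx), ha, hb⟩

open Module (finrank)

variable [InnerProductSpace ℝ E]

/-- A barrier over the disc of radius `ρ` about `y`: `L` of it is `2 / ρ ^ 2`, and its flux `M / 4`
beats the Robin condition where it is at most `1 / 4`. -/
def bottomBarrier (σ M ρ : ℝ) (y : E) (Y : E × ℝ) : ℝ :=
  1 / 4 + M / (8 * σ) * Y.2 ^ (2 * σ) +
    (ρ ^ 2)⁻¹ * ((finrank ℝ E + 1) / (2 - 2 * σ) * Y.2 ^ 2 - ‖Y.1 - y‖ ^ 2)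

lemma continuous_bottomBarrier (hσ0 : 0 < σ) (ρ : ℝ) (y : E) :
    Continuous (bottomBarrier σ M ρ y) := by
  have : Continuous fun Y : E × ℝ => Y.2 ^ (2 * σ) :=
    continuous_snd.rpow_const fun _ => .inr (by positivity)
  unfold bottomBarrier
  fun_prop

lemma HasFluxAt.bottomBarrier (hσ0 : 0 < σ) (hσ1 : σ < 1) (ρ : ℝ) (y x : E) :
    HasFluxAt σ (bottomBarrier σ M ρ y) x (M / 4) := by
  refine (((HasFluxAt.of_horizontal fun _ => 1 / 4).add (HasFluxAt.height_rpow.const_mul _)).add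
    ((((HasFluxAt.comp_height_sq contDiff_id hσ1).const_mul _).sub
      (.of_horizontal fun z => ‖z - y‖ ^ 2)).const_mul _)).congr_val ?_
  field_simp
  ring

lemma bottomBarrier_zero_le (hσ0 : 0 < σ) (ρ : ℝ) (y x : E) :
    bottomBarrier σ M ρ y (x, 0) ≤ 1 / 4 := by
  simp only [bottomBarrier, Real.zero_rpow (by positivity : 2 * σ ≠ 0)]
  linarith [show 0 ≤ (ρ ^ 2)⁻¹ * ‖x - y‖ ^ 2 by positivity]

lemma le_bottomBarrier_self {t : ℝ} (hσ0 : 0 < σ) (hσ1 : σ < 1) (hM : 0 ≤ M) (ht : 0 ≤ t) (ρ : ℝ)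
    (y : E) : 1 / 4 ≤ bottomBarrier σ M ρ y (y, t) := by
  have : 0 < 2 - 2 * σ := by linarith
  have hpow : 0 ≤ M / (8 * σ) * t ^ (2 * σ) := by positivity
  have hsq : 0 ≤ (ρ ^ 2)⁻¹ * ((finrank ℝ E + 1) / (2 - 2 * σ) * t ^ 2) := by positivity
  simp only [bottomBarrier, sub_self, norm_zero]
  linarith

lemma bottomBarrier_le {ρ t h : ℝ} {y x : E} (hσ0 : 0 < σ) (hσ1 : σ < 1) (hM : 0 ≤ M) (hρ : 0 < ρ)
    (ht : 0 ≤ t) (hth : t ≤ h) (hh₁ : (finrank ℝ E + 1) / (2 - 2 * σ) * h ^ 2 ≤ ρ ^ 2 / 4)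
    (hh₂ : M / (8 * σ) * h ^ (2 * σ) ≤ 1 / 4) :
    bottomBarrier σ M ρ y (x, t) ≤ 3 / 4 - (ρ ^ 2)⁻¹ * ‖x - y‖ ^ 2 := by
  have : 0 < 2 - 2 * σ := by linarith
  calc bottomBarrier σ M ρ y (x, t)
      ≤ 1 / 4 + M / (8 * σ) * h ^ (2 * σ) +
          (ρ ^ 2)⁻¹ * ((finrank ℝ E + 1) / (2 - 2 * σ) * h ^ 2 - ‖x - y‖ ^ 2) := by
        unfold bottomBarrier
        gcongr
    _ ≤ 1 / 4 + 1 / 4 + (ρ ^ 2)⁻¹ * (ρ ^ 2 / 4 - ‖x - y‖ ^ 2) := by gcongr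
    _ = 3 / 4 - (ρ ^ 2)⁻¹ * ‖x - y‖ ^ 2 := by
        field_simp
        ring

variable [FiniteDimensional ℝ E]

lemma isCompact_cylinder (p : E) (r a b : ℝ) : IsCompact (closedBall p r ×ˢ Icc a b) :=
  (isCompact_closedBall p r).prod isCompact_Icc

lemma HasExtOpAt.gaussian (κ : ℝ) (P X : E × ℝ) :
    HasExtOpAt σ (fun Y => Real.exp (-κ * sqDist P Y)) X (Real.exp (-κ * sqDist P X) *
      (4 * κ ^ 2 * sqDist P X -
        κ * (2 * finrank ℝ E + 2 + (1 - 2 * σ) / X.2 * (2 * (X.2 - P.2))))) := by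
  have hψ (c : ℝ) : HasSecondDerivAt (fun u => Real.exp (-κ * (u + c))) (‖X.1 - P.1‖ ^ 2)
      (Real.exp (-κ * (‖X.1 - P.1‖ ^ 2 + c)) * -κ)
      (Real.exp (-κ * (‖X.1 - P.1‖ ^ 2 + c)) * κ ^ 2) := by
    have hlin := ((HasSecondDerivAt.sub_const (-c) (‖X.1 - P.1‖ ^ 2)).const_mul (-κ))
    simp only [sub_neg_eq_add] at hlin
    exact ((HasSecondDerivAt.exp _).comp hlin).congr_deriv (by ring) (by ring)
  have ht := (HasSecondDerivAt.exp _).comp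
    (((HasSecondDerivAt.const (‖X.1 - P.1‖ ^ 2) X.2).add (.sub_const_sq P.2 X.2)).const_mul (-κ))
  have hx := laplacian_comp_norm_sub_sq X.1 P.1
    (ψ := fun u => Real.exp (-κ * (u + (X.2 - P.2) ^ 2))) (by fun_prop) (hψ _)
  have hsmooth : ContDiff ℝ 2 fun x : E => Real.exp (-κ * (‖x - P.1‖ ^ 2 + (X.2 - P.2) ^ 2)) :=
    (contDiff_const.mul (((contDiff_id.sub contDiff_const).norm_sq ℝ).add contDiff_const)).exp
  refine ⟨hsmooth.contDiffAt, _, _, ht, ?_⟩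
  simp only [sqDist, hx]
  ring

lemma exists_pos_hasExtOpAt_gaussian {P X : E × ℝ} {s : ℝ} (hσ0 : 0 < σ) (hσ1 : σ < 1) (hs : 0 < s)
    (hX : s ≤ X.2) (hfar : s ^ 2 < sqDist P X) (hnear : |X.2 - P.2| ≤ 3 * s) :
    ∃ ℓ > 0, HasExtOpAt σ (fun Y => Real.exp (-((finrank ℝ E + 3) / s ^ 2) * sqDist P Y)) X ℓ := by
  set κ : ℝ := (finrank ℝ E + 3) / s ^ 2 with hκ
  have hκ0 : 0 < κ := by positivity
  refine ⟨_, mul_pos (Real.exp_pos _) ?_, .gaussian κ P X⟩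
  have hdrift : (1 - 2 * σ) / X.2 * (2 * (X.2 - P.2)) ≤ 6 := by
    have hX0 : 0 < X.2 := hs.trans_le hX
    rw [div_mul_eq_mul_div, div_le_iff₀ hX0]
    have habs : |(1 - 2 * σ) * (2 * (X.2 - P.2))| ≤ 1 * (2 * (3 * s)) := by
      rw [abs_mul, abs_mul, abs_two]
      gcongr
      exact abs_le.2 ⟨by linarith, by linarith⟩
    linarith [le_abs_self ((1 - 2 * σ) * (2 * (X.2 - P.2)))]
  have hκfar : finrank ℝ E + 3 < κ * sqDist P X := by
    rw [hκ, div_mul_eq_mul_div, lt_div_iff₀ (by positivity)]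
    gcongr
  calc (0 : ℝ) < κ * (4 * (κ * sqDist P X) -
        (2 * finrank ℝ E + 2 + (1 - 2 * σ) / X.2 * (2 * (X.2 - P.2)))) :=
      mul_pos hκ0 (by linarith [(finrank ℝ E).cast_nonneg (α := ℝ)])
    _ = _ := by ring

lemma IsNonnegSolutionOn.interior_doubling {P : E × ℝ} {s q : ℝ}
    (hV : IsNonnegSolutionOn σ V (closedBall P (3 * s))) (hσ0 : 0 < σ) (hσ1 : σ < 1) (hs : 0 < s)
    (hP : 4 * s ≤ P.2) (hq : 0 ≤ q) (h : ∀ X ∈ closedBall P s, q ≤ V X) :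
    ∀ X ∈ closedBall P (2 * s), doublingConst (finrank ℝ E) * q ≤ V X := by
  set γ : ℝ := finrank ℝ E + 3
  have hγ0 : 0 < γ := by positivity
  set b : E × ℝ → ℝ := fun Y => Real.exp (-(γ / s ^ 2) * sqDist P Y) - Real.exp (-9 * γ) with hb
  have hscale (u : ℝ) : -(γ / s ^ 2) * (u * s ^ 2) = -u * γ := by field_simp
  have hle := hV.le_of_barrier (isCompact_closedBall P (3 * s)) (b := b) hq
    (Continuous.continuousOn (by fun_prop)) fun X _ hbX hVX => .inl ?_
  · intro X hX
    calc doublingConst (finrank ℝ E) * q ≤ q * b X := by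
          rw [mul_comm]
          gcongr
          exact doublingConst_le_gaussian_sub _ hs hX
      _ ≤ V X := hle X (closedBall_subset_closedBall (by linarith) hX)
  have hnear : dist X P < 3 * s := by
    rw [hb, sub_pos, Real.exp_lt_exp, ← hscale] at hbX
    have : sqDist P X < 9 * s ^ 2 := lt_of_mul_lt_mul_of_nonpos_left hbX
      (neg_nonpos.2 (by positivity))
    exact lt_of_pow_lt_pow_left₀ 2 (by positivity) (by nlinarith [sq_dist_le_sqDist P X])
  have hfar : s ^ 2 < sqDist P X := by
    by_contra! hcon
    have hXs : X ∈ closedBall P s :=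
      mem_closedBall.2 (le_of_sq_le_sq ((sq_dist_le_sqDist P X).trans hcon) hs.le)
    have hb1 : b X ≤ 1 := by
      have : Real.exp (-(γ / s ^ 2) * sqDist P X) ≤ 1 := Real.exp_le_one_iff.2
        (mul_nonpos_of_nonpos_of_nonneg (neg_nonpos.2 (by positivity))
          (by unfold sqDist; positivity))
      simp only [hb]
      linarith [Real.exp_pos (-9 * γ)]
    nlinarith [h X hXs]
  have hheight : |X.2 - P.2| ≤ 3 * s := (le_max_right _ _).trans hnear.le
  obtain ⟨ℓ, hℓ, hop⟩ := exists_pos_hasExtOpAt_gaussian (P := P) hσ0 hσ1 hs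
    (by linarith [(abs_le.1 hheight).1]) hfar hheight
  exact ⟨ball_subset_interior_closedBall hnear, ℓ - 0, by simpa using hℓ, hop.sub (.const _)⟩

lemma HasExtOpAt.bottomBarrier (hσ1 : σ < 1) (ρ : ℝ) (y : E) {X : E × ℝ} (hX : 0 < X.2) :
    HasExtOpAt σ (bottomBarrier σ M ρ y) X (2 / ρ ^ 2) := by
  have hσ : 2 - 2 * σ ≠ 0 := by linarith
  refine (((HasExtOpAt.const (1 / 4)).add ((HasExtOpAt.height_rpow hX).const_mul _)).add
    ((((HasExtOpAt.height_sq hX).const_mul _).sub (.norm_sub_sq y)).const_mul _)).congr_val ?_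
  rw [← mul_assoc, mul_right_comm, div_mul_cancel₀ _ hσ]
  ring

lemma IsRobinSolution.spread_down {y : E} {ρ h q : ℝ} (hV : IsRobinSolution σ M V y ρ h)
    (hσ0 : 0 < σ) (hσ1 : σ < 1) (hM : 0 < M) (hρ : 0 < ρ)
    (hh₁ : (finrank ℝ E + 1) / (2 - 2 * σ) * h ^ 2 ≤ ρ ^ 2 / 4)
    (hh₂ : M / (8 * σ) * h ^ (2 * σ) ≤ 1 / 4) (hq : 0 ≤ q)
    (hdisc : ∀ x ∈ closedBall y ρ, q ≤ V (x, h)) {u : ℝ} (hu : u ∈ Icc 0 h) :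
    q / 4 ≤ V (y, u) := by
  have hle := hV.le_of_barrier (isCompact_cylinder _ _ _ _) hq
    (continuous_bottomBarrier (M := M) hσ0 ρ y).continuousOn fun X hX hbX hVX => ?_
  · nlinarith [hle (y, u) ⟨mem_closedBall_self hρ.le, hu⟩,
      le_bottomBarrier_self hσ0 hσ1 hM.le hu.1 ρ y]
  obtain ⟨x, t⟩ := X
  obtain ⟨hx, ht0 : 0 ≤ t, hth : t ≤ h⟩ := hX
  have hb := bottomBarrier_le (y := y) (x := x) hσ0 hσ1 hM.le hρ ht0 hth hh₁ hh₂
  have hxρ : ‖x - y‖ < ρ := by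
    refine lt_of_pow_lt_pow_left₀ 2 hρ.le ((inv_mul_lt_one₀ (by positivity)).1 ?_)
    linarith
  have hth : t < h := by
    refine hth.lt_of_ne ?_
    rintro rfl
    nlinarith [hdisc x hx, show 0 ≤ (ρ ^ 2)⁻¹ * ‖x - y‖ ^ 2 by positivity]
  rcases ht0.eq_or_lt with rfl | ht0
  · obtain ⟨ℓ, hℓ, hflux⟩ := hV.hasFluxAt x (mem_ball_iff_norm.2 hxρ)
    refine .inr ⟨rfl, ?_, M / 4, ℓ, .bottomBarrier hσ0 hσ1 ρ y x, hflux, ?_⟩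
    · filter_upwards [Ioo_mem_nhdsGT hth] with t ht using ⟨hx, ht.1.le, ht.2.le⟩
    · calc ℓ ≤ M * V (x, 0) := (le_abs_self ℓ).trans hℓ
        _ < M * (q * bottomBarrier σ M ρ y (x, 0)) := by gcongr
        _ ≤ M * (q * (1 / 4)) := by gcongr; exact bottomBarrier_zero_le hσ0 ρ y x
        _ = q * (M / 4) := by ring
  · exact .inl ⟨mem_interior_cylinder hxρ ht0 hth, 2 / ρ ^ 2, by positivity,
      .bottomBarrier hσ1 ρ y ht0⟩

lemma exists_le_hasExtOpAt_rpow {T S : ℝ} (hσ0 : 0 < σ) (hσ1 : σ < 1) (hS : 0 < S) (hT : 0 ≤ T)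
    {X : E × ℝ} (hTX : T < X.2) (hXS : X.2 ≤ T + S) :
    ∃ ℓ ≤ -(σ * min σ (1 - σ) / S ^ 2), HasExtOpAt σ (fun Y => ((Y.2 - T) / S) ^ σ) X ℓ := by
  set v := (X.2 - T) / S with hv
  have hX0 : 0 < X.2 := hT.trans_lt hTX
  have hv0 : 0 < v := div_pos (sub_pos.2 hTX) hS
  have hv1 : v ≤ 1 := (div_le_one hS).2 (by linarith)
  refine ⟨_, ?_, .of_height (ψ := fun t => ((t - T) / S) ^ σ)
    (HasSecondDerivAt.comp (φ := fun s => s ^ σ) (.rpow hv0 σ) (.sub_const_div T S X.2))⟩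
  have hdrift : (1 - 2 * σ) * ((X.2 - T) / X.2) ≤ 1 - σ - min σ (1 - σ) := by
    have h0 : 0 ≤ (X.2 - T) / X.2 := div_nonneg (by linarith) hX0.le
    have h1 : (X.2 - T) / X.2 ≤ 1 := (div_le_one hX0).2 (by linarith)
    have := min_le_left σ (1 - σ)
    have := min_le_right σ (1 - σ)
    rcases le_total 0 (1 - 2 * σ) with _ | _ <;> nlinarith
  have hpow : 1 ≤ v ^ (σ - 2) :=
    Real.one_le_rpow_of_pos_of_le_one_of_nonpos hv0 hv1 (by linarith)
  have hmin : 0 < min σ (1 - σ) := lt_min hσ0 (by linarith)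
  calc σ * ((σ - 1) * v ^ (σ - 2)) * S⁻¹ ^ 2 + σ * v ^ (σ - 1) * 0 +
        (1 - 2 * σ) / X.2 * (σ * v ^ (σ - 1) * S⁻¹)
      = σ * v ^ (σ - 2) / S ^ 2 * (σ - 1 + (1 - 2 * σ) * ((X.2 - T) / X.2)) := by
        rw [show σ - 1 = σ - 2 + 1 by ring, Real.rpow_add_one hv0.ne', hv]
        field_simp
        ring
    _ ≤ σ * v ^ (σ - 2) / S ^ 2 * -min σ (1 - σ) := by
        gcongr
        linarith
    _ ≤ σ * 1 / S ^ 2 * -min σ (1 - σ) := by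
        refine mul_le_mul_of_nonpos_right ?_ (neg_nonpos.2 hmin.le)
        gcongr
    _ = -(σ * min σ (1 - σ) / S ^ 2) := by ring

lemma IsNonnegSolutionOn.spread_up {p : E} {T S q A : ℝ}
    (hV : IsNonnegSolutionOn σ V (closedBall p S ×ˢ Icc T (T + S))) (hσ0 : 0 < σ) (hσ1 : σ < 1)
    (hS : 0 < S) (hT : 0 ≤ T) (hA1 : 1 ≤ A) (hA : 2 * finrank ℝ E < A * (σ * min σ (1 - σ)))
    (hq : 0 ≤ q) (hdisc : ∀ x ∈ closedBall p S, q ≤ V (x, T)) :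
    ∀ X ∈ closedBall p S ×ˢ Icc T (T + S),
      q * (1 - A * ((X.2 - T) / S) ^ σ - (S ^ 2)⁻¹ * ‖X.1 - p‖ ^ 2) ≤ V X := by
  have hcont : Continuous fun Y : E × ℝ => ((Y.2 - T) / S) ^ σ :=
    ((continuous_snd.sub continuous_const).div_const S).rpow_const fun _ => .inr hσ0.le
  refine hV.le_of_barrier (isCompact_cylinder _ _ _ _) hq (Continuous.continuousOn (by fun_prop))
    fun X hX hbX hVX => .inl ?_
  obtain ⟨x, t⟩ := X
  obtain ⟨hx, hTt : T ≤ t, htS : t ≤ T + S⟩ := hX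
  simp only at hbX hVX ⊢
  have hpow : 0 ≤ A * ((t - T) / S) ^ σ :=
    mul_nonneg (by linarith) (Real.rpow_nonneg (div_nonneg (by linarith) hS.le) σ)
  have hsq : 0 ≤ (S ^ 2)⁻¹ * ‖x - p‖ ^ 2 := by positivity
  have hxS : ‖x - p‖ < S := by
    refine lt_of_pow_lt_pow_left₀ 2 hS.le ((inv_mul_lt_one₀ (by positivity)).1 ?_)
    linarith
  have htS : t < T + S := by
    refine htS.lt_of_ne ?_
    rintro rfl
    rw [add_sub_cancel_left, div_self hS.ne', Real.one_rpow] at hbX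
    linarith
  have hTt : T < t := by
    refine hTt.lt_of_ne ?_
    rintro rfl
    nlinarith [hdisc x hx]
  obtain ⟨ℓ, hℓ, hop⟩ := exists_le_hasExtOpAt_rpow (X := (x, t)) hσ0 hσ1 hS hT hTt htS.le
  refine ⟨mem_interior_cylinder hxS hTt htS, _, ?_, ((HasExtOpAt.const 1).sub (hop.const_mul A)).sub
    ((HasExtOpAt.norm_sub_sq p).const_mul (S ^ 2)⁻¹)⟩
  have hAℓ := mul_le_mul_of_nonneg_left hℓ (zero_le_one.trans hA1)
  have hAS := mul_lt_mul_of_pos_left hA (inv_pos.2 (pow_pos hS 2))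
  rw [div_eq_inv_mul] at hAℓ
  linarith

end Barriers

section HorizontalOscillation

open Module (finrank)

variable {E : Type*} [NormedAddCommGroup E] [InnerProductSpace ℝ E] {σ : ℝ}

/-- The half `{Y | 0 ≤ ⟪e, Y - c⟫}` of the cylinder of radius `r` and height `H` over `c`. -/
def halfCylinder (e c : E) (r H : ℝ) : Set (E × ℝ) :=
  closedBall c r ×ˢ Icc 0 H ∩ {Y | 0 ≤ ⟪e, Y.1 - c⟫_ℝ}

/-- The coefficient which lets the square root dominate the other terms of `hyperplaneBarrier`. -/
def sqrtCoeff (d : ℕ) : ℝ := 4 * (2 * d + 17)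

lemma sqrtCoeff_nonneg (d : ℕ) : 0 ≤ sqrtCoeff d := by
  unfold sqrtCoeff
  positivity

/-- A strict supersolution with flux `-κ` on the half cylinder of radius `r` and height `T + r` over
`c`, which is at least `1` on the lateral boundary and on the top, and small near `(c, T)`. -/
def hyperplaneBarrier (σ κ r T : ℝ) (e c : E) (Y : E × ℝ) : ℝ :=
  sqrtCoeff (finrank ℝ E) * √(⟪e, Y.1 - c⟫_ℝ / r) + (r ^ 2)⁻¹ * ‖Y.1 - c‖ ^ 2 +
    ((r * (2 * T + r)) ^ 2)⁻¹ * (Y.2 ^ 2 - T ^ 2) ^ 2 +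
    κ / (2 * σ) * ((T + r) ^ (2 * σ) - Y.2 ^ (2 * σ))

lemma continuous_hyperplaneBarrier (hσ0 : 0 < σ) (κ r T : ℝ) (e c : E) :
    Continuous (hyperplaneBarrier σ κ r T e c) := by
  have : Continuous fun Y : E × ℝ => Y.2 ^ (2 * σ) :=
    continuous_snd.rpow_const fun _ => .inr (by positivity)
  unfold hyperplaneBarrier
  fun_prop

lemma isClosed_halfSpace (e c : E) : IsClosed {Y : E × ℝ | 0 ≤ ⟪e, Y.1 - c⟫_ℝ} :=
  isClosed_le continuous_const (by fun_prop)

lemma mem_interior_halfCylinder {e c : E} {r H : ℝ} {X : E × ℝ} (hr : ‖X.1 - c‖ < r)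
    (h0 : 0 < X.2) (hH : X.2 < H) (he : 0 < ⟪e, X.1 - c⟫_ℝ) :
    X ∈ interior (halfCylinder e c r H) := by
  rw [halfCylinder, interior_inter]
  refine ⟨mem_interior_cylinder hr h0 hH, mem_interior_iff_mem_nhds.2 ?_⟩
  have hcont : Continuous fun Y : E × ℝ => ⟪e, Y.1 - c⟫_ℝ := by fun_prop
  filter_upwards [hcont.continuousAt.eventually (lt_mem_nhds he)] with Y hY using hY.le

lemma HasFluxAt.hyperplaneBarrier (hσ0 : 0 < σ) (hσ1 : σ < 1) (κ r T : ℝ) (e c x : E) :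
    HasFluxAt σ (hyperplaneBarrier σ κ r T e c) x (-κ) := by
  have hheight : HasFluxAt σ (fun Y : E × ℝ => (Y.2 ^ 2 - T ^ 2) ^ 2) x 0 :=
    .comp_height_sq (ψ := fun u => (u - T ^ 2) ^ 2) (by fun_prop) hσ1
  refine (((HasFluxAt.of_horizontal fun z => sqrtCoeff (finrank ℝ E) * √(⟪e, z - c⟫_ℝ / r) +
    (r ^ 2)⁻¹ * ‖z - c‖ ^ 2).add (hheight.const_mul _)).add
    (((HasFluxAt.of_horizontal fun _ => (T + r) ^ (2 * σ)).sub
      HasFluxAt.height_rpow).const_mul _)).congr_val ?_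
  field_simp
  ring

lemma hyperplaneBarrier_nonneg {e c : E} {κ r T : ℝ} {X : E × ℝ} (hσ0 : 0 < σ) (hκ : 0 ≤ κ)
    (hX : X ∈ halfCylinder e c r (T + r)) : 0 ≤ hyperplaneBarrier σ κ r T e c X := by
  obtain ⟨⟨-, ht0 : 0 ≤ X.2, ht : X.2 ≤ T + r⟩, -⟩ := hX
  have hflux : X.2 ^ (2 * σ) ≤ (T + r) ^ (2 * σ) := by gcongr
  have := sub_nonneg.2 hflux
  unfold hyperplaneBarrier sqrtCoeff
  positivity

lemma lt_of_hyperplaneBarrier_lt_one {e c : E} {κ r T : ℝ} {X : E × ℝ} (hσ0 : 0 < σ) (hκ : 0 ≤ κ)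
    (hr : 0 < r) (hT : 0 ≤ T) (hX : X ∈ halfCylinder e c r (T + r))
    (h : hyperplaneBarrier σ κ r T e c X < 1) : ‖X.1 - c‖ < r ∧ X.2 < T + r := by
  obtain ⟨⟨hx, ht0 : 0 ≤ X.2, ht : X.2 ≤ T + r⟩, -⟩ := hX
  have hsqrt : 0 ≤ sqrtCoeff (finrank ℝ E) * √(⟪e, X.1 - c⟫_ℝ / r) :=
    mul_nonneg (sqrtCoeff_nonneg _) (Real.sqrt_nonneg _)
  have hnorm : 0 ≤ (r ^ 2)⁻¹ * ‖X.1 - c‖ ^ 2 := by positivity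
  have hheight : 0 ≤ ((r * (2 * T + r)) ^ 2)⁻¹ * (X.2 ^ 2 - T ^ 2) ^ 2 := by positivity
  have hflux : 0 ≤ κ / (2 * σ) * ((T + r) ^ (2 * σ) - X.2 ^ (2 * σ)) :=
    mul_nonneg (by positivity) (sub_nonneg.2 (by gcongr))
  unfold hyperplaneBarrier at h
  refine ⟨(mem_closedBall_iff_norm.1 hx).lt_of_ne fun hxr => ?_, ht.lt_of_ne fun htr => ?_⟩
  · rw [hxr, inv_mul_cancel₀ (by positivity)] at h
    linarith
  · rw [htr, show (T + r) ^ 2 - T ^ 2 = r * (2 * T + r) by ring,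
      inv_mul_cancel₀ (by positivity)] at h
    rw [htr] at hflux
    linarith

lemma hyperplaneBarrier_le {e c p : E} {κ r T : ℝ} (hσ0 : 0 < σ) (hσ1 : σ < 1) (he : ‖e‖ = 1)
    (hκ : 0 ≤ κ) (hr : 0 < r) (hT : 0 ≤ T) (hTr : T + r ≤ 1) :
    hyperplaneBarrier σ κ r T e c (p, T) ≤
      sqrtCoeff (finrank ℝ E) * √(‖p - c‖ / r) + (‖p - c‖ / r) ^ 2 + κ / σ * r ^ σ := by
  have hinner : ⟪e, p - c⟫_ℝ ≤ ‖p - c‖ := by simpa [he] using real_inner_le_norm e (p - c)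
  have hroot : (T + r) ^ σ - T ^ σ ≤ r ^ σ :=
    sub_le_iff_le_add'.2 (Real.rpow_add_le_add_rpow hT hr.le hσ0.le hσ1.le)
  have hsum : (T + r) ^ σ + T ^ σ ≤ 1 + 1 := by
    gcongr <;> exact Real.rpow_le_one (by positivity) (by linarith) hσ0.le
  have hpow : (T + r) ^ (2 * σ) - T ^ (2 * σ) ≤ r ^ σ * 2 := by
    rw [two_mul σ, Real.rpow_add_of_nonneg (by positivity) hσ0.le hσ0.le,
      Real.rpow_add_of_nonneg hT hσ0.le hσ0.le, mul_self_sub_mul_self, mul_comm]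
    exact mul_le_mul hroot (hsum.trans_eq one_add_one_eq_two) (by positivity) (by positivity)
  calc hyperplaneBarrier σ κ r T e c (p, T)
      = sqrtCoeff (finrank ℝ E) * √(⟪e, p - c⟫_ℝ / r) + (‖p - c‖ / r) ^ 2 +
          κ / (2 * σ) * ((T + r) ^ (2 * σ) - T ^ (2 * σ)) := by
        simp only [hyperplaneBarrier]
        ring
    _ ≤ sqrtCoeff (finrank ℝ E) * √(‖p - c‖ / r) + (‖p - c‖ / r) ^ 2 +
          κ / (2 * σ) * (r ^ σ * 2) := by
        have := sqrtCoeff_nonneg (finrank ℝ E)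
        gcongr
    _ = _ := by ring

variable [FiniteDimensional ℝ E]

lemma isCompact_halfCylinder (e c : E) (r H : ℝ) : IsCompact (halfCylinder e c r H) :=
  (isCompact_cylinder _ _ _ _).inter_right (isClosed_halfSpace e c)

lemma exists_le_hasExtOpAt_sqrt_inner {e c : E} {r : ℝ} {X : E × ℝ} (he : ‖e‖ = 1)
    (h0 : 0 < ⟪e, X.1 - c⟫_ℝ) (hr : ⟪e, X.1 - c⟫_ℝ ≤ r) :
    ∃ ℓ ≤ -((r ^ 2)⁻¹ / 4), HasExtOpAt σ (fun Y => √(⟪e, Y.1 - c⟫_ℝ / r)) X ℓ := by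
  have hr0 : 0 < r := h0.trans_le hr
  rw [inner_sub_right] at h0 hr
  set v := (⟪e, X.1⟫_ℝ - ⟪e, c⟫_ℝ) / r
  have hv0 : 0 < v := div_pos h0 hr0
  have hv1 : v ≤ 1 := (div_le_one hr0).2 hr
  simp only [inner_sub_right, Real.sqrt_eq_rpow]
  have hψ : ContDiffAt ℝ 2 (fun s => ((s - ⟪e, c⟫_ℝ) / r) ^ (1 / 2 : ℝ)) ⟪e, X.1⟫_ℝ :=
    ((contDiffAt_id.sub contDiffAt_const).div_const r).rpow_const_of_ne hv0.ne'
  have hψ' := HasSecondDerivAt.comp (φ := fun s => s ^ (1 / 2 : ℝ)) (.rpow hv0 (1 / 2))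
    (g := fun s => (s - ⟪e, c⟫_ℝ) / r) (.sub_const_div _ _ ⟪e, X.1⟫_ℝ)
  have hlap := laplacian_comp_inner e X.1 hψ hψ'
  refine ⟨_, ?_, .of_horizontal (f := fun x => ((⟪e, x⟫_ℝ - ⟪e, c⟫_ℝ) / r) ^ (1 / 2 : ℝ))
    (hψ.comp X.1 (contDiff_const.inner ℝ contDiff_id).contDiffAt)⟩
  have hpow : 1 ≤ v ^ (1 / 2 - 2 : ℝ) :=
    Real.one_le_rpow_of_pos_of_le_one_of_nonpos hv0 hv1 (by norm_num)
  rw [hlap, he, inv_pow]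
  linarith [mul_le_mul_of_nonneg_left hpow (by positivity : 0 ≤ (r ^ 2)⁻¹ / 4)]

lemma HasExtOpAt.height_sq_sub_sq {X : E × ℝ} (hX : 0 < X.2) (T : ℝ) :
    HasExtOpAt σ (fun Y => (Y.2 ^ 2 - T ^ 2) ^ 2) X
      (8 * X.2 ^ 2 + 4 * (2 - 2 * σ) * (X.2 ^ 2 - T ^ 2)) := by
  refine (HasExtOpAt.of_height (ψ := fun t => (t ^ 2 - T ^ 2) ^ 2) (HasSecondDerivAt.comp
    (g := fun t => t ^ 2) (.sub_const_sq (T ^ 2) (X.2 ^ 2)) (.sq X.2))).congr_val ?_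
  field_simp
  ring

lemma exists_neg_hasExtOpAt_hyperplaneBarrier {e c : E} {κ r T : ℝ} {X : E × ℝ} (hσ0 : 0 < σ)
    (hσ1 : σ < 1) (he : ‖e‖ = 1) (hr : 0 < r) (hT : 0 ≤ T) (hXc : ‖X.1 - c‖ ≤ r)
    (h0 : 0 < ⟪e, X.1 - c⟫_ℝ) (hX0 : 0 < X.2) (hX : X.2 ≤ T + r) :
    ∃ ℓ < 0, HasExtOpAt σ (hyperplaneBarrier σ κ r T e c) X ℓ := by
  have hinner : ⟪e, X.1 - c⟫_ℝ ≤ r :=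
    (real_inner_le_norm _ _).trans (by rwa [he, one_mul])
  obtain ⟨ℓ, hℓ, hsqrt⟩ := exists_le_hasExtOpAt_sqrt_inner (σ := σ) he h0 hinner
  refine ⟨_, ?_, (((hsqrt.const_mul (sqrtCoeff (finrank ℝ E))).add
    ((HasExtOpAt.norm_sub_sq c).const_mul (r ^ 2)⁻¹)).add
    ((HasExtOpAt.height_sq_sub_sq hX0 T).const_mul ((r * (2 * T + r)) ^ 2)⁻¹)).add
    (((HasExtOpAt.const ((T + r) ^ (2 * σ))).sub (.height_rpow hX0)).const_mul (κ / (2 * σ)))⟩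
  have hA := sqrtCoeff_nonneg (finrank ℝ E)
  have hheight : 8 * X.2 ^ 2 + 4 * (2 - 2 * σ) * (X.2 ^ 2 - T ^ 2) ≤ 16 * (2 * T + r) ^ 2 := by
    have : X.2 ^ 2 ≤ (2 * T + r) ^ 2 := by gcongr; linarith
    nlinarith [mul_nonneg (by linarith : 0 ≤ 1 - σ) (sq_nonneg T)]
  calc _ ≤ sqrtCoeff (finrank ℝ E) * -((r ^ 2)⁻¹ / 4) + (r ^ 2)⁻¹ * (2 * finrank ℝ E) +
        ((r * (2 * T + r)) ^ 2)⁻¹ * (16 * (2 * T + r) ^ 2) + κ / (2 * σ) * (0 - 0) := by gcongr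
    _ = -(r ^ 2)⁻¹ := by
        unfold sqrtCoeff
        field_simp
        ring
    _ < 0 := neg_neg_of_pos (by positivity)

lemma IsNonnegSolutionOn.le_of_hyperplane {V : E × ℝ → ℝ} {e c : E} {κ m r T : ℝ}
    (hV : IsNonnegSolutionOn σ V (halfCylinder e c r (T + r))) (hσ0 : 0 < σ) (hσ1 : σ < 1)
    (he : ‖e‖ = 1) (hκ : 0 ≤ κ) (hr : 0 < r) (hT : 0 ≤ T) (hm : 0 ≤ m)
    (hflux : ∀ x ∈ ball c r, ∃ ℓ < m * κ, HasFluxAt σ V x ℓ)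
    (hplane : ∀ X ∈ halfCylinder e c r (T + r), ⟪e, X.1 - c⟫_ℝ = 0 → m ≤ V X) :
    ∀ X ∈ halfCylinder e c r (T + r), m * (1 - hyperplaneBarrier σ κ r T e c X) ≤ V X := by
  refine hV.le_of_barrier (isCompact_halfCylinder e c r _) hm
    (continuous_const.sub (continuous_hyperplaneBarrier hσ0 κ r T e c)).continuousOn
    fun X hX hbX hVX => ?_
  obtain ⟨hxr, htr⟩ := lt_of_hyperplaneBarrier_lt_one hσ0 hκ hr hT hX (sub_pos.1 hbX)
  have hpos : 0 < ⟪e, X.1 - c⟫_ℝ := by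
    refine lt_of_le_of_ne hX.2 fun h0 => ?_
    nlinarith [hplane X hX h0.symm, hyperplaneBarrier_nonneg hσ0 hκ hX]
  obtain ⟨x, t⟩ := X
  rcases hX.1.2.1.eq_or_lt with h0 | h0
  · obtain rfl : 0 = t := h0
    obtain ⟨ℓ, hℓ, hVx⟩ := hflux x (mem_ball_iff_norm.2 hxr)
    refine .inr ⟨rfl, ?_, _, ℓ,
      (HasFluxAt.of_horizontal fun _ => 1).sub (.hyperplaneBarrier hσ0 hσ1 κ r T e c x), hVx, ?_⟩
    · filter_upwards [Ioo_mem_nhdsGT htr] with t ht using ⟨⟨hX.1.1, ht.1.le, ht.2.le⟩, hX.2⟩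
    · rwa [zero_sub, neg_neg]
  · obtain ⟨ℓ, hℓ, hop⟩ := exists_neg_hasExtOpAt_hyperplaneBarrier (κ := κ) hσ0 hσ1 he hr hT hxr.le
      hpos h0 htr.le
    exact .inl ⟨mem_interior_halfCylinder hxr h0 htr hpos, 0 - ℓ, by linarith,
      (HasExtOpAt.const 1).sub hop⟩

lemma exists_affineIsometryEquiv_swap {p x : E} (hpx : p ≠ x) :
    ∃ (R : E ≃ᵃⁱ[ℝ] E) (e : E), R p = x ∧ ‖e‖ = 1 ∧ 0 ≤ ⟪e, p - midpoint ℝ p x⟫_ℝ ∧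
      ∀ y, ⟪e, y - midpoint ℝ p x⟫_ℝ = 0 → R y = y := by
  set s := AffineSubspace.perpBisector p x
  set c := midpoint ℝ p x with hc
  rw [midpoint_eq_smul_add, invOf_eq_inv] at hc
  have : Nonempty s := AffineSubspace.perpBisector_nonempty.to_subtype
  have hpc : p - c ≠ 0 := sub_ne_zero.2 fun h => hpx ((midpoint_eq_left_iff ℝ).1 h.symm)
  have hxp : x - p = (-2 : ℝ) • (p - c) := by rw [hc]; module
  have horth : p - c ∈ s.directionᗮ := by
    rw [AffineSubspace.direction_perpBisector, Submodule.orthogonal_orthogonal,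
      Submodule.mem_span_singleton]
    exact ⟨-(1 / 2), by rw [vsub_eq_sub, hxp]; module⟩
  refine ⟨EuclideanGeometry.reflection s, ‖p - c‖⁻¹ • (p - c), ?_, norm_smul_inv_norm hpc, ?_,
    fun y hy => ?_⟩
  · have hreflect := EuclideanGeometry.reflection_orthogonal_vadd
      (AffineSubspace.midpoint_mem_perpBisector p x) horth
    rw [vadd_eq_add, sub_add_cancel] at hreflect
    refine hreflect.trans (?_ : -(p - c) + c = x)
    rw [hc]
    module
  · rw [real_inner_smul_left, real_inner_self_eq_norm_sq]
    positivity
  · rw [real_inner_smul_left] at hy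
    rw [EuclideanGeometry.reflection_eq_self_iff, AffineSubspace.mem_perpBisector_iff_inner_eq_zero,
      vsub_eq_sub, vsub_eq_sub, hxp, real_inner_smul_right, real_inner_comm,
      (mul_eq_zero.1 hy).resolve_left (inv_ne_zero (norm_ne_zero_iff.2 hpc)), mul_zero]

variable {M m r : ℝ} {V : E × ℝ → ℝ} {c : E} {R : E ≃ᵃⁱ[ℝ] E}

lemma IsNonnegSolutionOn.const_sub_add_comp {H : ℝ}
    (hV : IsNonnegSolutionOn σ V (closedBall c r ×ˢ Icc 0 H)) (hR : R c = c)
    (hle : ∀ X ∈ closedBall c r ×ˢ Icc 0 H, V X ≤ m) :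
    IsNonnegSolutionOn σ (fun Y => m - V Y + V (R Y.1, Y.2)) (closedBall c r ×ˢ Icc 0 H) := by
  let φ : E × ℝ ≃ₜ E × ℝ := R.toHomeomorph.prodCongr (Homeomorph.refl ℝ)
  have hφ : φ ⁻¹' (closedBall c r ×ˢ Icc 0 H) = closedBall c r ×ˢ Icc 0 H := by
    ext X
    change (R X.1 ∈ closedBall c r ∧ X.2 ∈ Icc 0 H) ↔ X.1 ∈ closedBall c r ∧ X.2 ∈ Icc 0 H
    rw [mem_closedBall, mem_closedBall, ← R.dist_map X.1 c, hR]
  refine ⟨fun X hX => ?_, ?_, fun X hX => ?_⟩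
  · exact add_nonneg (sub_nonneg.2 (hle X hX)) (hV.nonneg (φ X) (hφ.ge hX))
  · exact (continuousOn_const.sub hV.continuousOn).add
      (hV.continuousOn.comp φ.continuous.continuousOn hφ.ge)
  · have hφX : φ X ∈ interior (closedBall c r ×ˢ Icc 0 H) := by
      rw [← mem_preimage, φ.preimage_interior, hφ]
      exact hX
    exact (((HasExtOpAt.const m).sub (hV.hasExtOpAt X hX)).add
      ((hV.hasExtOpAt _ hφX).comp_affineIsometryEquiv R)).congr_val (by ring)

/-- A bound for the relative oscillation over the distance `h` of a solution on a cylinder of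
radius `r`. -/
def oscBound (d : ℕ) (σ M r h : ℝ) : ℝ := sqrtCoeff d * √(h / r) + (h / r) ^ 2 + 3 * M / σ * r ^ σ

namespace IsRobinSolution

lemma exists_hasFluxAt_const_sub_add_comp {H : ℝ} (hV : IsRobinSolution σ M V c r H)
    (hM : 0 < M) (hm : 0 < m) (hR : R c = c) (hH : 0 ≤ H)
    (hle : ∀ X ∈ closedBall c r ×ˢ Icc 0 H, V X ≤ m) {x : E} (hx : x ∈ ball c r) :
    ∃ ℓ < m * (3 * M), HasFluxAt σ (fun Y => m - V Y + V (R Y.1, Y.2)) x ℓ := by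
  have hRx : R x ∈ ball c r := by rwa [mem_ball, ← hR, R.dist_map]
  have hbound (z : E) (hz : z ∈ ball c r) : M * V (z, 0) ≤ M * m := by
    gcongr
    exact hle _ ⟨ball_subset_closedBall hz, le_rfl, hH⟩
  obtain ⟨k, hk, hkx⟩ := hV.hasFluxAt x hx
  obtain ⟨ℓ, hℓ, hℓx⟩ := hV.hasFluxAt (R x) hRx
  refine ⟨0 - k + ℓ, ?_, ((HasFluxAt.of_horizontal fun _ => m).sub hkx).add hℓx⟩
  linarith [hbound x hx, hbound (R x) hRx, neg_abs_le k, le_abs_self ℓ, mul_pos hm hM]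

lemma horizontal_osc {p x : E} {S T : ℝ} (hV : IsRobinSolution σ M V p (2 * r) (T + r))
    (hσ0 : 0 < σ) (hσ1 : σ < 1) (hM : 0 < M) (hr : 0 < r) (hSr : S ≤ r) (hT : 0 ≤ T)
    (hTr : T + r ≤ 1) (hm : 0 < m) (hle : ∀ X ∈ closedBall p (2 * r) ×ˢ Icc 0 (T + r), V X ≤ m)
    (hx : x ∈ closedBall p S) :
    V (p, T) - m * oscBound (finrank ℝ E) σ M r S ≤ V (x, T) := by
  have hA := sqrtCoeff_nonneg (finrank ℝ E)
  rcases eq_or_ne p x with rfl | hpx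
  · have : 0 ≤ oscBound (finrank ℝ E) σ M r S := by unfold oscBound; positivity
    nlinarith
  obtain ⟨R, e, hRp, he, hpe, hRfix⟩ := exists_affineIsometryEquiv_swap hpx
  set c := midpoint ℝ p x
  have hR : R c = c := hRfix c (by rw [sub_self, inner_zero_right])
  have hpc : ‖p - c‖ ≤ S := by
    rw [← dist_eq_norm, dist_left_midpoint, Real.norm_two]
    linarith [mem_closedBall'.1 hx, dist_nonneg (x := p) (y := x)]
  have hsub : r + dist c p ≤ 2 * r := by
    rw [dist_comm, dist_eq_norm]
    linarith
  have hVc := hV.mono hsub le_rfl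
  have hlec X (hX : X ∈ closedBall c r ×ˢ Icc 0 (T + r)) : V X ≤ m :=
    hle X ⟨closedBall_subset_closedBall' hsub hX.1, hX.2⟩
  have hle_refl := ((hVc.toIsNonnegSolutionOn.const_sub_add_comp hR hlec).mono
    inter_subset_left).le_of_hyperplane hσ0 hσ1 he (κ := 3 * M) (by positivity) hr hT hm.le
    (fun y hy => hVc.exists_hasFluxAt_const_sub_add_comp hM hm hR (by positivity) hlec hy)
    (fun X _ hX0 => by rw [hRfix X.1 hX0, sub_add_cancel])
    (p, T) ⟨⟨mem_closedBall_iff_norm.2 (hpc.trans hSr), hT, by linarith⟩, hpe⟩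
  have hB : hyperplaneBarrier σ (3 * M) r T e c (p, T) ≤ oscBound (finrank ℝ E) σ M r S := by
    refine (hyperplaneBarrier_le hσ0 hσ1 he (by positivity) hr hT hTr).trans ?_
    unfold oscBound
    gcongr
  simp only [hRp] at hle_refl
  nlinarith

end IsRobinSolution

end HorizontalOscillation

section Chains

open Module (finrank)

variable {E : Type*} [NormedAddCommGroup E] {σ : ℝ}

lemma closedBall_subset_cylinder {P : E × ℝ} {p : E} {s r a b : ℝ} (hr : s + dist P.1 p ≤ r)
    (ha : a + s ≤ P.2) (hb : P.2 + s ≤ b) : closedBall P s ⊆ closedBall p r ×ˢ Icc a b := by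
  rw [← closedBall_prod_same, Real.closedBall_eq_Icc]
  exact prod_mono (closedBall_subset_closedBall' hr) (Icc_subset_Icc (by linarith) hb)

variable [InnerProductSpace ℝ E] [FiniteDimensional ℝ E] {V : E × ℝ → ℝ} {s q : ℝ}

lemma interior_chain {D : Set (E × ℝ)} {P' : E × ℝ} (hD : Convex ℝ D)
    (hV : ∀ P ∈ D, IsNonnegSolutionOn σ V (closedBall P (3 * s))) (hDs : ∀ P ∈ D, 4 * s ≤ P.2)
    (hσ0 : 0 < σ) (hσ1 : σ < 1) (hs : 0 < s) (hP' : P' ∈ D) (N : ℕ) (hq : 0 ≤ q) {P : E × ℝ}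
    (hP : P ∈ D) (hdist : dist P P' ≤ N * s) (h : ∀ X ∈ closedBall P s, q ≤ V X) :
    ∀ X ∈ closedBall P' s, doublingConst (finrank ℝ E) ^ N * q ≤ V X := by
  induction N generalizing P q with
  | zero =>
    obtain rfl : P = P' := dist_le_zero.1 (by simpa using hdist)
    simpa using h
  | succ N ih =>
    set a : ℝ := 1 / (N + 1) with ha
    have ha0 : 0 ≤ a := by positivity
    have haN : a * (N + 1) = 1 := by rw [ha]; field_simp
    have ha1 : a ≤ 1 := by nlinarith [N.cast_nonneg (α := ℝ)]
    push_cast at hdist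
    set P₁ := AffineMap.lineMap P P' a
    have hP₁ : dist P₁ P ≤ s := by
      rw [dist_lineMap_left, Real.norm_of_nonneg ha0]
      nlinarith
    have hP₁' : dist P₁ P' ≤ N * s := by
      rw [dist_lineMap_right, Real.norm_of_nonneg (by linarith)]
      nlinarith
    rw [pow_succ, mul_assoc]
    refine ih (mul_nonneg (doublingConst_pos _).le hq) (hD.lineMap_mem hP hP' ⟨ha0, ha1⟩) hP₁'
      fun X hX => ?_
    exact (hV P hP).interior_doubling hσ0 hσ1 hs (hDs P hP) hq h X
      (closedBall_subset_closedBall' (by linarith) hX)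

lemma IsNonnegSolutionOn.interior_growth {P : E × ℝ} (k : ℕ)
    (hV : IsNonnegSolutionOn σ V
      (closedBall P.1 (3 * ((6 / 5) ^ k * s)) ×ˢ Icc 0 (P.2 + 7 * ((6 / 5) ^ k * s))))
    (hσ0 : 0 < σ) (hσ1 : σ < 1) (hs : 0 < s) (hP : 4 * s ≤ P.2) (hq : 0 ≤ q)
    (h : ∀ X ∈ closedBall P s, q ≤ V X) :
    ∀ X ∈ closedBall (P.1, P.2 + 4 * ((6 / 5) ^ k * s - s)) ((6 / 5) ^ k * s),
      doublingConst (finrank ℝ E) ^ k * q ≤ V X := by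
  induction k with
  | zero => simpa using h
  | succ k ih =>
    have hstep : (6 / 5 : ℝ) ^ (k + 1) * s = 6 / 5 * ((6 / 5) ^ k * s) := by ring
    have hsz : s ≤ (6 / 5) ^ k * s := le_mul_of_one_le_left hs.le (one_le_pow₀ (by norm_num))
    rw [hstep] at hV ⊢
    set z := (6 / 5 : ℝ) ^ k * s
    have hz : 0 < z := hs.trans_le hsz
    have hsmall : IsNonnegSolutionOn σ V (closedBall P.1 (3 * z) ×ˢ Icc 0 (P.2 + 7 * z)) :=
      hV.mono (prod_mono (closedBall_subset_closedBall (by linarith))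
        (Icc_subset_Icc_right (by linarith)))
    have hdouble := (hsmall.mono (closedBall_subset_cylinder (P := (P.1, P.2 + 4 * (z - s)))
      (by simp) (by simp only; linarith) (by simp only; linarith))).interior_doubling hσ0 hσ1 hz
      (by simp only; linarith) (by have := doublingConst_pos (finrank ℝ E); positivity) (ih hsmall)
    intro X hX
    rw [pow_succ', mul_assoc]
    refine hdouble X (closedBall_subset_closedBall' ?_ hX)
    have hshift : P.2 + 4 * (6 / 5 * z - s) - (P.2 + 4 * (z - s)) = 4 / 5 * z := by ring
    rw [dist_prod_same_left, Real.dist_eq, hshift, abs_of_pos (by positivity)]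
    linarith

lemma exists_pos_lt_of_tendsto_zero {f : ℝ → ℝ} (hf : Tendsto f (𝓝[>] 0) (𝓝 0)) {ε b : ℝ}
    (hε : 0 < ε) (hb : 0 < b) : ∃ x, 0 < x ∧ x < b ∧ f x < ε := by
  obtain ⟨x, hx, hxb⟩ := ((hf.eventually (gt_mem_nhds hε)).and (Ioo_mem_nhdsGT hb)).exists
  exact ⟨x, hxb.1, hxb.2, hx⟩

/-- Choosing `γ` with `(5 / 6) ^ γ ≤ doublingConst d` turns the loss along growing balls into the
power `s ^ γ` of the initial radius. -/
lemma IsNonnegSolutionOn.exists_ball_of_ball {γ : ℕ} {P : E × ℝ}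
    (hV : IsNonnegSolutionOn σ V (closedBall 0 1 ×ˢ Icc 0 1)) (hσ0 : 0 < σ) (hσ1 : σ < 1)
    (hγ : (5 / 6 : ℝ) ^ γ ≤ doublingConst (finrank ℝ E)) (hs : 0 < s) (hs1 : s ≤ 1 / 48)
    (hP : P ∈ closedBall (0 : E) (3 / 4) ×ˢ Icc (4 * s) (3 / 4)) (hq : 0 ≤ q)
    (h : ∀ X ∈ closedBall P s, q ≤ V X) :
    ∃ P' ∈ closedBall (0 : E) (3 / 4) ×ˢ Icc (1 / 12 : ℝ) (17 / 20),
      ∀ X ∈ closedBall P' (1 / 48), s ^ γ * q ≤ V X := by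
  obtain ⟨hP1, hP2, hP3⟩ := hP
  obtain ⟨k, hk1, hk2⟩ := exists_nat_pow_near (x := 1 / (40 * s)) (y := (6 / 5 : ℝ))
    (by rw [le_div_iff₀ (by positivity)]; linarith) (by norm_num)
  rw [le_div_iff₀ (by positivity)] at hk1
  rw [div_lt_iff₀ (by positivity), pow_succ] at hk2
  have hgrow := (hV.mono (prod_mono (closedBall_subset_closedBall' ?_)
    (Icc_subset_Icc_right (by linarith)))).interior_growth k hσ0 hσ1 hs hP2 hq h
  · refine ⟨(P.1, P.2 + 4 * ((6 / 5) ^ k * s - s)), ⟨hP1, by simp only; linarith,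
      by simp only; linarith⟩, fun X hX => ?_⟩
    calc s ^ γ * q ≤ ((5 / 6) ^ k) ^ γ * q := by
          gcongr
          have : (5 / 6 : ℝ) ^ k * (6 / 5) ^ k = 1 := by rw [← mul_pow]; norm_num
          have : (0 : ℝ) < (5 / 6) ^ k := by positivity
          nlinarith
      _ ≤ doublingConst (finrank ℝ E) ^ k * q := by
          rw [← pow_mul, mul_comm k, pow_mul]
          gcongr
      _ ≤ V X := hgrow X (closedBall_subset_closedBall (by linarith) hX)
  · linarith [mem_closedBall.1 hP1]

variable {M : ℝ}

lemma exists_const_le_of_ball (E : Type*) [NormedAddCommGroup E] [InnerProductSpace ℝ E]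
    [FiniteDimensional ℝ E] (hσ0 : 0 < σ) (hσ1 : σ < 1) {h : ℝ} (hh : 0 < h) (hh1 : h < 1 / 12) :
    ∃ c > 0, ∀ V : E × ℝ → ℝ, IsNonnegSolutionOn σ V (closedBall 0 1 ×ˢ Icc 0 1) →
      ∀ P ∈ closedBall (0 : E) (3 / 4) ×ˢ Icc (1 / 12 : ℝ) (17 / 20), ∀ q ≥ 0,
        (∀ X ∈ closedBall P (1 / 48), q ≤ V X) →
        ∀ X ∈ closedBall (0 : E) (3 / 4) ×ˢ Icc h (17 / 20), c * q ≤ V X := by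
  obtain ⟨N, hN⟩ := exists_nat_ge (3 / 2 / (h / 4))
  rw [div_le_iff₀ (by positivity)] at hN
  refine ⟨doublingConst (finrank ℝ E) ^ N, pow_pos (doublingConst_pos _) N,
    fun V hV P hP q hq hball X hX => ?_⟩
  have hdist : dist P X ≤ 3 / 2 := by
    rw [Prod.dist_eq]
    refine max_le ?_ ?_
    · linarith [dist_triangle_right P.1 X.1 0, mem_closedBall.1 hP.1, mem_closedBall.1 hX.1]
    · linarith [Real.dist_le_of_mem_Icc (Icc_subset_Icc_left hh1.le hP.2) hX.2]
  refine interior_chain ((convex_closedBall _ _).prod (convex_Icc _ _))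
    (fun Y hY => hV.mono (closedBall_subset_cylinder ?_ ?_ ?_)) (fun Y hY => ?_) hσ0 hσ1
    (s := h / 4) (by positivity) hX N hq (P := P) ⟨hP.1, Icc_subset_Icc_left hh1.le hP.2⟩
    (hdist.trans hN) (fun Y hY => hball Y (closedBall_subset_closedBall (by linarith) hY)) X
    (mem_closedBall_self (by positivity))
  all_goals linarith [mem_closedBall.1 hY.1, hY.2.1, hY.2.2]

lemma exists_lower_bound (E : Type*) [NormedAddCommGroup E] [InnerProductSpace ℝ E]
    [FiniteDimensional ℝ E] (hσ0 : 0 < σ) (hσ1 : σ < 1) (hM : 0 < M) {γ : ℕ}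
    (hγ : (5 / 6 : ℝ) ^ γ ≤ doublingConst (finrank ℝ E)) :
    ∃ c > 0, ∀ V : E × ℝ → ℝ, IsRobinSolution σ M V 0 1 1 → ∀ s q : ℝ, 0 < s → s ≤ 1 / 48 →
      ∀ P ∈ closedBall (0 : E) (3 / 4) ×ˢ Icc (4 * s) (3 / 4), 0 ≤ q →
        (∀ X ∈ closedBall P s, q ≤ V X) →
        ∀ X ∈ closedBall (0 : E) (1 / 2) ×ˢ Icc 0 (1 / 2), c * (s ^ γ * q) ≤ V X := by
  obtain ⟨h, hh0, hh1, hh⟩ := exists_pos_lt_of_tendsto_zero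
    (f := fun h => (finrank ℝ E + 1) / (2 - 2 * σ) * h ^ (2 : ℝ) + M / (8 * σ) * h ^ (2 * σ))
    (by
      have hpow : Tendsto (fun h : ℝ => h ^ (2 * σ)) (𝓝[>] 0) (𝓝 0) :=
        tendsto_rpow_nhdsGT_zero (by positivity)
      simpa using ((tendsto_rpow_nhdsGT_zero two_pos).const_mul
        (((finrank ℝ E : ℝ) + 1) / (2 - 2 * σ))).add (hpow.const_mul (M / (8 * σ))))
    (show (0 : ℝ) < 1 / 64 by norm_num) (show (0 : ℝ) < 1 / 12 by norm_num)
  rw [Real.rpow_two] at hh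
  have hσ2 : 0 < 2 - 2 * σ := by linarith
  have hdrift : 0 ≤ (finrank ℝ E + 1) / (2 - 2 * σ) * h ^ 2 := by positivity
  have hflux : 0 ≤ M / (8 * σ) * h ^ (2 * σ) := by positivity
  obtain ⟨c, hc, hchain⟩ := exists_const_le_of_ball E hσ0 hσ1 hh0 hh1
  refine ⟨c / 4, by positivity, fun V hV s q hs hs1 P hP hq hball X hX => ?_⟩
  obtain ⟨P', hP', hball'⟩ := hV.exists_ball_of_ball hσ0 hσ1 hγ hs hs1 hP hq hball
  have hq' : 0 ≤ c * (s ^ γ * q) := by positivity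
  have habove := hchain V hV.toIsNonnegSolutionOn P' hP' _ (by positivity) hball'
  have hX1 := mem_closedBall.1 hX.1
  have hsub : closedBall X.1 (1 / 4) ⊆ closedBall 0 (3 / 4) :=
    closedBall_subset_closedBall' (by linarith)
  rcases le_total h X.2 with hu | hu
  · linarith [habove X ⟨hsub (mem_closedBall_self (by norm_num)), hu, by linarith [hX.2.2]⟩]
  · linarith [(hV.mono (by linarith) (by linarith)).spread_down (y := X.1) (ρ := 1 / 4) hσ0 hσ1 hM
      (by norm_num) (by linarith) (by linarith) hq'
      (fun x hx => habove (x, h) ⟨hsub hx, le_rfl, by linarith⟩) ⟨hX.2.1, hu⟩]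

end Chains

section PointPicking

variable {F : Type*} [NormedAddCommGroup F] {K : Set F} {f : F → ℝ} {R : ℝ}

lemma exists_weighted_max_doubling (hK : IsCompact K) (hKR : K ⊆ closedBall 0 R)
    (hf : ContinuousOn f K) (hf0 : ∀ x ∈ K, 0 ≤ f x) {γ : ℕ} (hγ : γ ≠ 0) {x₀ : F} (hx₀ : x₀ ∈ K)
    (hx₀R : ‖x₀‖ < R) (hfx₀ : 0 < f x₀) :
    ∃ p ∈ K, ‖p‖ < R ∧ 0 < f p ∧ (R - ‖x₀‖) ^ γ * f x₀ ≤ (R - ‖p‖) ^ γ * f p ∧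
      ∀ x ∈ K, ‖x‖ ≤ (‖p‖ + R) / 2 → f x ≤ 2 ^ γ * f p := by
  obtain ⟨p, hp, hmax⟩ := hK.exists_isMaxOn (f := fun x => (R - ‖x‖) ^ γ * f x) ⟨x₀, hx₀⟩
    (by fun_prop)
  have hpos : 0 < (R - ‖p‖) ^ γ * f p :=
    (mul_pos (pow_pos (sub_pos.2 hx₀R) γ) hfx₀).trans_le (hmax hx₀)
  have hfp : 0 < f p := (hf0 p hp).lt_of_ne' (right_ne_zero_of_mul hpos.ne')
  have hpR : ‖p‖ < R := (mem_closedBall_zero_iff.1 (hKR hp)).lt_of_ne fun h => hpos.ne' (by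
    rw [h, sub_self, zero_pow hγ, zero_mul])
  refine ⟨p, hp, hpR, hfp, hmax hx₀, fun x hx hxp => ?_⟩
  have hd : 0 < (R - ‖p‖) / 2 := by linarith
  refine le_of_mul_le_mul_left ?_ (pow_pos hd γ)
  calc ((R - ‖p‖) / 2) ^ γ * f x ≤ (R - ‖x‖) ^ γ * f x := by
        have := hf0 x hx
        gcongr
        linarith
    _ ≤ (R - ‖p‖) ^ γ * f p := hmax hx
    _ = ((R - ‖p‖) / 2) ^ γ * (2 ^ γ * f p) := by
        rw [← mul_assoc, ← mul_pow, div_mul_cancel₀ _ two_ne_zero]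

end PointPicking

section Cylinders

variable {E : Type*} [NormedAddCommGroup E] {p : E} {T r R : ℝ}

lemma cylinder_subset_cylinder (h : ‖(p, T)‖ + r ≤ R) :
    closedBall p r ×ˢ Icc 0 (T + r) ⊆ closedBall (0 : E) R ×ˢ Icc 0 R := by
  have hp := norm_fst_le (p, T)
  have hT := (le_abs_self T).trans (norm_snd_le (p, T))
  refine prod_mono (closedBall_subset_closedBall' ?_) (Icc_subset_Icc_right (by linarith))
  rw [dist_zero_right]
  exact (add_comm r ‖p‖).trans_le (by linarith)

lemma norm_le_of_mem_cylinder {Z : E × ℝ} (hZ : Z ∈ closedBall (0 : E) R ×ˢ Icc 0 R) : ‖Z‖ ≤ R :=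
  norm_prod_le_iff.2 ⟨mem_closedBall_zero_iff.1 hZ.1,
    abs_le.2 ⟨by linarith [hZ.2.1, hZ.2.2], hZ.2.2⟩⟩

lemma cylinder_mono (h : r ≤ R) :
    closedBall (0 : E) r ×ˢ Icc 0 r ⊆ closedBall (0 : E) R ×ˢ Icc 0 R :=
  prod_mono (closedBall_subset_closedBall h) (Icc_subset_Icc_right h)

end Cylinders

section HarnackInequality

open Module (finrank)

variable {σ M : ℝ}

lemma exists_oscBound_le (d : ℕ) (hσ0 : 0 < σ) (hM : 0 < M) {ε : ℝ} (hε : 0 < ε) :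
    ∃ δ > 0, ∃ κ, 0 < κ ∧ κ < 1 ∧ ∀ r, 0 < r → r ≤ δ → oscBound d σ M r (κ * r) ≤ ε := by
  obtain ⟨δ, hδ0, -, hδ⟩ := exists_pos_lt_of_tendsto_zero (f := fun r => 3 * M / σ * r ^ σ)
    (by simpa using (tendsto_rpow_nhdsGT_zero hσ0).const_mul (3 * M / σ)) (half_pos hε) one_pos
  have hlim : Tendsto (fun κ : ℝ => sqrtCoeff d * √κ + κ ^ 2) (𝓝[>] 0) (𝓝 0) := by
    refine tendsto_nhdsWithin_of_tendsto_nhds ?_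
    have hcont : Continuous fun κ : ℝ => sqrtCoeff d * √κ + κ ^ 2 := by fun_prop
    simpa using hcont.tendsto 0
  obtain ⟨κ, hκ0, hκ1, hκ⟩ := exists_pos_lt_of_tendsto_zero hlim (half_pos hε) one_pos
  refine ⟨δ, hδ0, κ, hκ0, hκ1, fun r hr hrδ => ?_⟩
  have hrpow : 3 * M / σ * r ^ σ ≤ 3 * M / σ * δ ^ σ := by gcongr
  rw [oscBound, mul_div_cancel_right₀ κ hr.ne']
  linarith

variable (E : Type*) [NormedAddCommGroup E] [InnerProductSpace ℝ E] [FiniteDimensional ℝ E]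

lemma exists_disc_lower_bound (hσ0 : 0 < σ) (hσ1 : σ < 1) (hM : 0 < M) {B : ℝ} (hB : 0 < B) :
    ∃ κ, 0 < κ ∧ κ < 1 / 4 ∧ ∀ (V : E × ℝ → ℝ) (p : E) (T d : ℝ), 0 < d → 0 ≤ T → T + d ≤ 1 →
      IsRobinSolution σ M V p (d / 2) (T + d / 2) → 0 < V (p, T) →
      (∀ X ∈ closedBall p (d / 2) ×ˢ Icc 0 (T + d / 2), V X ≤ B * V (p, T)) →
      ∀ x ∈ closedBall p (κ * d), 3 / 4 * V (p, T) ≤ V (x, T) := by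
  obtain ⟨δ, hδ, κ, hκ0, hκ1, hosc⟩ :=
    exists_oscBound_le (finrank ℝ E) hσ0 hM (ε := 1 / (4 * B)) (by positivity)
  set η := min δ (1 / 4)
  have hη0 : 0 < η := lt_min hδ (by norm_num)
  have hη : η ≤ 1 / 4 := min_le_right _ _
  refine ⟨κ * η, by positivity, by nlinarith, fun V p T d hd hT hTd hV hVp hle x hx => ?_⟩
  have hr : 0 < η * d := by positivity
  have hrd : 2 * (η * d) ≤ d / 2 := by nlinarith
  have hrδ : η * d ≤ δ := (mul_le_of_le_one_right hη0.le (by linarith)).trans (min_le_left _ _)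
  have hVr := (hV.mono (p' := p) (by rwa [dist_self, add_zero]) (by linarith)).horizontal_osc
    (S := κ * (η * d)) hσ0 hσ1 hM hr (mul_le_of_le_one_left hr.le hκ1.le) hT (by linarith)
    (mul_pos hB hVp) (fun X hX => hle X (prod_mono (closedBall_subset_closedBall hrd)
      (Icc_subset_Icc_right (by linarith)) hX)) (by rwa [← mul_assoc])
  have hsmall : B * V (p, T) * oscBound (finrank ℝ E) σ M (η * d) (κ * (η * d)) ≤
      1 / 4 * V (p, T) := by
    calc _ ≤ B * V (p, T) * (1 / (4 * B)) := by gcongr; exact hosc _ hr hrδ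
      _ = 1 / 4 * V (p, T) := by field_simp
  linarith

variable {E} in
lemma IsNonnegSolutionOn.ball_above_disc {A κ S T q : ℝ} {p : E} {V : E × ℝ → ℝ}
    (hV : IsNonnegSolutionOn σ V (closedBall p S ×ˢ Icc T (T + S))) (hσ0 : 0 < σ) (hσ1 : σ < 1)
    (hS : 0 < S) (hT : 0 ≤ T) (hA1 : 1 ≤ A) (hA : 2 * finrank ℝ E < A * (σ * min σ (1 - σ)))
    (hκ0 : 0 < κ) (hκ1 : κ < 1 / 12) (hκ : A * (5 * κ) ^ σ + κ ^ 2 < 1 / 3) (hq : 0 ≤ q)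
    (hdisc : ∀ x ∈ closedBall p S, q ≤ V (x, T)) :
    ∀ X ∈ closedBall (p, T + 4 * (κ * S)) (κ * S), 2 / 3 * q ≤ V X := by
  intro X hX
  have hκS : κ * S < S / 12 := by nlinarith
  have hXcyl : X ∈ closedBall p (κ * S) ×ˢ Icc T (T + 5 * κ * S) :=
    closedBall_subset_cylinder (by simp) (by simp only; nlinarith) (by simp only; linarith) hX
  have hspread := hV.spread_up hσ0 hσ1 hS hT hA1 hA hq hdisc X
    (prod_mono (closedBall_subset_closedBall (by linarith)) (Icc_subset_Icc_right (by linarith))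
      hXcyl)
  have hheight : ((X.2 - T) / S) ^ σ ≤ (5 * κ) ^ σ := by
    have hX0 : 0 ≤ X.2 - T := sub_nonneg.2 hXcyl.2.1
    gcongr
    rw [div_le_iff₀ hS]
    linarith [hXcyl.2.2]
  have hradius : (S ^ 2)⁻¹ * ‖X.1 - p‖ ^ 2 ≤ κ ^ 2 := by
    rw [inv_mul_le_iff₀ (by positivity), ← mul_pow, mul_comm S]
    gcongr
    exact mem_closedBall_iff_norm.1 hXcyl.1
  have hbarrier : 2 / 3 ≤ 1 - A * ((X.2 - T) / S) ^ σ - (S ^ 2)⁻¹ * ‖X.1 - p‖ ^ 2 := by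
    nlinarith
  nlinarith

lemma exists_ball_above_disc (hσ0 : 0 < σ) (hσ1 : σ < 1) :
    ∃ κ, 0 < κ ∧ κ < 1 / 12 ∧ ∀ (V : E × ℝ → ℝ) (p : E) (T S q : ℝ), 0 < S → 0 ≤ T → 0 ≤ q →
      IsNonnegSolutionOn σ V (closedBall p S ×ˢ Icc T (T + S)) →
      (∀ x ∈ closedBall p S, q ≤ V (x, T)) →
      ∀ X ∈ closedBall (p, T + 4 * (κ * S)) (κ * S), 2 / 3 * q ≤ V X := by
  set A := max 1 ((2 * finrank ℝ E + 1) / (σ * min σ (1 - σ)))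
  have hA1 : 1 ≤ A := le_max_left _ _
  have hA : 2 * finrank ℝ E < A * (σ * min σ (1 - σ)) := by
    have hden : 0 < σ * min σ (1 - σ) := mul_pos hσ0 (lt_min hσ0 (by linarith))
    have := (div_le_iff₀ hden).1 (le_max_right 1 ((2 * finrank ℝ E + 1) / (σ * min σ (1 - σ))))
    linarith
  have hlim : Tendsto (fun κ : ℝ => A * (5 * κ) ^ σ + κ ^ 2) (𝓝[>] 0) (𝓝 0) := by
    refine tendsto_nhdsWithin_of_tendsto_nhds ?_
    have hcont : Continuous fun κ : ℝ => A * (5 * κ) ^ σ + κ ^ 2 :=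
      (((continuous_const.mul continuous_id).rpow_const fun _ => .inr hσ0.le).const_mul A).add
        (continuous_pow 2)
    simpa [Real.zero_rpow hσ0.ne'] using hcont.tendsto 0
  obtain ⟨κ, hκ0, hκ1, hκ⟩ := exists_pos_lt_of_tendsto_zero hlim
    (show (0 : ℝ) < 1 / 3 by norm_num) (show (0 : ℝ) < 1 / 12 by norm_num)
  exact ⟨κ, hκ0, hκ1, fun V p T S q hS hT hq hV hdisc =>
    hV.ball_above_disc hσ0 hσ1 hS hT hA1 hA hκ0 hκ1 hκ hq hdisc⟩

lemma exists_seed (hσ0 : 0 < σ) (hσ1 : σ < 1) (hM : 0 < M) {B : ℝ} (hB : 0 < B) :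
    ∃ θ, 0 < θ ∧ θ ≤ 1 / 48 ∧ ∀ (V : E × ℝ → ℝ) (p : E) (T d : ℝ), 0 < d → 0 ≤ T → T + d ≤ 1 →
      IsRobinSolution σ M V p (d / 2) (T + d / 2) → 0 < V (p, T) →
      (∀ X ∈ closedBall p (d / 2) ×ˢ Icc 0 (T + d / 2), V X ≤ B * V (p, T)) →
      ∀ X ∈ closedBall (p, T + 4 * (θ * d)) (θ * d), V (p, T) / 2 ≤ V X := by
  obtain ⟨κ₁, hκ₁0, hκ₁, hdisc⟩ := exists_disc_lower_bound E hσ0 hσ1 hM hB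
  obtain ⟨κ₂, hκ₂0, hκ₂, hball⟩ := exists_ball_above_disc E hσ0 hσ1
  refine ⟨κ₂ * κ₁, by positivity, by nlinarith, fun V p T d hd hT hTd hV hVp hle X hX => ?_⟩
  have hκd : κ₁ * d ≤ d / 2 := by nlinarith
  have hsub : closedBall p (κ₁ * d) ×ˢ Icc T (T + κ₁ * d) ⊆
      closedBall p (d / 2) ×ˢ Icc 0 (T + d / 2) :=
    prod_mono (closedBall_subset_closedBall hκd) (Icc_subset_Icc hT (by linarith))
  rw [mul_assoc] at hX
  linarith [hball V p T (κ₁ * d) (3 / 4 * V (p, T)) (by positivity) hT (by positivity)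
    (hV.toIsNonnegSolutionOn.mono hsub) (hdisc V p T d hd hT hTd hV hVp hle) X hX]

lemma exists_weighted_seed (hσ0 : 0 < σ) (hσ1 : σ < 1) (hM : 0 < M) {γ : ℕ} (hγ : γ ≠ 0) :
    ∃ c > 0, ∀ V : E × ℝ → ℝ, IsRobinSolution σ M V 0 1 1 →
      ∀ X ∈ closedBall (0 : E) (1 / 2) ×ˢ Icc 0 (1 / 2), 0 < V X →
        ∃ s q, 0 < s ∧ s ≤ 1 / 48 ∧ 0 ≤ q ∧ c * V X ≤ s ^ γ * q ∧
          ∃ P ∈ closedBall (0 : E) (3 / 4) ×ˢ Icc (4 * s) (3 / 4),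
            ∀ Z ∈ closedBall P s, q ≤ V Z := by
  obtain ⟨θ, hθ0, hθ, hseed⟩ := exists_seed E hσ0 hσ1 hM (B := 2 ^ γ) (by positivity)
  refine ⟨(θ * (1 / 4)) ^ γ / 2, by positivity, fun V hV X hX hVX => ?_⟩
  have hsub := cylinder_mono (E := E) (show (3 / 4 : ℝ) ≤ 1 by norm_num)
  have hX' := norm_le_of_mem_cylinder hX
  obtain ⟨⟨p, T⟩, hP, hPR, hVP, hXP, hdouble⟩ := exists_weighted_max_doubling
    (isCompact_cylinder 0 (3 / 4) 0 (3 / 4))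
    (fun Z hZ => mem_closedBall_zero_iff.2 (norm_le_of_mem_cylinder hZ))
    (hV.continuousOn.mono hsub) (fun Z hZ => hV.nonneg Z (hsub hZ)) hγ
    (cylinder_mono (show (1 / 2 : ℝ) ≤ 3 / 4 by norm_num) hX) (by linarith) hVX
  set d := 3 / 4 - ‖(p, T)‖ with hd
  have hd0 : 0 < d := sub_pos.2 hPR
  have hT : 0 ≤ T := hP.2.1
  have hp : ‖p‖ ≤ ‖(p, T)‖ := norm_fst_le (p, T)
  have hTle : T ≤ ‖(p, T)‖ := (le_abs_self T).trans (norm_snd_le (p, T))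
  refine ⟨θ * d, V (p, T) / 2, by positivity, by nlinarith [norm_nonneg (p, T)], by positivity,
    ?_, (p, T + 4 * (θ * d)), ⟨hP.1, by simpa using hT, by simp only; nlinarith⟩,
    hseed V p T d hd0 hT (by linarith) (hV.mono ?_ (by linarith)) hVP fun Z hZ => hdouble Z ?_ ?_⟩
  · calc (θ * (1 / 4)) ^ γ / 2 * V X = θ ^ γ / 2 * ((1 / 4) ^ γ * V X) := by rw [mul_pow]; ring
      _ ≤ θ ^ γ / 2 * ((3 / 4 - ‖X‖) ^ γ * V X) := by gcongr; linarith
      _ ≤ θ ^ γ / 2 * (d ^ γ * V (p, T)) := by gcongr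
      _ = (θ * d) ^ γ * (V (p, T) / 2) := by rw [mul_pow]; ring
  · rw [dist_zero_right]
    linarith [norm_nonneg (p, T)]
  · exact cylinder_subset_cylinder (by linarith) hZ
  · exact norm_le_of_mem_cylinder (cylinder_subset_cylinder (by linarith) hZ)

theorem IsRobinSolution.exists_harnack (hσ0 : 0 < σ) (hσ1 : σ < 1) (hM : 0 < M) :
    ∃ C > 0, ∀ V : E × ℝ → ℝ, IsRobinSolution σ M V 0 1 1 →
      ∀ X ∈ closedBall (0 : E) (1 / 2) ×ˢ Icc 0 (1 / 2),
        ∀ Y ∈ closedBall (0 : E) (1 / 2) ×ˢ Icc 0 (1 / 2), V X ≤ C * V Y := by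
  obtain ⟨γ, hγ⟩ := exists_pow_lt_of_lt_one (doublingConst_pos (finrank ℝ E))
    (show (5 / 6 : ℝ) < 1 by norm_num)
  replace hγ : (5 / 6 : ℝ) ^ (γ + 1) ≤ doublingConst (finrank ℝ E) :=
    (pow_le_pow_of_le_one (by norm_num) (by norm_num) γ.le_succ).trans hγ.le
  obtain ⟨c, hc, hlower⟩ := exists_lower_bound E hσ0 hσ1 hM hγ
  obtain ⟨c', hc', hseed⟩ := exists_weighted_seed E hσ0 hσ1 hM γ.succ_ne_zero
  refine ⟨(c * c')⁻¹, by positivity, fun V hV X hX Y hY => ?_⟩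
  have hsub := cylinder_mono (E := E) (show (1 / 2 : ℝ) ≤ 1 by norm_num)
  rw [← div_eq_inv_mul, le_div_iff₀' (by positivity)]
  rcases (hV.nonneg X (hsub hX)).eq_or_lt with hVX | hVX
  · simpa [← hVX] using hV.nonneg Y (hsub hY)
  obtain ⟨s, q, hs, hs1, hq, hsq, P, hP, hball⟩ := hseed V hV X hX hVX
  calc c * c' * V X = c * (c' * V X) := mul_assoc _ _ _
    _ ≤ c * (s ^ (γ + 1) * q) := by gcongr
    _ ≤ V Y := hlower V hV s q hs hs1 P hP hq hball Y hY

end HarnackInequality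

section Reduction

variable {E : Type*} [NormedAddCommGroup E] [NormedSpace ℝ E] {σ : ℝ}

lemma hasSecondDerivAt_height {U : E × ℝ → ℝ} {X : E × ℝ} (hU : ContDiffAt ℝ 2 U X) :
    HasSecondDerivAt (fun t => U (X.1, t)) X.2 (fderiv ℝ U X (0, 1))
      (iteratedFDeriv ℝ 2 U X ![(0, 1), (0, 1)]) := by
  have hline (t : ℝ) : (X.1, (0 : ℝ)) + t • ((0 : E), (1 : ℝ)) = (X.1, t) := by simp
  have := hasSecondDerivAt_line (P := (X.1, (0 : ℝ))) (v := ((0 : E), (1 : ℝ))) (s := X.2)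
    (by rwa [hline])
  simpa only [hline] using this

lemma hasFluxAt_of_tendsto {U : E × ℝ → ℝ} {x : E} {ℓ : ℝ}
    (hU : ∀ᶠ t in 𝓝[>] (0 : ℝ), ContDiffAt ℝ 2 U (x, t))
    (h : Tendsto (fun t : ℝ => t ^ (1 - 2 * σ) * fderiv ℝ U (x, t) (0, 1)) (𝓝[>] 0) (𝓝 ℓ)) :
    HasFluxAt σ U x ℓ :=
  ⟨_, hU.mono fun _ ht => (hasSecondDerivAt_height ht).hasDerivAt, h⟩

variable {n : ℕ} {U : Pt n → ℝ}

lemma lap_eq_laplacian_slice_add {X : Pt n} (hU : ContDiffAt ℝ 2 U X) :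
    lap n U X = Δ (fun x => U (x, X.2)) X.1 + iteratedFDeriv ℝ 2 U X ![(0, 1), (0, 1)] := by
  have hslice : ContDiffAt ℝ 2 (fun x => U (x, X.2)) X.1 :=
    hU.comp X.1 (contDiffAt_id.prodMk contDiffAt_const)
  have hbasis (i : Fin n) := hasSecondDerivAt_line (f := U) (P := X) (s := 0)
    (v := (EuclideanSpace.single i (1 : ℝ), (0 : ℝ))) (by simpa using hU)
  rw [lap, laplacian_eq_sum_of_hasSecondDerivAt (EuclideanSpace.basisFun (Fin n) ℝ) hslice fun i =>
    by simpa [Prod.add_def] using hbasis i]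

lemma hasExtOpAt_zero_of_equation {X : Pt n} (hU : ContDiffAt ℝ 2 U X) (ht : 0 < X.2)
    (heq : X.2 ^ (1 - 2 * σ) * lap n U X
      + (1 - 2 * σ) * X.2 ^ (-(2 * σ)) * fderiv ℝ U X (0, 1) = 0) : HasExtOpAt σ U X 0 := by
  refine ⟨hU.comp X.1 (contDiffAt_id.prodMk contDiffAt_const), _, _, hasSecondDerivAt_height hU, ?_⟩
  rw [← lap_eq_laplacian_slice_add hU]
  have hpow : X.2 ^ (-(2 * σ)) = X.2 ^ (1 - 2 * σ) / X.2 := by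
    rw [show -(2 * σ) = (1 - 2 * σ) - 1 by ring, Real.rpow_sub_one ht.ne']
  rw [hpow] at heq
  refine ((mul_eq_zero.1 (?_ : X.2 ^ (1 - 2 * σ) * _ = 0)).resolve_left
    (Real.rpow_pos_of_pos ht _).ne').symm
  rw [← heq]
  ring

lemma isOpen_Q (n : ℕ) (R : ℝ) : IsOpen (Q n R) := isOpen_ball.prod isOpen_Ioo

lemma closure_Q (n : ℕ) {R : ℝ} (hR : 0 < R) : closure (Q n R) = closedBall 0 R ×ˢ Icc 0 R := by
  rw [Q, closure_prod_eq, closure_ball _ hR.ne', closure_Ioo hR.ne]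

lemma interior_closure_Q (n : ℕ) {R : ℝ} (hR : 0 < R) : interior (closure (Q n R)) = Q n R := by
  rw [closure_Q n hR, interior_prod_eq, interior_closedBall _ hR.ne', interior_Icc, Q]

/-- Adding the bound `Mb` of the inhomogeneity makes the boundary condition homogeneous. -/
lemma isRobinSolution_add_const {a b : EuclideanSpace ℝ (Fin n) → ℝ} {Ma Mb : ℝ}
    (hU0 : ∀ X ∈ closure (Q n 1), 0 ≤ U X) (hU2 : ContDiffOn ℝ 2 U (Q n 1))
    (hUc : ContinuousOn U (closure (Q n 1)))
    (ha : ∀ x ∈ ball (0 : EuclideanSpace ℝ (Fin n)) 1, |a x| ≤ Ma)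
    (hb : ∀ x ∈ ball (0 : EuclideanSpace ℝ (Fin n)) 1, |b x| ≤ Mb)
    (heq : ∀ X ∈ Q n 1, X.2 ^ (1 - 2 * σ) * lap n U X
      + (1 - 2 * σ) * X.2 ^ (-(2 * σ)) * fderiv ℝ U X (0, 1) = 0)
    (hflux : ∀ x ∈ ball (0 : EuclideanSpace ℝ (Fin n)) 1,
      Tendsto (fun t : ℝ => t ^ (1 - 2 * σ) * fderiv ℝ U (x, t) (0, 1))
        (𝓝[>] 0) (𝓝 (-(a x * U (x, 0) + b x)))) :
    IsRobinSolution σ (max Ma 1) (fun X => U X + Mb) 0 1 1 := by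
  have hMb : 0 ≤ Mb := (abs_nonneg _).trans (hb 0 (mem_ball_self one_pos))
  refine ⟨⟨fun X hX => ?_, ?_, fun X hX => ?_⟩, fun x hx => ⟨_, ?_,
    (hasFluxAt_of_tendsto ?_ (hflux x hx)).add (.of_horizontal fun _ => Mb)⟩⟩
  · rw [← closure_Q n one_pos] at hX
    exact add_nonneg (hU0 X hX) hMb
  · rw [← closure_Q n one_pos]
    exact hUc.add continuousOn_const
  · rw [← closure_Q n one_pos, interior_closure_Q n one_pos] at hX
    have hUX := hasExtOpAt_zero_of_equation (hU2.contDiffAt ((isOpen_Q n 1).mem_nhds hX)) hX.2.1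
      (heq X hX)
    exact (hUX.add (.const Mb)).congr_val (add_zero 0)
  · have hUx : 0 ≤ U (x, 0) := hU0 (x, 0) (by
      rw [closure_Q n one_pos]
      exact ⟨ball_subset_closedBall hx, by simp⟩)
    rw [add_zero, abs_neg]
    calc |a x * U (x, 0) + b x| ≤ |a x| * U (x, 0) + |b x| := by
          simpa only [abs_mul, abs_of_nonneg hUx] using abs_add_le (a x * U (x, 0)) (b x)
      _ ≤ max Ma 1 * U (x, 0) + max Ma 1 * Mb := by
          gcongr
          · exact (ha x hx).trans (le_max_left _ _)
          · exact (hb x hx).trans (le_mul_of_one_le_left hMb (le_max_right _ _))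
      _ = max Ma 1 * (U (x, 0) + Mb) := by ring
  · filter_upwards [Ioo_mem_nhdsGT (zero_lt_one' ℝ)] with t ht
    exact hU2.contDiffAt ((isOpen_Q n 1).mem_nhds ⟨hx, ht⟩)

theorem harnack_extension_general (n : ℕ) (σ : ℝ) (hσ0 : 0 < σ) (hσ1 : σ < 1) (Ma : ℝ) :
    ∃ C > 0, ∀ (U : Pt n → ℝ) (a b : EuclideanSpace ℝ (Fin n) → ℝ) (Mb : ℝ),
      (∀ X ∈ closure (Q n 1), 0 ≤ U X) →
      ContDiffOn ℝ 2 U (Q n 1) →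
      ContinuousOn U (closure (Q n 1)) →
      (∀ x ∈ ball (0 : EuclideanSpace ℝ (Fin n)) 1, |a x| ≤ Ma) →
      (∀ x ∈ ball (0 : EuclideanSpace ℝ (Fin n)) 1, |b x| ≤ Mb) →
      (∀ X ∈ Q n 1,
        X.2 ^ (1 - 2 * σ) * lap n U X
          + (1 - 2 * σ) * X.2 ^ (-(2 * σ)) * fderiv ℝ U X (0, 1) = 0) →
      (∀ x ∈ ball (0 : EuclideanSpace ℝ (Fin n)) 1,
        Tendsto (fun t : ℝ => t ^ (1 - 2 * σ) * fderiv ℝ U (x, t) (0, 1))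
          (𝓝[>] 0) (𝓝 (-(a x * U (x, 0) + b x)))) →
      ∀ X ∈ closure (Q n (1 / 2)), ∀ Y ∈ closure (Q n (1 / 2)), U X ≤ C * (U Y + Mb) := by
  obtain ⟨C, hC, hmain⟩ := IsRobinSolution.exists_harnack (EuclideanSpace ℝ (Fin n)) hσ0 hσ1
    (M := max Ma 1) (by positivity)
  refine ⟨C, hC, fun U a b Mb hU0 hU2 hUc ha hb heq hflux X hX Y hY => ?_⟩
  have hMb : 0 ≤ Mb := (abs_nonneg _).trans (hb 0 (mem_ball_self one_pos))
  rw [closure_Q n one_half_pos] at hX hY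
  linarith [hmain _ (isRobinSolution_add_const hU0 hU2 hUc ha hb heq hflux) X hX Y hY]

end Reduction

end Harnack

/-- **Harnack inequality for the degenerate extension problem** (Theorem 1.2).
If `U ≥ 0` is a `C²(Q₁) ∩ C¹(Q̄₁)` solution of `div(t^{1−2σ}∇U) = 0` in `Q₁`
with weighted Dirichlet energy finite, whose weighted normal derivative
`−lim_{t→0⁺} t^{1−2σ} ∂ₜU(x,t)` equals `a(x)U(x,0) + b(x)` on `∂'Q₁`, then
`sup_{Q̄_{1/2}} U ≤ C (inf_{Q̄_{1/2}} U + ‖b‖_{L^∞(B₁)})` with `C = C(n, σ, ‖a‖_{L^∞(B₁)})`. -/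
theorem harnack_extension
    (n : ℕ) (hn : 2 ≤ n) (σ : ℝ) (hσ0 : 0 < σ) (hσ1 : σ < 1) (Ma : ℝ) :
    ∃ C > 0, ∀ (U : Pt n → ℝ) (a b : EuclideanSpace ℝ (Fin n) → ℝ) (Mb : ℝ),
      (∀ X ∈ closure (Q n 1), 0 ≤ U X) →
      ContDiffOn ℝ 2 U (Q n 1) →
      ContDiffOn ℝ 1 U (closure (Q n 1)) →
      IntegrableOn (fun X : Pt n =>
        X.2 ^ (1 - 2 * σ) * ((U X) ^ 2 + ‖fderiv ℝ U X‖ ^ 2)) (Q n 1) →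
      Measurable a → Measurable b →
      (∀ x ∈ ball (0 : EuclideanSpace ℝ (Fin n)) 1, |a x| ≤ Ma) →
      (∀ x ∈ ball (0 : EuclideanSpace ℝ (Fin n)) 1, |b x| ≤ Mb) →
      -- the equation `div(t^{1−2σ}∇U) = 0`, i.e. `t^{1−2σ}ΔU + (1−2σ)t^{−2σ}∂ₜU = 0`, in `Q₁`
      (∀ X ∈ Q n 1,
        X.2 ^ (1 - 2 * σ) * lap n U X
          + (1 - 2 * σ) * X.2 ^ (-(2 * σ)) * fderiv ℝ U X (0, 1) = 0) →
      -- the boundary condition `−lim_{t→0⁺} t^{1−2σ} ∂ₜU(x,t) = a(x)U(x,0) + b(x)` on `∂'Q₁`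
      (∀ x ∈ ball (0 : EuclideanSpace ℝ (Fin n)) 1,
        Filter.Tendsto (fun t : ℝ => t ^ (1 - 2 * σ) * fderiv ℝ U (x, t) (0, 1))
          (nhdsWithin 0 (Ioi 0)) (nhds (-(a x * U (x, 0) + b x)))) →
      ∀ X ∈ closure (Q n (1/2)), ∀ Y ∈ closure (Q n (1/2)),
        U X ≤ C * (U Y + Mb) := by
  obtain ⟨C, hC, h⟩ := harnack_extension_general n σ hσ0 hσ1 Ma
  exact ⟨C, hC, fun U a b Mb hU0 hU2 hU1 _ _ _ => h U a b Mb hU0 hU2 hU1.continuousOn⟩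
end
end
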